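/- arXiv:2008.10016 — 2 statements merged into one kernel-verified Lean document; each statement's English description precedes it below -/
import Mathlib

section
/- Let V, W ⊆ S^5 be equivalent polybox codes, and suppose there exists a simple polybox code V' ⊆ S^5 disjoint from V such that V ∪ V' is a cube tiling code. Then V and W are strongly equivalent. -/
/- Common framework: polybox codes over a finite alphabet `S` with a
complementation `c : S → S` (an involution without fixed points). -/

namespace PolyboxPaper

variable {S : Type} [Fintype S] [DecidableEq S] {d : ℕ}

/-- Two words are dichotomous: they differ by complementation at some position. -/
def Dich (c : S → S) (v w : Fin d → S) : Prop := ∃ i, v i = c (w i)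

instance (c : S → S) (v w : Fin d → S) : Decidable (Dich c v w) :=
  decidable_of_iff (∃ i, v i = c (w i)) Iff.rfl

/-- A polybox code: every two distinct words are dichotomous. -/
def IsCode (c : S → S) (V : Finset (Fin d → S)) : Prop :=
  ∀ v ∈ V, ∀ w ∈ V, v ≠ w → Dich c v w

/-- A cube tiling code: a polybox code with `2 ^ d` words. -/
def CubeTiling (c : S → S) (V : Finset (Fin d → S)) : Prop :=
  IsCode c V ∧ V.card = 2 ^ d

/-- `v` and `w` form a twin pair in the `i`-th direction. -/
def TwinPair (c : S → S) (v w : Fin d → S) (i : Fin d) : Prop :=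
  v i = c (w i) ∧ ∀ j, j ≠ i → v j = w j

/-- A code is twin pair free if no two of its words form a twin pair. -/
def TwinPairFree (c : S → S) (V : Finset (Fin d → S)) : Prop :=
  ∀ v ∈ V, ∀ w ∈ V, ∀ i, ¬ TwinPair c v w i

/-- A single glue-and-cut operation: a twin pair `v, w` of `V` in the `i`-th
direction is replaced by a twin pair `q, t` in the `i`-th direction agreeing
with `v` (and `w`) at all positions `j ≠ i`. -/
def GCStep (c : S → S) (V W : Finset (Fin d → S)) : Prop :=
  ∃ (v w q t : Fin d → S) (i : Fin d), v ∈ V ∧ w ∈ V ∧ TwinPair c v w i ∧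
    TwinPair c q t i ∧ (∀ j, j ≠ i → q j = v j) ∧ W = (V \ {v, w}) ∪ {q, t}

/-- `W` is obtained from `V` by gluing and cutting (finite, possibly empty,
sequence of single glue-and-cut operations); equivalently, `V` and `W` are
strongly equivalent. -/
def GC (c : S → S) (V W : Finset (Fin d → S)) : Prop :=
  Relation.ReflTransGen (GCStep c) V W

/-- Passing from `V` to `W` by gluing and cutting keeping `Q` fixed:
every intermediate code contains `Q`. -/
def GCFix (c : S → S) (Q V W : Finset (Fin d → S)) : Prop :=
  Relation.ReflTransGen (fun A B => GCStep c A B ∧ Q ⊆ B) V W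

/-- A realization: for each coordinate a map `f i : S → Set (X i)` taking
nonempty proper values and sending complementary letters to complementary sets. -/
def IsRealization (c : S → S) (X : Fin d → Type) (f : ∀ i, S → Set (X i)) : Prop :=
  ∀ i s, (f i s).Nonempty ∧ f i s ≠ Set.univ ∧ f i (c s) = (f i s)ᶜ

/-- The box associated to a word by a realization. -/
def box {X : Fin d → Type} (f : ∀ i, S → Set (X i)) (v : Fin d → S) :
    Set (∀ i, X i) :=
  {x | ∀ i, x i ∈ f i (v i)}

/-- The word `w` is covered by the code `V` (`w ⊑ V`). -/
def CoveredWord (c : S → S) (w : Fin d → S) (V : Finset (Fin d → S)) : Prop :=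
  ∀ (X : Fin d → Type) (f : ∀ i, S → Set (X i)), IsRealization c X f →
    box f w ⊆ ⋃ v ∈ V, box f v

/-- `V ⊑ W`: every word of `V` is covered by `W`. -/
def Covered (c : S → S) (V W : Finset (Fin d → S)) : Prop :=
  ∀ v ∈ V, CoveredWord c v W

/-- Equivalent codes: `V ⊑ W` and `W ⊑ V`. -/
def Equivalent (c : S → S) (V W : Finset (Fin d → S)) : Prop :=
  Covered c V W ∧ Covered c W V

/-- `V ⊑̇ W`: `V ⊑ W` and no word of `V` belongs to any code obtained from `W`
by gluing and cutting. -/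
def DotCovered (c : S → S) (V W : Finset (Fin d → S)) : Prop :=
  Covered c V W ∧ ∀ v ∈ V, ∀ W', GC c W W' → v ∉ W'

/-- The density `δ(V, W)`. -/
noncomputable def delta (c : S → S) (V W : Finset (Fin d → S)) : ℕ∞ :=
  W.inf fun w => ((V.filter fun v => ¬ Dich c v w).card : ℕ∞)

/-- `C` is a minimal cover of the word `w`. -/
def MinCoverWord (c : S → S) (C : Finset (Fin d → S)) (w : Fin d → S) : Prop :=
  IsCode c C ∧ CoveredWord c w C ∧ ∀ q ∈ C, ¬ Dich c q w

/-- `C` is a minimal cover of the code `P`. -/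
def MinCoverCode (c : S → S) (C P : Finset (Fin d → S)) : Prop :=
  IsCode c C ∧ Covered c P C ∧ ∀ q ∈ C, ∃ p ∈ P, ¬ Dich c q p

/-- A simple polybox code. -/
def SimpleCode (c : S → S) (V : Finset (Fin d → S)) : Prop :=
  ∀ i : Fin d, ∃ s : S, ∀ v ∈ V, v i = s ∨ v i = c s

/-- A simple cube tiling code `{s₁, s₁'} × ⋯ × {s_d, s_d'}`. -/
def SimpleCubeTiling (c : S → S) (U : Finset (Fin d → S)) : Prop :=
  ∃ s : Fin d → S, ∀ v : Fin d → S, v ∈ U ↔ ∀ i, v i = s i ∨ v i = c (s i)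

/-- Word whose first four coordinates are `x0 x1 x2 x3` and which agrees with
`r` elsewhere. -/
def specialWord (r : Fin d → S) (x0 x1 x2 x3 : S) : Fin d → S := fun i =>
  if (i : ℕ) = 0 then x0 else if (i : ℕ) = 1 then x1 else if (i : ℕ) = 2 then x2
  else if (i : ℕ) = 3 then x3 else r i

/-- The special pair of 12-word codes (Theorem 1 of the paper). -/
def SpecialPair (c : S → S) (V W : Finset (Fin d → S)) : Prop :=
  ∃ (a b : S) (r : Fin d → S), a ≠ b ∧ a ≠ c b ∧
    V = {specialWord r a (c a) b (c b), specialWord r a b (c b) a,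
         specialWord r a (c b) (c b) (c b), specialWord r (c a) a (c b) (c b),
         specialWord r (c a) (c a) a (c b), specialWord r (c a) b (c b) b,
         specialWord r b a b (c b), specialWord r b b b b,
         specialWord r b (c b) (c a) b, specialWord r (c b) a b (c a),
         specialWord r (c b) (c a) b b, specialWord r (c b) (c b) (c b) b} ∧
    W = {specialWord r (c a) (c a) (c a) b, specialWord r (c a) b a (c a),
         specialWord r b a (c a) a, specialWord r a (c a) (c a) a,
         specialWord r (c a) a (c a) (c a), specialWord r a b b (c a),
         specialWord r b b a a, specialWord r a (c b) (c a) (c a),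
         specialWord r (c b) a (c b) a, specialWord r (c b) (c a) a a,
         specialWord r (c b) (c b) a (c a), specialWord r b (c b) a (c b)}

/-- An isomorphism of `S^d`: a permutation of coordinates followed by
position bijections commuting with complementation. -/
def IsIso (c : S → S) (Φ : (Fin d → S) → Fin d → S) : Prop :=
  ∃ (σ : Equiv.Perm (Fin d)) (h : Fin d → S → S),
    (∀ i, Function.Bijective (h i)) ∧ (∀ i s, h i (c s) = c (h i s)) ∧
    ∀ v i, Φ v i = h i (v (σ i))

/-- The pair `(V, W)` is, up to isomorphism, the special pair. -/
def SpecialPairUpToIso (c : S → S) (V W : Finset (Fin d → S)) : Prop :=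
  ∃ Φ, IsIso c Φ ∧
    (SpecialPair c (V.image Φ) (W.image Φ) ∨ SpecialPair c (W.image Φ) (V.image Φ))

end PolyboxPaper

/-!
The union of `V` and `V'` is a tiling, and `V'` is contained in the frame of some word, the simple
tiling through that word. Hence `V`, and with it `W`, covers the same region as the rest `U` of the
frame, and it is enough to show that a code equivalent to a subset `U` of a frame is strongly
equivalent to `U`.

This is proved by induction on the set of directions of the frame. Among the codes strongly
equivalent to the given one take one with the fewest letters foreign to the frame. If some
direction has no foreign letters, split along it. Otherwise each direction has a layer of foreign
letters, which contains at least ten words, since smaller equivalent codes which are constant in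
one direction are strongly equivalent and so the foreign letters could be glued away. In the tiling
formed by the code and the rest of the frame, this leaves for each direction at most six words whose
letter there is complementary to that of a given word `v` of the rest of the frame. Each word other
than `v` is counted in some direction, so that `32 ≤ 1 + 5 * 6`, which is absurd.

A minimal pair of small codes violating the auxiliary statement may be reduced by gluing and cutting
so that the words of one code which hit a word `q` of the other form a twin pair free cover of `q`.
Such covers have at least five words, and at least seven if their layers are small; this leaves so
few other words that the remaining possibilities are excluded by counting and parity.
-/

namespace PolyboxPaper

open Finset

/-! ### The universal realization -/

/-- `c` is a complementation of the alphabet: an involution without fixed points. -/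
class IsComplementation {S : Type} (c : S → S) : Prop where
  involutive : Function.Involutive c
  ne (s : S) : c s ≠ s

variable {S : Type} {c : S → S} {d : ℕ}

section Letters

variable [IsComplementation c]

lemma compl_compl_letter (c : S → S) [IsComplementation c] (s : S) : c (c s) = s :=
  IsComplementation.involutive s

lemma compl_ne (s : S) : c s ≠ s := IsComplementation.ne s

lemma ne_compl (s : S) : s ≠ c s := (compl_ne s).symm

lemma compl_eq_iff {s t : S} : c s = t ↔ s = c t :=
  IsComplementation.involutive.eq_iff

lemma compl_inj {s t : S} : c s = c t ↔ s = t :=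
  (IsComplementation.involutive (c := c)).injective.eq_iff

lemma Dich.symm {v w : Fin d → S} (h : Dich c v w) : Dich c w v :=
  h.imp fun _ hi => (compl_eq_iff.1 hi.symm)

lemma not_dich_self (v : Fin d → S) : ¬ Dich c v v :=
  fun ⟨i, hi⟩ => ne_compl (v i) hi

end Letters

/-- A selection contains exactly one letter of every complementary pair. The selections are the
points of the universal realization, in which a letter `s` is sent to the set of all selections
containing `s`. -/
structure Selection (c : S → S) where
  /-- The set of selected letters. -/
  carrier : Set S
  compl_mem' (s : S) : c s ∈ carrier ↔ s ∉ carrier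

namespace Selection

instance : SetLike (Selection c) S where
  coe := carrier
  coe_injective := fun ⟨_, _⟩ ⟨_, _⟩ h => by congr

lemma compl_mem_iff {σ : Selection c} {s : S} : c s ∈ σ ↔ s ∉ σ := σ.compl_mem' s

instance : Compl (Selection c) where
  compl σ := ⟨(σ : Set S)ᶜ, fun _ => not_congr compl_mem_iff⟩

lemma mem_compl_iff {σ : Selection c} {s : S} : s ∈ σᶜ ↔ s ∉ σ := Iff.rfl

variable [IsComplementation c]

/-- The selection which differs from `σ` exactly on the complementary pair of `s`. -/
def flip (σ : Selection c) (s : S) : Selection c where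
  carrier := symmDiff (σ : Set S) {s, c s}
  compl_mem' u := by
    have h : c u ∈ ({s, c s} : Set S) ↔ u ∈ ({s, c s} : Set S) := by
      simp only [Set.mem_insert_iff, Set.mem_singleton_iff, compl_eq_iff, compl_compl_letter c,
        or_comm]
    simp only [Set.mem_symmDiff, h, SetLike.mem_coe, compl_mem_iff]
    tauto

lemma mem_flip_self {σ : Selection c} {s : S} : s ∈ σ.flip s ↔ s ∉ σ := by
  change s ∈ symmDiff (σ : Set S) {s, c s} ↔ _
  simp [Set.mem_symmDiff]

lemma mem_flip_of_ne {σ : Selection c} {s u : S} (hs : u ≠ s) (hcs : u ≠ c s) :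
    u ∈ σ.flip s ↔ u ∈ σ := by
  change u ∈ symmDiff (σ : Set S) {s, c s} ↔ _
  simp [Set.mem_symmDiff, hs, hcs]

/-- The selection which agrees with `σ` exactly on the complementary pair of `s`. -/
def opp (σ : Selection c) (s : S) : Selection c :=
  σᶜ.flip s

lemma mem_opp_self {σ : Selection c} {s : S} : s ∈ σ.opp s ↔ s ∈ σ :=
  mem_flip_self.trans not_not

lemma mem_opp_of_ne {σ : Selection c} {s u : S} (hs : u ≠ s) (hcs : u ≠ c s) :
    u ∈ σ.opp s ↔ u ∉ σ :=
  mem_flip_of_ne hs hcs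

instance : Nonempty (Selection c) := by
  classical
  let := linearOrderOfSTO (WellOrderingRel (α := S))
  refine ⟨⟨{s | s < c s}, fun s => ?_⟩⟩
  change c s < c (c s) ↔ ¬ s < c s
  rw [compl_compl_letter c, not_lt]
  exact (compl_ne s).le_iff_lt.symm

lemma exists_mem (s : S) : ∃ σ : Selection c, s ∈ σ := by
  obtain ⟨σ⟩ := (inferInstance : Nonempty (Selection c))
  by_cases hs : s ∈ σ
  exacts [⟨σ, hs⟩, ⟨σᶜ, hs⟩]

lemma exists_mem_mem {s t : S} (h : s ≠ c t) : ∃ σ : Selection c, s ∈ σ ∧ t ∈ σ := by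
  obtain ⟨σ, hs⟩ := exists_mem (c := c) s
  by_cases ht : t ∈ σ
  · exact ⟨σ, hs, ht⟩
  · have hst : s ≠ t := fun hst => ht (hst ▸ hs)
    exact ⟨σ.flip t, (mem_flip_of_ne hst h).2 hs, mem_flip_self.2 ht⟩

end Selection

open Selection

/-- The box of the word `v` in the universal realization. -/
def cell (c : S → S) (v : Fin d → S) : Set (Fin d → Selection c) :=
  box (fun _ s => {σ : Selection c | s ∈ σ}) v

lemma mem_cell {v : Fin d → S} {x : Fin d → Selection c} : x ∈ cell c v ↔ ∀ i, v i ∈ x i :=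
  Iff.rfl

lemma mem_cell_update {v : Fin d → S} {i : Fin d} {s : S} {x : Fin d → Selection c} :
    x ∈ cell c (Function.update v i s) ↔ s ∈ x i ∧ ∀ j, j ≠ i → v j ∈ x j :=
  Function.forall_update_iff v fun j u => u ∈ x j

/-- The part of the universal realization covered by the words of `V`; equivalence of codes
is used through the equality of their regions. -/
def region (c : S → S) (V : Finset (Fin d → S)) : Set (Fin d → Selection c) :=
  ⋃ v ∈ V, cell c v

lemma mem_region {V : Finset (Fin d → S)} {x : Fin d → Selection c} :
    x ∈ region c V ↔ ∃ v ∈ V, x ∈ cell c v := by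
  simp only [region, Set.mem_iUnion, exists_prop]

lemma region_union [DecidableEq S] (V W : Finset (Fin d → S)) :
    region c (V ∪ W) = region c V ∪ region c W :=
  Finset.set_biUnion_union V W (cell c)

lemma region_mono {V W : Finset (Fin d → S)} (h : V ⊆ W) : region c V ⊆ region c W :=
  Set.biUnion_subset_biUnion_left h

lemma Dich.disjoint_cell {v w : Fin d → S} (h : Dich c v w) :
    Disjoint (cell c v) (cell c w) := by
  obtain ⟨i, hi⟩ := h
  refine Set.disjoint_left.2 fun x hv hw => ?_
  exact compl_mem_iff.1 (hi ▸ hv i) (hw i)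

section

variable [IsComplementation c]

lemma exists_mem_cell_inter {v w : Fin d → S} (h : ¬ Dich c v w) :
    ∃ x, x ∈ cell c v ∧ x ∈ cell c w := by
  choose x hv hw using fun i => exists_mem_mem (c := c) fun hi => h ⟨i, hi⟩
  exact ⟨x, hv, hw⟩

lemma cell_nonempty (v : Fin d → S) : (cell c v).Nonempty :=
  (exists_mem_cell_inter (not_dich_self v)).imp fun _ => And.left

lemma dich_iff_disjoint_cell {v w : Fin d → S} :
    Dich c v w ↔ Disjoint (cell c v) (cell c w) := by
  refine ⟨Dich.disjoint_cell, fun h => by_contra fun hvw => ?_⟩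
  obtain ⟨x, hv, hw⟩ := exists_mem_cell_inter hvw
  exact Set.disjoint_left.1 h hv hw

lemma isRealization_mem :
    IsRealization c (fun _ : Fin d => Selection c) fun _ s => {σ | s ∈ σ} := fun _ s => by
  obtain ⟨σ, hσ⟩ := exists_mem (c := c) s
  refine ⟨⟨σ, hσ⟩, fun h => ?_, Set.ext fun _ => compl_mem_iff⟩
  exact (Set.eq_univ_iff_forall.1 h σᶜ) hσ

lemma Covered.region_subset {V W : Finset (Fin d → S)} (h : Covered c V W) :
    region c V ⊆ region c W :=
  Set.iUnion₂_subset fun v hv => h v hv _ _ isRealization_mem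

lemma Equivalent.region_eq {V W : Finset (Fin d → S)} (h : Equivalent c V W) :
    region c V = region c W :=
  h.1.region_subset.antisymm h.2.region_subset

end

/-! ### Codes and their regions -/

/-- Every two distinct words of `P` are dichotomous at some position of `E`. -/
def IsCodeOn (c : S → S) (E : Finset (Fin d)) (P : Finset (Fin d → S)) : Prop :=
  ∀ p ∈ P, ∀ q ∈ P, p ≠ q → ∃ i ∈ E, p i = c (q i)

lemma isCodeOn_univ {P : Finset (Fin d → S)} : IsCodeOn c univ P ↔ IsCode c P := by
  simp only [IsCodeOn, IsCode, Dich, mem_univ, true_and]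

lemma IsCodeOn.isCode {E : Finset (Fin d)} {P : Finset (Fin d → S)} (h : IsCodeOn c E P) :
    IsCode c P :=
  fun p hp q hq hpq => (h p hp q hq hpq).imp fun _ => And.right

lemma IsCodeOn.mono {E F : Finset (Fin d)} {P Q : Finset (Fin d → S)} (h : IsCodeOn c E P)
    (hEF : E ⊆ F) (hQP : Q ⊆ P) : IsCodeOn c F Q := fun p hp q hq hpq =>
  (h p (hQP hp) q (hQP hq) hpq).imp fun _ => And.imp_left fun hi => hEF hi

lemma IsCode.mono {P Q : Finset (Fin d → S)} (h : IsCode c P) (hQP : Q ⊆ P) : IsCode c Q :=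
  fun p hp q hq => h p (hQP hp) q (hQP hq)

lemma IsCode.eq_of_mem_cell {P : Finset (Fin d → S)} (h : IsCode c P) {p q : Fin d → S}
    (hp : p ∈ P) (hq : q ∈ P) {x : Fin d → Selection c} (hxp : x ∈ cell c p)
    (hxq : x ∈ cell c q) : p = q :=
  by_contra fun hpq => Set.disjoint_left.1 (h p hp q hq hpq).disjoint_cell hxp hxq

lemma disjoint_region_iff {A B : Finset (Fin d → S)} :
    Disjoint (region c A) (region c B) ↔
      ∀ a ∈ A, ∀ b ∈ B, Disjoint (cell c a) (cell c b) := by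
  simp only [region, Set.disjoint_iUnion_left, Set.disjoint_iUnion_right]
  exact ⟨fun h a ha b hb => h b hb a ha, fun h b hb a ha => h a ha b hb⟩

lemma IsCode.disjoint_region {P A B : Finset (Fin d → S)} (h : IsCode c P) (hA : A ⊆ P)
    (hB : B ⊆ P) (hAB : Disjoint A B) : Disjoint (region c A) (region c B) :=
  disjoint_region_iff.2 fun a ha b hb =>
    (h a (hA ha) b (hB hb) fun hab => disjoint_left.1 hAB ha (hab ▸ hb)).disjoint_cell

section

variable [IsComplementation c]

lemma disjoint_of_disjoint_region {A B : Finset (Fin d → S)}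
    (h : Disjoint (region c A) (region c B)) : Disjoint A B := by
  refine disjoint_left.2 fun a ha hb => ?_
  exact (cell_nonempty a).ne_empty (disjoint_self.1 (disjoint_region_iff.1 h a ha a hb))

lemma forall_eq_of_region_eq {P Q : Finset (Fin d → S)} (h : region c P = region c Q)
    {i : Fin d} {s : S} (hQ : ∀ q ∈ Q, q i = s) : ∀ p ∈ P, p i = s := by
  intro p hp
  by_contra hps
  obtain ⟨x, hx⟩ := cell_nonempty (c := c) p
  obtain ⟨σ, hpσ, hsσ⟩ := exists_mem_mem (c := c) (s := p i) (t := c s)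
    (by rwa [compl_compl_letter c])
  have hxp : Function.update x i σ ∈ cell c p :=
    (Function.forall_update_iff x fun j τ => p j ∈ τ).2 ⟨hpσ, fun j _ => hx j⟩
  obtain ⟨q, hq, hxq⟩ := mem_region.1 (h ▸ mem_region.2 ⟨p, hp, hxp⟩)
  have hqi : q i ∈ Function.update x i σ i := hxq i
  rw [hQ q hq, Function.update_self] at hqi
  exact compl_mem_iff.1 hsσ hqi

variable [DecidableEq S]

lemma IsCode.union {A B : Finset (Fin d → S)} (hA : IsCode c A) (hB : IsCode c B)
    (h : Disjoint (region c A) (region c B)) : IsCode c (A ∪ B) := by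
  have key (a) (ha : a ∈ A) (b) (hb : b ∈ B) : Dich c a b :=
    dich_iff_disjoint_cell.2 (disjoint_region_iff.1 h a ha b hb)
  intro v hv w hw hvw
  rcases mem_union.1 hv with hv | hv <;> rcases mem_union.1 hw with hw | hw
  exacts [hA v hv w hw hvw, key v hv w hw, (key w hw v hv).symm, hB v hv w hw hvw]

end

section

variable [DecidableEq S]

lemma IsCode.region_sdiff {P R : Finset (Fin d → S)} (h : IsCode c P) (hR : R ⊆ P) :
    region c (P \ R) = region c P \ region c R := by
  conv_rhs => rw [← sdiff_union_of_subset hR, region_union]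
  exact (Set.union_sdiff_cancel_right
    (h.disjoint_region sdiff_subset hR sdiff_disjoint).le_bot).symm

lemma IsCode.region_erase {P : Finset (Fin d → S)} (h : IsCode c P) {p : Fin d → S}
    (hp : p ∈ P) : region c (P.erase p) = region c P \ region c {p} := by
  rw [← sdiff_singleton_eq_erase, h.region_sdiff (singleton_subset_iff.2 hp)]

end

/-! ### Gluing and cutting in one direction -/

section

variable [DecidableEq S]

/-- The set of words obtained from those of `B` by writing the letter `s` at position `i`. -/
def setLetter (i : Fin d) (s : S) (B : Finset (Fin d → S)) : Finset (Fin d → S) :=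
  B.image fun w => Function.update w i s

lemma mem_setLetter {i : Fin d} {s : S} {B : Finset (Fin d → S)} {z : Fin d → S} :
    z ∈ setLetter i s B ↔ ∃ w ∈ B, Function.update w i s = z :=
  mem_image

lemma setLetter_eq_self {i : Fin d} {s : S} {B : Finset (Fin d → S)} (h : ∀ b ∈ B, b i = s) :
    setLetter i s B = B := by
  conv_rhs => rw [← image_id (s := B)]
  exact image_congr fun b hb => by simp only [← h b hb, Function.update_eq_self, id]

lemma IsCodeOn.setLetter {E : Finset (Fin d)} {i : Fin d} {B : Finset (Fin d → S)}
    (h : IsCodeOn c E B) (hi : i ∉ E) (s : S) : IsCodeOn c E (setLetter i s B) := by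
  intro v hv w hw hvw
  obtain ⟨a, ha, rfl⟩ := mem_setLetter.1 hv
  obtain ⟨b, hb, rfl⟩ := mem_setLetter.1 hw
  obtain ⟨j, hj, hab⟩ := h a ha b hb fun hab => hvw (by rw [hab])
  refine ⟨j, hj, ?_⟩
  rwa [Function.update_of_ne (ne_of_mem_of_not_mem hj hi),
    Function.update_of_ne (ne_of_mem_of_not_mem hj hi)]

/-- The union of the twin pairs in direction `i`, with letters `s` and `c s`, whose words agree
off `i` with the words of `B`. -/
def double (c : S → S) (i : Fin d) (s : S) (B : Finset (Fin d → S)) : Finset (Fin d → S) :=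
  setLetter i s B ∪ setLetter i (c s) B

lemma double_union (i : Fin d) (s : S) (A B : Finset (Fin d → S)) :
    double c i s (A ∪ B) = double c i s A ∪ double c i s B := by
  simp only [double, setLetter, image_union, union_union_union_comm]

lemma double_singleton (i : Fin d) (s : S) (r : Fin d → S) :
    double c i s {r} = {Function.update r i s, Function.update r i (c s)} := by
  simp only [double, setLetter, image_singleton]
  rfl

lemma mem_region_setLetter {i : Fin d} {s : S} {B : Finset (Fin d → S)}
    {x : Fin d → Selection c} :
    x ∈ region c (setLetter i s B) ↔ s ∈ x i ∧ ∃ b ∈ B, ∀ j, j ≠ i → b j ∈ x j := by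
  simp only [mem_region, setLetter, mem_image, exists_exists_and_eq_and, mem_cell_update]
  tauto

lemma mem_region_double {i : Fin d} {s : S} {B : Finset (Fin d → S)}
    {x : Fin d → Selection c} :
    x ∈ region c (double c i s B) ↔ ∃ b ∈ B, ∀ j, j ≠ i → b j ∈ x j := by
  rw [double, region_union, Set.mem_union, mem_region_setLetter, mem_region_setLetter,
    compl_mem_iff, ← or_and_right, and_iff_right (em _)]

lemma region_double (i : Fin d) (s t : S) (B : Finset (Fin d → S)) :
    region c (double c i s B) = region c (double c i t B) := by
  ext x
  rw [mem_region_double, mem_region_double]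

lemma GC.refl (V : Finset (Fin d → S)) : GC c V V := Relation.ReflTransGen.refl

lemma GC.trans {U V W : Finset (Fin d → S)} (hUV : GC c U V) (hVW : GC c V W) : GC c U W :=
  Relation.ReflTransGen.trans hUV hVW

section

variable [IsComplementation c]

lemma IsCodeOn.double {E : Finset (Fin d)} {i : Fin d} {B : Finset (Fin d → S)}
    (h : IsCodeOn c E B) (hi : i ∉ E) (s : S) :
    IsCodeOn c (insert i E) (double c i s B) := by
  have key (u : S) : IsCodeOn c (insert i E) (PolyboxPaper.setLetter i u B) :=
    (h.setLetter hi u).mono (subset_insert i E) Subset.rfl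
  have at_i {u : S} {z} (hz : z ∈ PolyboxPaper.setLetter i u B) : z i = u := by
    obtain ⟨w, -, rfl⟩ := mem_setLetter.1 hz
    exact Function.update_self ..
  intro v hv w hw hvw
  rcases mem_union.1 hv with hv | hv <;> rcases mem_union.1 hw with hw | hw
  · exact key s v hv w hw hvw
  · exact ⟨i, mem_insert_self i E, by rw [at_i hv, at_i hw, compl_compl_letter c]⟩
  · exact ⟨i, mem_insert_self i E, by rw [at_i hv, at_i hw]⟩
  · exact key (c s) v hv w hw hvw

lemma gcStep_iff {V W : Finset (Fin d → S)} :
    GCStep c V W ↔ ∃ r i s t, double c i s {r} ⊆ V ∧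
      W = V \ double c i s {r} ∪ double c i t {r} := by
  have eq_update {v w : Fin d → S} {i : Fin d} (h : ∀ j, j ≠ i → w j = v j) {s : S}
      (hs : w i = s) : w = Function.update v i s :=
    Function.eq_update_iff.2 ⟨hs, h⟩
  simp only [double_singleton]
  constructor
  · rintro ⟨v, w, q, t, i, hv, hw, hvw, hqt, hqv, rfl⟩
    have hw' := eq_update (fun j hj => (hvw.2 j hj).symm) (compl_eq_iff.1 hvw.1.symm)
    have hq' := eq_update hqv rfl
    have ht' := eq_update (fun j hj => (hqt.2 j hj).symm.trans (hqv j hj))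
      (compl_eq_iff.1 hqt.1.symm)
    refine ⟨v, i, v i, q i, ?_, ?_⟩
    · rw [← hw', Function.update_eq_self, insert_subset_iff, singleton_subset_iff]
      exact ⟨hv, hw⟩
    · rw [← hw', ← hq', ← ht', Function.update_eq_self]
  · rintro ⟨r, i, s, t, hV, rfl⟩
    rw [insert_subset_iff, singleton_subset_iff] at hV
    have twin (u : S) : TwinPair c (Function.update r i u) (Function.update r i (c u)) i :=
      ⟨by simp only [Function.update_self, compl_compl_letter],
        fun j hj => by simp only [Function.update_of_ne hj]⟩
    exact ⟨_, _, _, _, i, hV.1, hV.2, twin s, twin t,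
      fun j hj => by simp only [Function.update_of_ne hj], rfl⟩

lemma GCStep.region_eq {V W : Finset (Fin d → S)} (h : GCStep c V W) :
    region c V = region c W := by
  obtain ⟨r, i, s, t, hV, rfl⟩ := gcStep_iff.1 h
  rw [region_union, region_double i t s, ← region_union, sdiff_union_of_subset hV]

lemma GCStep.isCode {V W : Finset (Fin d → S)} (h : GCStep c V W) (hV : IsCode c V) :
    IsCode c W := by
  obtain ⟨r, i, s, t, hs, rfl⟩ := gcStep_iff.1 h
  have hr : IsCodeOn c ∅ {r} := fun p hp q hq hpq =>
    absurd ((mem_singleton.1 hp).trans (mem_singleton.1 hq).symm) hpq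
  refine (hV.mono sdiff_subset).union (hr.double (notMem_empty i) t).isCode ?_
  rw [region_double i t s]
  exact hV.disjoint_region sdiff_subset hs sdiff_disjoint

lemma GCStep.symm {V W : Finset (Fin d → S)} (h : GCStep c V W) (hV : IsCode c V) :
    GCStep c W V := by
  obtain ⟨r, i, s, t, hs, rfl⟩ := gcStep_iff.1 h
  have hdisj : Disjoint (V \ double c i s {r}) (double c i t {r}) := by
    refine disjoint_of_disjoint_region (c := c) ?_
    rw [region_double i t s]
    exact hV.disjoint_region sdiff_subset hs sdiff_disjoint
  refine gcStep_iff.2 ⟨r, i, t, s, subset_union_right, ?_⟩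
  rw [union_sdiff_right, hdisj.sdiff_eq_left, sdiff_union_of_subset hs]

lemma GC.region_eq {V W : Finset (Fin d → S)} (h : GC c V W) : region c V = region c W := by
  induction h with
  | refl => rfl
  | tail _ hstep ih => exact ih.trans hstep.region_eq

lemma GC.isCode {V W : Finset (Fin d → S)} (h : GC c V W) (hV : IsCode c V) : IsCode c W := by
  induction h with
  | refl => exact hV
  | tail _ hstep ih => exact hstep.isCode ih

lemma GC.symm {V W : Finset (Fin d → S)} (h : GC c V W) (hV : IsCode c V) : GC c W V := by
  induction h with
  | refl => exact GC.refl V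
  | tail hVU hstep ih => exact .head (hstep.symm (GC.isCode hVU hV)) ih

lemma GC.union_right {A B R : Finset (Fin d → S)} (h : GC c A B)
    (hR : Disjoint (region c A) (region c R)) : GC c (A ∪ R) (B ∪ R) := by
  induction h with
  | refl => exact GC.refl _
  | @tail B B' hAB hstep ih =>
    obtain ⟨r, i, s, t, hs, rfl⟩ := gcStep_iff.1 hstep
    refine ih.tail (gcStep_iff.2 ⟨r, i, s, t, hs.trans subset_union_left, ?_⟩)
    have hBR : Disjoint B R := disjoint_of_disjoint_region (c := c) (GC.region_eq hAB ▸ hR)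
    rw [union_sdiff_distrib, (hBR.mono_left hs).symm.sdiff_eq_left, union_right_comm]

lemma GC.union {A B A' B' : Finset (Fin d → S)} (hA : GC c A A') (hB : GC c B B')
    (h : Disjoint (region c A) (region c B)) : GC c (A ∪ B) (A' ∪ B') := by
  refine (hA.union_right h).trans ?_
  rw [union_comm A' B, union_comm A' B']
  exact hB.union_right (hA.region_eq ▸ h.symm)

lemma gc_double {i : Fin d} {B : Finset (Fin d → S)} (hB : IsCodeOn c (univ.erase i) B)
    (s t : S) : GC c (double c i s B) (double c i t B) := by
  induction B using Finset.induction_on with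
  | empty => exact GC.refl _
  | insert r B hr ih =>
    have hstep : GC c (double c i s {r}) (double c i t {r}) :=
      .single (gcStep_iff.2 ⟨r, i, s, t, Subset.rfl, by rw [Finset.sdiff_self, empty_union]⟩)
    rw [insert_eq, double_union, double_union]
    refine hstep.union (ih (hB.mono Subset.rfl (subset_insert r B)))
      (Set.disjoint_left.2 fun x hxr hxB => ?_)
    obtain ⟨r', hr', hxr⟩ := mem_region_double.1 hxr
    obtain ⟨b, hb, hxb⟩ := mem_region_double.1 hxB
    rw [mem_singleton.1 hr'] at hxr
    obtain ⟨j, hj, hrb⟩ := hB r (mem_insert_self r B) b (mem_insert_of_mem hb)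
      fun h => hr (h ▸ hb)
    exact compl_mem_iff.1 (hrb ▸ hxr j (ne_of_mem_erase hj)) (hxb j (ne_of_mem_erase hj))

end

end

/-! ### Layers -/

section

variable [DecidableEq S]

/-- The words of `V` with letter `s` at position `i`, denoted by `V^{i,s}` in the paper. -/
def layer (V : Finset (Fin d → S)) (i : Fin d) (s : S) : Finset (Fin d → S) :=
  V.filter fun v => v i = s

/-- The words of `V` whose letter at position `i` is neither `s` nor `c s`. -/
def residue (c : S → S) (V : Finset (Fin d → S)) (i : Fin d) (s : S) : Finset (Fin d → S) :=
  V.filter fun v => v i ≠ s ∧ v i ≠ c s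

lemma mem_layer {V : Finset (Fin d → S)} {i : Fin d} {s : S} {v : Fin d → S} :
    v ∈ layer V i s ↔ v ∈ V ∧ v i = s :=
  mem_filter

lemma layer_subset (V : Finset (Fin d → S)) (i : Fin d) (s : S) : layer V i s ⊆ V :=
  filter_subset _ _

lemma residue_subset (V : Finset (Fin d → S)) (i : Fin d) (s : S) : residue c V i s ⊆ V :=
  filter_subset _ _

lemma layer_union_layer_union_residue (V : Finset (Fin d → S)) (i : Fin d) (s : S) :
    layer V i s ∪ (layer V i (c s) ∪ residue c V i s) = V := by
  ext v
  simp only [layer, residue, mem_union, mem_filter]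
  tauto

lemma disjoint_layer_residue (V : Finset (Fin d → S)) (i : Fin d) (s : S) :
    Disjoint (layer V i s) (residue c V i s) :=
  disjoint_filter.2 fun _ _ hs h => h.1 hs

lemma disjoint_layer_compl_residue (V : Finset (Fin d → S)) (i : Fin d) (s : S) :
    Disjoint (layer V i (c s)) (residue c V i s) :=
  disjoint_filter.2 fun _ _ hs h => h.2 hs

lemma IsCode.notMem_region_residue {V : Finset (Fin d → S)} (hV : IsCode c V) {i : Fin d} {s : S}
    {x : Fin d → Selection c} : x ∈ region c (layer V i s) → x ∉ region c (residue c V i s) :=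
  fun hx => Set.disjoint_left.1 (hV.disjoint_region (layer_subset V i s)
    (residue_subset V i s) (disjoint_layer_residue V i s)) hx

lemma IsCode.notMem_region_residue_of_compl {V : Finset (Fin d → S)} (hV : IsCode c V) {i : Fin d}
    {s : S} {x : Fin d → Selection c} :
    x ∈ region c (layer V i (c s)) → x ∉ region c (residue c V i s) :=
  fun hx => Set.disjoint_left.1 (hV.disjoint_region (layer_subset V i (c s))
    (residue_subset V i s) (disjoint_layer_compl_residue V i s)) hx

lemma disjoint_layer {s t : S} (hst : s ≠ t) (V : Finset (Fin d → S)) (i : Fin d) :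
    Disjoint (layer V i s) (layer V i t) :=
  disjoint_filter.2 fun _ _ hs ht => hst (hs.symm.trans ht)

lemma mem_of_mem_region_layer {V : Finset (Fin d → S)} {i : Fin d} {s : S}
    {x : Fin d → Selection c} (hx : x ∈ region c (layer V i s)) : s ∈ x i := by
  obtain ⟨v, hv, hxv⟩ := mem_region.1 hx
  exact (mem_layer.1 hv).2 ▸ hxv i

lemma mem_region_iff_of_mem (V : Finset (Fin d → S)) {i : Fin d} {s : S}
    {x : Fin d → Selection c} (hx : s ∈ x i) :
    x ∈ region c V ↔ x ∈ region c (layer V i s) ∨ x ∈ region c (residue c V i s) := by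
  have hcs : x ∉ region c (layer V i (c s)) := fun h =>
    compl_mem_iff.1 (mem_of_mem_region_layer h) hx
  conv_lhs => rw [← layer_union_layer_union_residue (c := c) V i s]
  simp only [region_union, Set.mem_union, hcs, false_or]

lemma mem_region_iff_of_notMem (V : Finset (Fin d → S)) {i : Fin d} {s : S}
    {x : Fin d → Selection c} (hx : s ∉ x i) :
    x ∈ region c V ↔ x ∈ region c (layer V i (c s)) ∨ x ∈ region c (residue c V i s) := by
  have hs : x ∉ region c (layer V i s) := fun h => hx (mem_of_mem_region_layer h)
  conv_lhs => rw [← layer_union_layer_union_residue (c := c) V i s]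
  simp only [region_union, Set.mem_union, hs, false_or]

lemma layer_setLetter (i : Fin d) (s : S) (B : Finset (Fin d → S)) :
    layer (setLetter i s B) i s = setLetter i s B :=
  filter_true_of_mem fun z hz => by
    obtain ⟨w, -, rfl⟩ := mem_setLetter.1 hz
    exact Function.update_self ..

lemma IsCodeOn.layer [IsComplementation c] {V : Finset (Fin d → S)} {E : Finset (Fin d)}
    (hV : IsCodeOn c E V) (i : Fin d) (s : S) : IsCodeOn c (E.erase i) (layer V i s) := by
  intro p hp q hq hpq
  obtain ⟨hpV, hps⟩ := mem_layer.1 hp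
  obtain ⟨hqV, hqs⟩ := mem_layer.1 hq
  obtain ⟨j, hj, hj'⟩ := hV p hpV q hqV hpq
  refine ⟨j, mem_erase.2 ⟨?_, hj⟩, hj'⟩
  rintro rfl
  exact ne_compl (c := c) s (by rwa [hps, hqs] at hj')

section

variable [IsComplementation c]

lemma mem_region_residue_update_flip {V : Finset (Fin d → S)} {i : Fin d} {s : S}
    {x : Fin d → Selection c} :
    Function.update x i ((x i).flip s) ∈ region c (residue c V i s) ↔
      x ∈ region c (residue c V i s) := by
  simp only [mem_region, mem_cell, residue, mem_filter]
  refine exists_congr fun v => and_congr_right fun ⟨_, hs, hcs⟩ => forall_congr' fun j => ?_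
  rcases eq_or_ne j i with rfl | hj
  · rw [Function.update_self, mem_flip_of_ne hs hcs]
  · rw [Function.update_of_ne hj]

lemma mem_region_layer_compl_update_flip {V : Finset (Fin d → S)} {i : Fin d} {s : S}
    {x : Fin d → Selection c} (hx : s ∈ x i) :
    Function.update x i ((x i).flip s) ∈ region c (layer V i (c s)) ↔
      x ∈ region c (setLetter i s (layer V i (c s))) := by
  have hflip : s ∉ (x i).flip s := fun h => mem_flip_self.1 h hx
  rw [mem_region_setLetter, and_iff_right hx, mem_region]
  refine exists_congr fun v => and_congr_right fun hv => ?_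
  rw [mem_cell]
  exact (Function.forall_update_iff x fun j σ => v j ∈ σ).trans
    (and_iff_right ((mem_layer.1 hv).2 ▸ compl_mem_iff.2 hflip))

section Exchange

variable {P Q : Finset (Fin d → S)} {i : Fin d} {s : S}

lemma mem_region_layer_iff_of_mem (hP : IsCode c P) (hQ : IsCode c Q)
    (h : region c P = region c Q) (hs : ∀ q ∈ Q, q i ≠ c s) {x : Fin d → Selection c}
    (hx : s ∈ x i) :
    (x ∈ region c (layer P i s) ↔
        x ∈ region c (layer Q i s) ∨ x ∈ region c (setLetter i s (layer P i (c s)))) ∧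
      ¬ (x ∈ region c (layer Q i s) ∧ x ∈ region c (setLetter i s (layer P i (c s)))) := by
  set x' := Function.update x i ((x i).flip s) with hx'
  have hflip : s ∉ x' i := by rwa [hx', Function.update_self, mem_flip_self, not_not]
  have hQcs : x' ∉ region c (layer Q i (c s)) := by
    rw [layer, filter_false_of_mem hs]
    simp only [mem_region, notMem_empty, false_and, exists_false, not_false_eq_true]
  have at_x : x ∈ region c P ↔ x ∈ region c Q := by rw [h]
  have at_x' : x' ∈ region c P ↔ x' ∈ region c Q := by rw [h]
  rw [mem_region_iff_of_mem P hx, mem_region_iff_of_mem Q hx] at at_x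
  rw [mem_region_iff_of_notMem P hflip, mem_region_iff_of_notMem Q hflip, or_iff_right hQcs]
    at at_x'
  have disjP : x ∈ region c (layer P i s) → _ := hP.notMem_region_residue
  have disjQ : x ∈ region c (layer Q i s) → _ := hQ.notMem_region_residue
  have disjP' : x' ∈ region c (layer P i (c s)) → _ := hP.notMem_region_residue_of_compl
  simp only [hx', mem_region_residue_update_flip, mem_region_layer_compl_update_flip hx]
    at at_x' disjP'
  tauto

lemma region_layer_eq (hP : IsCode c P) (hQ : IsCode c Q) (h : region c P = region c Q)
    (hs : ∀ q ∈ Q, q i ≠ c s) :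
    region c (layer P i s) =
      region c (layer Q i s ∪ setLetter i s (layer P i (c s))) := by
  ext x
  rw [region_union, Set.mem_union]
  by_cases hx : s ∈ x i
  · exact (mem_region_layer_iff_of_mem hP hQ h hs hx).1
  · exact iff_of_false (fun h => hx (mem_of_mem_region_layer h))
      (not_or.2 ⟨fun h => hx (mem_of_mem_region_layer h),
        fun h => hx (mem_region_setLetter.1 h).1⟩)

lemma isCode_layer_union_setLetter (hP : IsCode c P) (hQ : IsCode c Q)
    (h : region c P = region c Q) (hs : ∀ q ∈ Q, q i ≠ c s) :
    IsCode c (layer Q i s ∪ setLetter i s (layer P i (c s))) := by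
  refine (hQ.mono (layer_subset Q i s)).union ?_ (Set.disjoint_left.2 fun x hxQ hxP => ?_)
  · exact (((isCodeOn_univ.2 hP).layer i (c s)).setLetter (notMem_erase i univ) s).isCode
  · exact (mem_region_layer_iff_of_mem hP hQ h hs (mem_of_mem_region_layer hxQ)).2 ⟨hxQ, hxP⟩

end Exchange

end

end

/-! ### Packings and covers of a cell -/

section Packing

open scoped Classical in
/-- The positions of `E` at which the word `p` is not selected by the point `x`. -/
noncomputable def signature (x : Fin d → Selection c) (E : Finset (Fin d)) (p : Fin d → S) :
    Finset (Fin d) :=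
  E.filter fun i => p i ∉ x i

lemma mem_signature {x : Fin d → Selection c} {E : Finset (Fin d)} {p : Fin d → S} {i : Fin d} :
    i ∈ signature x E p ↔ i ∈ E ∧ p i ∉ x i := by
  simp only [signature, mem_filter]

lemma signature_subset (x : Fin d → Selection c) (E : Finset (Fin d)) (p : Fin d → S) :
    signature x E p ⊆ E :=
  fun _ hi => (mem_signature.1 hi).1

variable {E : Finset (Fin d)} {P Q : Finset (Fin d → S)}

lemma IsCodeOn.injOn_signature (hP : IsCodeOn c E P) (x : Fin d → Selection c) :
    Set.InjOn (signature x E) P := fun p hp q hq hpq => by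
  by_contra hne
  obtain ⟨i, hi, hpqi⟩ := hP p hp q hq hne
  have : i ∈ signature x E p ↔ i ∈ signature x E q := by rw [hpq]
  simp only [mem_signature, hi, true_and, hpqi, compl_mem_iff, not_not] at this
  tauto

lemma IsCodeOn.exists_forall_mem (hP : IsCodeOn c E P) (hcard : #P = 2 ^ #E)
    (x : Fin d → Selection c) : ∃ p ∈ P, ∀ i ∈ E, p i ∈ x i := by
  have hsurj := surjOn_of_injOn_of_card_le (signature x E) (t := E.powerset)
    (fun p _ => mem_powerset.2 (signature_subset x E p)) (hP.injOn_signature x)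
    (by rw [card_powerset, hcard])
  obtain ⟨p, hp, hxp⟩ := hsurj (mem_coe.2 (empty_mem_powerset E))
  refine ⟨p, hp, fun i hi => by_contra fun hpi => notMem_empty i ?_⟩
  rw [← hxp]
  exact mem_signature.2 ⟨hi, hpi⟩

lemma CubeTiling.region_eq_univ (hP : CubeTiling c P) : region c P = Set.univ := by
  refine Set.eq_univ_of_forall fun x => mem_region.2 ?_
  obtain ⟨p, hp, hxp⟩ :=
    (isCodeOn_univ.2 hP.1).exists_forall_mem (by rw [hP.2, card_univ, Fintype.card_fin]) x
  exact ⟨p, hp, fun i => hxp i (mem_univ i)⟩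

lemma piecewise_compl_mem_cell {x : Fin d → Selection c} {A : Finset (Fin d)} {p : Fin d → S} :
    (A.piecewise (fun i => (x i)ᶜ) x) ∈ cell c p ↔ signature x univ p = A := by
  rw [mem_cell, Finset.ext_iff]
  refine forall_congr' fun i => ?_
  by_cases hi : i ∈ A
  · simp only [piecewise_eq_of_mem _ _ _ hi, mem_signature, hi, mem_univ, mem_compl_iff, true_and,
      iff_true]
  · simp only [piecewise_eq_of_notMem _ _ _ hi, mem_signature, hi, mem_univ, true_and, iff_false,
      not_not]

variable [IsComplementation c]

lemma IsCodeOn.card_le (hP : IsCodeOn c E P) : #P ≤ 2 ^ #E := by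
  obtain ⟨σ⟩ := (inferInstance : Nonempty (Selection c))
  rw [← card_powerset]
  exact card_le_card_of_injOn (signature (fun _ => σ) E)
    (fun p _ => mem_powerset.2 (signature_subset _ E p)) (hP.injOn_signature _)

lemma IsCode.card_eq_of_region_eq (hP : IsCode c P) (hQ : IsCode c Q)
    (h : region c P = region c Q) : #P = #Q := by
  obtain ⟨σ⟩ := (inferInstance : Nonempty (Selection c))
  have card_image {R : Finset (Fin d → S)} (hR : IsCode c R) :
      #(R.image (signature (fun _ => σ) univ)) = #R :=
    card_image_of_injOn ((isCodeOn_univ.2 hR).injOn_signature _)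
  rw [← card_image hP, ← card_image hQ]
  congr 1
  ext A
  simp only [mem_image, ← piecewise_compl_mem_cell, ← mem_region, h]

variable [DecidableEq S]

lemma card_layer_add_card_layer_le (hP : IsCodeOn c E P) {j : Fin d} (hj : j ∈ E)
    {s t : S} (hst : s ≠ t) (hsct : s ≠ c t) :
    #(layer P j s) + #(layer P j t) ≤ 2 ^ (#E - 1) := by
  rw [← card_union_of_disjoint (disjoint_layer hst P j), ← card_erase_of_mem hj]
  refine IsCodeOn.card_le (c := c) fun p hp q hq hpq => ?_
  have hsub := union_subset (layer_subset P j s) (layer_subset P j t)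
  obtain ⟨k, hk, hpqk⟩ := hP p (hsub hp) q (hsub hq) hpq
  refine ⟨k, mem_erase.2 ⟨?_, hk⟩, hpqk⟩
  rintro rfl
  have hts : t ≠ c s := fun h => hsct (compl_eq_iff.1 h.symm)
  simp only [mem_union, mem_layer] at hp hq
  rcases hp with ⟨-, hp⟩ | ⟨-, hp⟩ <;> rcases hq with ⟨-, hq⟩ | ⟨-, hq⟩ <;> rw [hp, hq] at hpqk
  exacts [ne_compl s hpqk, hsct hpqk, hts hpqk, ne_compl t hpqk]

end Packing

section Covers

variable [DecidableEq S]

/-- The positions at which the word `p` differs from `q`. -/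
def supp (q p : Fin d → S) : Finset (Fin d) :=
  univ.filter fun i => p i ≠ q i

lemma mem_supp {q p : Fin d → S} {i : Fin d} : i ∈ supp q p ↔ p i ≠ q i :=
  mem_filter_univ i

lemma notMem_supp {q p : Fin d → S} {i : Fin d} : i ∉ supp q p ↔ p i = q i := by
  rw [mem_supp, not_not]

variable [IsComplementation c]

/-- The vertex `A` of the cube whose sides join `x i` and `(x i).opp (q i)`. If `x` lies in the
cell of `q`, then so do all vertices of this cube. -/
def corner (x : Fin d → Selection c) (q : Fin d → S) (A : Finset (Fin d)) :
    Fin d → Selection c :=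
  A.piecewise (fun i => (x i).opp (q i)) x

omit [DecidableEq S] in
lemma corner_mem_cell {x : Fin d → Selection c} {q : Fin d → S} (hx : x ∈ cell c q)
    (A : Finset (Fin d)) : corner x q A ∈ cell c q := fun i => by
  by_cases hi : i ∈ A
  · rw [corner, piecewise_eq_of_mem _ _ _ hi]
    exact mem_opp_self.2 (hx i)
  · rw [corner, piecewise_eq_of_notMem _ _ _ hi]
    exact hx i

lemma corner_mem_cell_iff {x : Fin d → Selection c} {q p : Fin d → S} (hx : x ∈ cell c q)
    (hpq : ¬ Dich c p q) {E A : Finset (Fin d)} (hA : A ⊆ E) :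
    corner x q A ∈ cell c p ↔ (∀ i ∉ E, p i ∈ x i) ∧
      A ∈ Icc (signature x E p) (signature x E p ∪ E \ supp q p) := by
  simp only [mem_Icc, subset_iff, mem_union, mem_sdiff, mem_signature,
    notMem_supp, ← forall_and, mem_cell]
  refine forall_congr' fun i => ?_
  by_cases hi : i ∈ A
  · have hopp : p i ∈ (x i).opp (q i) ↔ p i ∉ x i ∨ p i = q i := by
      by_cases hpi : p i = q i
      · simp only [hpi, mem_opp_self, or_true, iff_true]
        exact hx i
      · simp only [mem_opp_of_ne hpi fun h => hpq ⟨i, h⟩, hpi, or_false]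
    simp only [corner, piecewise_eq_of_mem _ _ _ hi, hopp, hi, hA hi]
    tauto
  · simp only [corner, piecewise_eq_of_notMem _ _ _ hi, hi]
    tauto

open scoped Classical in
lemma card_filter_corner_mem_cell {x : Fin d → Selection c} {q p : Fin d → S} (hx : x ∈ cell c q)
    (hpq : ¬ Dich c p q) {E : Finset (Fin d)} (hpx : ∀ i ∉ E, p i ∈ x i) :
    #{A ∈ E.powerset | corner x q A ∈ cell c p} = 2 ^ #(E \ supp q p) := by
  have hdisj : Disjoint (signature x E p) (E \ supp q p) := disjoint_left.2 fun i hi hi' => by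
    rw [mem_signature] at hi
    rw [mem_sdiff, notMem_supp] at hi'
    exact hi.2 (hi'.2 ▸ hx i)
  have hIcc : E.powerset.filter (fun A => corner x q A ∈ cell c p) =
      Icc (signature x E p) (signature x E p ∪ E \ supp q p) := by
    ext A
    rw [mem_filter, mem_powerset]
    refine ⟨fun h => ((corner_mem_cell_iff hx hpq h.1).1 h.2).2, fun h => ?_⟩
    have hA := (mem_Icc.1 h).2.trans (union_subset (signature_subset x E p) sdiff_subset)
    exact ⟨hA, (corner_mem_cell_iff hx hpq hA).2 ⟨hpx, h⟩⟩
  rw [hIcc, card_Icc_finset subset_union_left, card_union_of_disjoint hdisj,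
    Nat.add_sub_cancel_left]

open scoped Classical in
lemma sum_two_pow_card_sdiff_supp {C : Finset (Fin d → S)} {q : Fin d → S} (hC : IsCode c C)
    (hnd : ∀ p ∈ C, ¬ Dich c p q) (hcov : cell c q ⊆ region c C) {x : Fin d → Selection c}
    (hx : x ∈ cell c q) (E : Finset (Fin d)) :
    ∑ p ∈ C with ∀ i ∉ E, p i ∈ x i, 2 ^ #(E \ supp q p) = 2 ^ #E := by
  have card_words (A) (hA : A ∈ E.powerset) :
      #{p ∈ C.filter (fun p => ∀ i ∉ E, p i ∈ x i) | corner x q A ∈ cell c p} = 1 := by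
    obtain ⟨p, hp, hpA⟩ := mem_region.1 (hcov (corner_mem_cell hx A))
    refine card_eq_one.2 ⟨p, eq_singleton_iff_unique_mem.2 ⟨?_, fun r hr => ?_⟩⟩
    · have := ((corner_mem_cell_iff hx (hnd p hp) (mem_powerset.1 hA)).1 hpA).1
      exact mem_filter.2 ⟨mem_filter.2 ⟨hp, this⟩, hpA⟩
    · simp only [mem_filter] at hr
      exact hC.eq_of_mem_cell hr.1.1 hp hr.2 hpA
  calc ∑ p ∈ C with ∀ i ∉ E, p i ∈ x i, 2 ^ #(E \ supp q p)
      = ∑ p ∈ C with ∀ i ∉ E, p i ∈ x i, #{A ∈ E.powerset | corner x q A ∈ cell c p} :=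
        sum_congr rfl fun p hp =>
          (card_filter_corner_mem_cell hx (hnd p (mem_filter.1 hp).1) (mem_filter.1 hp).2).symm
    _ = ∑ A ∈ E.powerset, #{p ∈ C.filter (fun p => ∀ i ∉ E, p i ∈ x i) |
          corner x q A ∈ cell c p} :=
        sum_card_bipartiteAbove_eq_sum_card_bipartiteBelow fun p A => corner x q A ∈ cell c p
    _ = 2 ^ #E := by rw [sum_congr rfl card_words, sum_const, card_powerset, smul_eq_mul, mul_one]

end Covers

/-! ### Twin pair free covers -/

section

variable [DecidableEq S]

/-- A twin pair free code covering the word `q` without containing it, all of whose words are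
needed to cover `q`. -/
structure TwinFreeCover (c : S → S) (C : Finset (Fin d → S)) (q : Fin d → S) : Prop where
  code : IsCode c C
  not_dich : ∀ p ∈ C, ¬ Dich c p q
  cover : cell c q ⊆ region c C
  twinPairFree : TwinPairFree c C
  notMem : q ∉ C

/-- The words of `C` which differ from `q` at exactly `k` positions. -/
def sphere (C : Finset (Fin d → S)) (q : Fin d → S) (k : ℕ) : Finset (Fin d → S) :=
  C.filter fun p => #(supp q p) = k

lemma mem_sphere {C : Finset (Fin d → S)} {q p : Fin d → S} {k : ℕ} :
    p ∈ sphere C q k ↔ p ∈ C ∧ #(supp q p) = k :=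
  mem_filter

lemma eq_of_supp_eq_empty {q p : Fin d → S} (h : supp q p = ∅) : p = q :=
  funext fun _ => notMem_supp.1 (h ▸ notMem_empty _)

lemma pair_eq_of_card_eq_two {A : Finset (Fin d)} (hA : #A = 2) {i j : Fin d} (hi : i ∈ A)
    (hj : j ∈ A) (hij : i ≠ j) : A = {i, j} :=
  (eq_of_subset_of_card_le (insert_subset hi (singleton_subset_iff.2 hj))
    (by rw [hA, card_pair hij])).symm

variable [IsComplementation c]

open scoped Classical in
lemma even_card_subset_supp {C : Finset (Fin d → S)} {q : Fin d → S} (hC : IsCode c C)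
    (hnd : ∀ p ∈ C, ¬ Dich c p q) (hcov : cell c q ⊆ region c C) {x : Fin d → Selection c}
    (hx : x ∈ cell c q) {E : Finset (Fin d)} (hE : E.Nonempty) :
    Even #{p ∈ C | (∀ i ∉ E, p i ∈ x i) ∧ E ⊆ supp q p} := by
  have hsum := sum_two_pow_card_sdiff_supp hC hnd hcov hx E
  have heven : Even (2 ^ #E) := (even_two).pow_of_ne_zero hE.card_pos.ne'
  rw [← hsum, even_sum_iff_even_card_odd, filter_filter] at heven
  convert heven using 5
  rw [← Nat.not_even_iff_odd, Nat.even_pow, not_and_not_right, imp_iff_right even_two, card_eq_zero,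
    sdiff_eq_empty_iff_subset]

namespace TwinFreeCover

variable {C : Finset (Fin d → S)} {q : Fin d → S}

lemma exists_conflict (h : TwinFreeCover c C q) {p r : Fin d → S} (hp : p ∈ C) (hr : r ∈ C)
    (hne : p ≠ r) : ∃ i ∈ supp q p, i ∈ supp q r ∧ p i = c (r i) := by
  obtain ⟨i, hi⟩ := h.code p hp r hr hne
  refine ⟨i, mem_supp.2 fun hpi => h.not_dich r hr ?_, mem_supp.2 fun hri => h.not_dich p hp ?_, hi⟩
  · exact ⟨i, by rw [← hpi, hi, compl_compl_letter c]⟩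
  · exact ⟨i, by rw [hi, hri]⟩

omit [DecidableEq S] in
lemma eq_of_forall_ne (h : TwinFreeCover c C q) {p r : Fin d → S} (hp : p ∈ C) (hr : r ∈ C)
    {k : Fin d} (hpr : ∀ j, j ≠ k → p j = r j) : p = r := by
  by_contra hne
  obtain ⟨i, hi⟩ := h.code p hp r hr hne
  obtain rfl : i = k := by
    by_contra hik
    exact ne_compl (r i) (hpr i hik ▸ hi)
  exact h.twinPairFree p hp r hr i ⟨hi, hpr⟩

lemma eq_of_supp_eq_pair (h : TwinFreeCover c C q) {p r : Fin d → S} (hp : p ∈ C) (hr : r ∈ C)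
    {i k : Fin d} (hps : supp q p = {i, k}) (hrs : supp q r = {i, k}) (hi : p i = r i) :
    p = r := by
  refine h.eq_of_forall_ne hp hr (k := k) fun j hjk => ?_
  rcases eq_or_ne j i with rfl | hji
  · exact hi
  · have hj : j ∉ ({i, k} : Finset (Fin d)) := by
      simp only [mem_insert, mem_singleton, hji, hjk, or_self, not_false_eq_true]
    exact (notMem_supp.1 (hps ▸ hj)).trans (notMem_supp.1 (hrs ▸ hj)).symm

lemma eq_of_card_supp_eq_two (h : TwinFreeCover c C q) {p r : Fin d → S} (hp : p ∈ sphere C q 2)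
    (hr : r ∈ sphere C q 2) {i : Fin d} (hi : i ∈ supp q p) (hpr : p i = r i) : p = r := by
  by_contra hne
  obtain ⟨hpC, hp2⟩ := mem_sphere.1 hp
  obtain ⟨hrC, hr2⟩ := mem_sphere.1 hr
  obtain ⟨k, hkp, hkr, hk⟩ := h.exists_conflict hpC hrC hne
  have hik : i ≠ k := by
    rintro rfl
    exact ne_compl (r i) (hpr ▸ hk)
  have hir : i ∈ supp q r := mem_supp.2 fun h => mem_supp.1 hi (hpr.trans h)
  exact hne (h.eq_of_supp_eq_pair hpC hrC (pair_eq_of_card_eq_two hp2 hi hkp hik)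
    (pair_eq_of_card_eq_two hr2 hir hkr hik) hpr)

lemma exists_supp_eq_pairs (h : TwinFreeCover c C q) {x y z : Fin d → S} (hx : x ∈ sphere C q 2)
    (hy : y ∈ sphere C q 2) (hz : z ∈ sphere C q 2) (hxy : x ≠ y) (hxz : x ≠ z) (hyz : y ≠ z) :
    ∃ i j k, i ≠ j ∧ i ≠ k ∧ j ≠ k ∧ supp q x = {i, j} ∧ supp q y = {i, k} ∧ supp q z = {j, k} ∧
      x i = c (y i) ∧ x j = c (z j) ∧ y k = c (z k) := by
  obtain ⟨hxC, hx2⟩ := mem_sphere.1 hx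
  obtain ⟨hyC, hy2⟩ := mem_sphere.1 hy
  obtain ⟨hzC, hz2⟩ := mem_sphere.1 hz
  obtain ⟨i, hix, hiy, hi⟩ := h.exists_conflict hxC hyC hxy
  obtain ⟨j, hjx, hjz, hj⟩ := h.exists_conflict hxC hzC hxz
  obtain ⟨k, hky, hkz, hk⟩ := h.exists_conflict hyC hzC hyz
  have hij : i ≠ j := by
    rintro rfl
    exact hyz (h.eq_of_card_supp_eq_two hy hz hiy (compl_inj.1 (hi.symm.trans hj)))
  have hik : i ≠ k := by
    rintro rfl
    exact hxz (h.eq_of_card_supp_eq_two hx hz hix (by rw [hi, hk, compl_compl_letter c]))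
  have hjk : j ≠ k := by
    rintro rfl
    exact hxy (h.eq_of_card_supp_eq_two hx hy hjx (hj.trans hk.symm))
  exact ⟨i, j, k, hij, hik, hjk, pair_eq_of_card_eq_two hx2 hix hjx hij,
    pair_eq_of_card_eq_two hy2 hiy hky hik, pair_eq_of_card_eq_two hz2 hjz hkz hjk, hi, hj, hk⟩

/-- `T` consists of the positions of the three pairwise conflicts. -/
lemma exists_triangle (h : TwinFreeCover c C q) {x y z : Fin d → S} (hx : x ∈ sphere C q 2)
    (hy : y ∈ sphere C q 2) (hz : z ∈ sphere C q 2) (hxy : x ≠ y) (hxz : x ≠ z) (hyz : y ≠ z) :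
    ∃ T, #T = 3 ∧ (∀ w ∈ ({x, y, z} : Finset (Fin d → S)), supp q w ⊆ T) ∧
      ∀ w ∈ C, w ∉ ({x, y, z} : Finset (Fin d → S)) → T ⊆ supp q w := by
  obtain ⟨i, j, k, hij, hik, hjk, hxs, hys, hzs, hi, hj, hk⟩ :=
    h.exists_supp_eq_pairs hx hy hz hxy hxz hyz
  refine ⟨{i, j, k}, card_eq_three.2 ⟨i, j, k, hij, hik, hjk, rfl⟩, fun w hw => ?_,
    fun w hw hwxyz => ?_⟩
  · simp only [mem_insert, mem_singleton] at hw
    rcases hw with rfl | rfl | rfl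
    · grind
    · grind
    · grind
  · simp only [mem_insert, mem_singleton, not_or] at hwxyz
    obtain ⟨a, haw, hax, ha⟩ := h.exists_conflict hw (mem_sphere.1 hx).1 hwxyz.1
    obtain ⟨b, hbw, hby, hb⟩ := h.exists_conflict hw (mem_sphere.1 hy).1 hwxyz.2.1
    obtain ⟨e, hew, hez, he⟩ := h.exists_conflict hw (mem_sphere.1 hz).1 hwxyz.2.2
    rw [hxs, mem_insert, mem_singleton] at hax
    rw [hys, mem_insert, mem_singleton] at hby
    rw [hzs, mem_insert, mem_singleton] at hez
    have compl_ne' := compl_ne (c := c)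
    have compl_compl := compl_compl_letter c
    simp only [insert_subset_iff, singleton_subset_iff]
    grind

lemma card_sphere_two_le (h : TwinFreeCover c C q) : #(sphere C q 2) ≤ 3 := by
  by_contra! hcard
  obtain ⟨W, hW, hW4⟩ := exists_subset_card_eq (show 4 ≤ #(sphere C q 2) from hcard)
  obtain ⟨x, y, z, w, hxy, hxz, hxw, hyz, hyw, hzw, rfl⟩ := card_eq_four.1 hW4
  simp only [insert_subset_iff, singleton_subset_iff] at hW
  obtain ⟨hx, hy, hz, hw⟩ := hW
  obtain ⟨T, hT, -, hTw⟩ := h.exists_triangle hx hy hz hxy hxz hyz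
  have := card_le_card (hTw w (mem_sphere.1 hw).1
    (by simp only [mem_insert, mem_singleton, hxw.symm, hyw.symm, hzw.symm, or_self,
      not_false_eq_true]))
  rw [hT, (mem_sphere.1 hw).2] at this
  omega

omit [IsComplementation c] in
lemma card_supp_pos (h : TwinFreeCover c C q) {p : Fin d → S} (hp : p ∈ C) : 0 < #(supp q p) :=
  card_pos.2 (nonempty_iff_ne_empty.2 fun h0 => h.notMem (eq_of_supp_eq_empty h0 ▸ hp))

lemma sum_eq_two_pow (h : TwinFreeCover c C q) {D : Finset (Fin d)}
    (hD : ∀ p ∈ C, supp q p ⊆ D) : ∑ p ∈ C, 2 ^ #(D \ supp q p) = 2 ^ #D := by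
  classical
  obtain ⟨x, hx⟩ := cell_nonempty (c := c) q
  rw [← sum_two_pow_card_sdiff_supp h.code h.not_dich h.cover hx D, filter_true_of_mem]
  intro p hp i hi
  rw [notMem_supp.1 fun hi' => hi (hD p hp hi')]
  exact hx i

/-- A word which differs from `q` at a single position halves the cell of `q`: the other words
cover one half and `p` the other one. -/
lemma erase (h : TwinFreeCover c C q) {p : Fin d → S} (hp : p ∈ C) {i : Fin d}
    (hi : supp q p = {i}) :
    C.erase p ⊆ layer C i (c (p i)) ∧
      TwinFreeCover c (C.erase p) (Function.update q i (c (p i))) := by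
  have hsub : C.erase p ⊆ layer C i (c (p i)) := fun r hr => by
    obtain ⟨hrp, hr⟩ := mem_erase.1 hr
    obtain ⟨j, -, hj, hj'⟩ := h.exists_conflict hr hp hrp
    rw [hi, mem_singleton] at hj
    exact mem_layer.2 ⟨hr, hj ▸ hj'⟩
  have hpi : p i ≠ q i := mem_supp.1 (hi ▸ mem_singleton_self i)
  have hpi' : p i ≠ c (q i) := fun h' => h.not_dich p hp ⟨i, h'⟩
  have hpj (j) (hj : j ≠ i) : p j = q j := notMem_supp.1 (by rwa [hi, mem_singleton])
  refine ⟨hsub, h.code.mono (erase_subset p C), ?_, fun x hx => ?_, ?_, fun hmem => ?_⟩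
  · rintro r hr ⟨j, hj⟩
    rcases eq_or_ne j i with rfl | hji
    · rw [Function.update_self, (mem_layer.1 (hsub hr)).2] at hj
      exact ne_compl _ hj
    · rw [Function.update_of_ne hji] at hj
      exact h.not_dich r (mem_of_mem_erase hr) ⟨j, hj⟩
  · obtain ⟨τ, hqτ, hpτ⟩ := exists_mem_mem (c := c) (s := q i) (t := c (p i))
      (by rw [compl_compl_letter c]; exact hpi.symm)
    have hxq : Function.update x i τ ∈ cell c q :=
      (Function.forall_update_iff x fun j σ => q j ∈ σ).2 ⟨hqτ, (mem_cell_update.1 hx).2⟩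
    obtain ⟨r, hr, hxr⟩ := mem_region.1 (h.cover hxq)
    obtain ⟨hri, hrx⟩ := (Function.forall_update_iff x fun j σ => r j ∈ σ).1 hxr
    have hr' : r ∈ C.erase p := mem_erase.2 ⟨fun hrp => compl_mem_iff.1 hpτ (hrp ▸ hri), hr⟩
    refine mem_region.2 ⟨r, hr', fun j => ?_⟩
    rcases eq_or_ne j i with rfl | hji
    · rw [(mem_layer.1 (hsub hr')).2]
      exact (mem_cell_update.1 hx).1
    · exact hrx j hji
  · exact fun v hv w hw => h.twinPairFree v (mem_of_mem_erase hv) w (mem_of_mem_erase hw)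
  · refine h.twinPairFree p hp _ (mem_of_mem_erase hmem) i ⟨?_, fun j hj => ?_⟩
    · rw [Function.update_self, compl_compl_letter c]
    · rw [Function.update_of_ne hj, hpj j hj]

omit [IsComplementation c] in
lemma exists_supp_eq_singleton_or (h : TwinFreeCover c C q) :
    (∃ p ∈ C, ∃ i, supp q p = {i}) ∨ ∀ p ∈ C, 2 ≤ #(supp q p) := by
  refine or_iff_not_imp_left.2 fun hnone p hp => ?_
  have h1 : #(supp q p) ≠ 1 := fun h1 => hnone ⟨p, hp, card_eq_one.1 h1⟩
  have := h.card_supp_pos hp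
  omega

lemma five_le_card_of_two_le (h : TwinFreeCover c C q) (h2 : ∀ p ∈ C, 2 ≤ #(supp q p)) :
    5 ≤ #C := by
  have weight_mul (p : Fin d → S) : 2 ^ #(univ \ supp q p) * 2 ^ #(supp q p) = 2 ^ d := by
    rw [← pow_add, card_sdiff_add_card_eq_card (subset_univ _), card_univ, Fintype.card_fin]
  have weight_le (p) (hp : p ∈ C) : 2 ^ #(univ \ supp q p) * 4 ≤ 2 ^ d := by
    rw [← weight_mul p]
    exact Nat.mul_le_mul_left _ (Nat.pow_le_pow_right two_pos (h2 p hp))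
  have hsum : ∑ p ∈ C, 2 ^ #(univ \ supp q p) * 4 = 4 * 2 ^ d := by
    rw [← sum_mul, h.sum_eq_two_pow fun p _ => subset_univ _, card_univ, Fintype.card_fin, mul_comm]
  by_contra! hlt
  have weight_eq : ∀ p ∈ C, 2 ^ #(univ \ supp q p) * 4 = 2 ^ d := by
    refine (sum_eq_sum_iff_of_le weight_le).1 (le_antisymm (sum_le_sum weight_le) ?_)
    rw [hsum, sum_const, smul_eq_mul]
    exact Nat.mul_le_mul_right _ (by omega)
  have hsphere : sphere C q 2 = C := filter_true_of_mem fun p hp => by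
    have h4 : 2 ^ #(supp q p) = 2 ^ 2 :=
      Nat.eq_of_mul_eq_mul_left (pow_pos two_pos _) ((weight_mul p).trans (weight_eq p hp).symm)
    exact Nat.pow_right_injective le_rfl h4
  have hcard : #C = 4 := by
    rw [sum_congr rfl weight_eq, sum_const, smul_eq_mul] at hsum
    exact Nat.eq_of_mul_eq_mul_right (pow_pos two_pos d) hsum
  have := h.card_sphere_two_le
  rw [hsphere] at this
  omega

omit [DecidableEq S] in
theorem five_le_card (h : TwinFreeCover c C q) : 5 ≤ #C := by
  classical
  induction hn : #C generalizing C q with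
  | zero =>
    obtain ⟨x, hx⟩ := cell_nonempty (c := c) q
    obtain ⟨p, hp, -⟩ := mem_region.1 (h.cover hx)
    exact absurd hp (card_eq_zero.1 hn ▸ notMem_empty p)
  | succ n ih =>
    rcases h.exists_supp_eq_singleton_or with ⟨p, hp, i, hi⟩ | h2
    · have := ih (h.erase hp hi).2 (by rw [card_erase_of_mem hp, hn, Nat.add_sub_cancel])
      omega
    · exact hn ▸ h.five_le_card_of_two_le h2

lemma eq_of_card_supp_eq_three (h : TwinFreeCover c C q) {p r : Fin d → S} (hp : p ∈ C)
    (hr : r ∈ C) (hsupp : supp q p = supp q r) (hp3 : #(supp q p) = 3) {i j : Fin d}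
    (hi : i ∈ supp q p) (hj : j ∈ supp q p) (hij : i ≠ j) (hpi : p i = r i) (hpj : p j = r j) :
    p = r := by
  have h1 : #(((supp q p).erase i).erase j) = 1 := by
    rw [card_erase_of_mem (mem_erase.2 ⟨hij.symm, hj⟩), card_erase_of_mem hi, hp3]
  obtain ⟨k, hk⟩ := card_eq_one.1 h1
  refine h.eq_of_forall_ne hp hr (k := k) fun l hl => ?_
  by_cases hlp : l ∈ supp q p
  · have hlk : l ∉ ((supp q p).erase i).erase j := by rwa [hk, mem_singleton]
    simp only [mem_erase, hlp, and_true, not_and_or, not_not] at hlk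
    rcases hlk with rfl | rfl <;> assumption
  · exact (notMem_supp.1 hlp).trans (notMem_supp.1 (hsupp ▸ hlp)).symm

lemma exists_common_conflict (h : TwinFreeCover c C q) {x w w' : Fin d → S}
    (hx : x ∈ sphere C q 2) (hw : w ∈ C) (hw' : w' ∈ C) (hxw : x ≠ w) (hxw' : x ≠ w') {m : Fin d}
    (hm : m ∈ supp q x) (hmw : x m ≠ c (w m)) (hmw' : x m ≠ c (w' m)) :
    ∃ a ∈ supp q x, a ∈ supp q w ∧ a ≠ m ∧ x a = c (w a) ∧ w a = w' a := by
  obtain ⟨hxC, hx2⟩ := mem_sphere.1 hx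
  obtain ⟨a, hax, haw, ha⟩ := h.exists_conflict hxC hw hxw
  obtain ⟨a', hax', -, ha'⟩ := h.exists_conflict hxC hw' hxw'
  have ham : a ≠ m := fun ham => hmw (ham ▸ ha)
  have ham' : a' ≠ m := fun ham => hmw' (ham ▸ ha')
  rw [pair_eq_of_card_eq_two hx2 hm hax ham.symm, mem_insert, mem_singleton] at hax'
  obtain rfl : a' = a := hax'.resolve_left ham'
  exact ⟨a', hax, haw, ham, ha, compl_inj.1 (ha.symm.trans ha')⟩

/-- If `m` is in the support of `x` only, then `x` and `y` conflict with both `w` and `w'` at two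
positions, so that `w` and `w'` agree at these and form a twin pair. -/
lemma supp_subset_of_supp_eq (h : TwinFreeCover c C q) {w w' x y : Fin d → S} (hw : w ∈ C)
    (hw' : w' ∈ C) (hne : w ≠ w') (hsupp : supp q w = supp q w') (hw3 : #(supp q w) = 3)
    (hx : x ∈ sphere C q 2) (hy : y ∈ sphere C q 2) (hxy : x ≠ y) : supp q x ⊆ supp q w := by
  by_contra hsub
  obtain ⟨m, hmx, hmw⟩ := not_subset.1 hsub
  have hmw' : m ∉ supp q w' := hsupp ▸ hmw
  have ne_of_supp {p r : Fin d → S} (hp : p ∈ sphere C q 2) (hr : supp q r = supp q w) :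
      p ≠ r := fun hpr => by
    have := (mem_sphere.1 hp).2
    rw [hpr, hr, hw3] at this
    omega
  have ne_compl_of_notMem {p r : Fin d → S} (hp : p ∈ sphere C q 2) (hr : m ∉ supp q r) :
      p m ≠ c (r m) := fun hpr =>
    h.not_dich p (mem_sphere.1 hp).1 ⟨m, notMem_supp.1 hr ▸ hpr⟩
  obtain ⟨a, hax, haw, ham, ha, hwa⟩ := h.exists_common_conflict hx hw hw' (ne_of_supp hx rfl)
    (ne_of_supp hx hsupp.symm) hmx (ne_compl_of_notMem hx hmw) (ne_compl_of_notMem hx hmw')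
  have hconflict {n : Fin d} := h.exists_common_conflict (m := n) hy hw hw' (ne_of_supp hy rfl)
    (ne_of_supp hy hsupp.symm)
  obtain ⟨g, hgw, hga, hwg⟩ : ∃ g ∈ supp q w, g ≠ a ∧ w g = w' g := by
    by_cases hmy : m ∈ supp q y
    · obtain ⟨g, -, hgw, -, hg, hwg⟩ :=
        hconflict hmy (ne_compl_of_notMem hy hmw) (ne_compl_of_notMem hy hmw')
      refine ⟨g, hgw, ?_, hwg⟩
      rintro rfl
      exact hxy (h.eq_of_card_supp_eq_two hx hy hax (ha.trans hg.symm))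
    · obtain ⟨k, hkx, hky, hk⟩ := h.exists_conflict (mem_sphere.1 hx).1 (mem_sphere.1 hy).1 hxy
      rw [pair_eq_of_card_eq_two (mem_sphere.1 hx).2 hmx hax ham.symm, mem_insert,
        mem_singleton] at hkx
      obtain rfl : k = a := hkx.resolve_left fun hkm => hmy (hkm ▸ hky)
      have hyk : y k = w k := compl_inj.1 (hk.symm.trans ha)
      obtain ⟨g, -, hgw, hgk, -, hwg⟩ := hconflict hky (hyk ▸ ne_compl (y k))
        (hwa ▸ hyk ▸ ne_compl (y k))
      exact ⟨g, hgw, hgk, hwg⟩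
  exact hne (h.eq_of_card_supp_eq_three hw hw' hsupp hw3 hgw haw hga hwg hwa)

section FourPositions

variable {D : Finset (Fin d)}

lemma card_sphere_add (h : TwinFreeCover c C q) (hD : #D = 4) (hs : ∀ p ∈ C, supp q p ⊆ D)
    (h2 : ∀ p ∈ C, 2 ≤ #(supp q p)) :
    #(sphere C q 2) + #(sphere C q 3) + #(sphere C q 4) = #C ∧
      4 * #(sphere C q 2) + 2 * #(sphere C q 3) + #(sphere C q 4) = 16 := by
  have hmap : ∀ p ∈ C, #(supp q p) ∈ ({2, 3, 4} : Finset ℕ) := fun p hp => by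
    have h4 := card_le_card (hs p hp)
    have := h2 p hp
    simp only [mem_insert, mem_singleton]
    omega
  have weight (k : ℕ) : ∑ p ∈ C with #(supp q p) = k, 2 ^ #(D \ supp q p) =
      #(sphere C q k) * 2 ^ (4 - k) := by
    refine sum_const_nat fun p hp => ?_
    rw [card_sdiff_of_subset (hs p (mem_filter.1 hp).1), hD, (mem_filter.1 hp).2]
  have hcard := card_eq_sum_card_fiberwise hmap
  have hsum := h.sum_eq_two_pow hs
  rw [← sum_fiberwise_of_maps_to hmap] at hsum
  simp only [weight, hD] at hsum
  rw [sum_insert (by decide), sum_insert (by decide), sum_singleton] at hsum hcard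
  change _ = #(sphere C q 2) + (#(sphere C q 3) + #(sphere C q 4)) at hcard
  omega

lemma exists_card_layer_ge (h : TwinFreeCover c C q) (hD : #D = 4)
    (h3 : #(sphere C q 2) = 3) : ∃ l ∈ D, 3 + #(sphere C q 3) ≤ #(layer C l (q l)) := by
  obtain ⟨x, y, z, hxy, hxz, hyz, hxyz⟩ := card_eq_three.1 h3
  have hmem : ({x, y, z} : Finset _) ⊆ sphere C q 2 := hxyz.ge
  simp only [insert_subset_iff, singleton_subset_iff] at hmem
  obtain ⟨T, hT, hsub, hsup⟩ := h.exists_triangle hmem.1 hmem.2.1 hmem.2.2 hxy hxz hyz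
  obtain ⟨l, hl, hlT⟩ := exists_mem_notMem_of_card_lt_card (show #T < #D by omega)
  refine ⟨l, hl, ?_⟩
  have hdisj : Disjoint (sphere C q 2) (sphere C q 3) :=
    disjoint_filter.2 fun p _ h2 h3 => absurd (h2.symm.trans h3) (by decide)
  have hcard : #(sphere C q 2 ∪ sphere C q 3) = 3 + #(sphere C q 3) := by
    rw [card_union_of_disjoint hdisj, h3]
  refine hcard.symm.le.trans (card_le_card fun w hw => mem_layer.2 ?_)
  rcases mem_union.1 hw with hw | hw
  · exact ⟨(mem_sphere.1 hw).1, notMem_supp.1 fun hlw => hlT (hsub w (hxyz ▸ hw) hlw)⟩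
  · obtain ⟨hwC, hw3⟩ := mem_sphere.1 hw
    have hTw := hsup w hwC (hxyz ▸ disjoint_right.1 hdisj hw)
    refine ⟨hwC, notMem_supp.1 fun hlw => hlT ?_⟩
    rwa [eq_of_subset_of_card_le hTw (by rw [hT, hw3])]

lemma even_card_supp_eq_erase (h : TwinFreeCover c C q) (hs : ∀ p ∈ C, supp q p ⊂ D) {m : Fin d}
    (hm : m ∈ D) (hD : (D.erase m).Nonempty) : Even #{p ∈ C | supp q p = D.erase m} := by
  classical
  obtain ⟨x, hx⟩ := cell_nonempty (c := c) q
  convert even_card_subset_supp h.code h.not_dich h.cover hx hD using 2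
  refine filter_congr fun p hp => ⟨fun hpm => ⟨fun i hi => ?_, hpm.ge⟩, fun hpm => ?_⟩
  · rw [notMem_supp.1 (show i ∉ supp q p from hpm ▸ hi)]
    exact hx i
  · refine (eq_of_subset_of_card_le hpm.2 ?_).symm
    rw [card_erase_of_mem hm]
    exact Nat.le_sub_one_of_lt (card_lt_card (hs p hp))

lemma four_le_card_layer (h : TwinFreeCover c C q) (hD : #D = 4) (hs : ∀ p ∈ C, supp q p ⊂ D)
    (h2 : 1 < #(sphere C q 2)) (h3 : 0 < #(sphere C q 3)) :
    ∃ m ∈ D, 4 ≤ #(layer C m (q m)) := by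
  obtain ⟨x, hx, y, hy, hxy⟩ := one_lt_card.1 h2
  obtain ⟨w, hw⟩ := card_pos.1 h3
  obtain ⟨hwC, hw3⟩ := mem_sphere.1 hw
  obtain ⟨m, hm, hmw⟩ := exists_of_ssubset (hs w hwC)
  have hws : supp q w = D.erase m :=
    eq_of_subset_of_card_le (subset_erase.2 ⟨(hs w hwC).1, hmw⟩)
      (by rw [card_erase_of_mem hm, hD, hw3])
  have hmem : w ∈ C.filter fun p => supp q p = D.erase m := mem_filter.2 ⟨hwC, hws⟩
  have heven := h.even_card_supp_eq_erase hs hm (card_pos.1 (by rw [← hws, hw3]; decide))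
  obtain ⟨w', hw', hne⟩ := exists_mem_ne (s := {p ∈ C | supp q p = D.erase m})
    (by have := card_pos.2 ⟨w, hmem⟩; grind) w
  obtain ⟨hwC', hws'⟩ := mem_filter.1 hw'
  have hww' : supp q w = supp q w' := hws.trans hws'.symm
  refine ⟨m, hm, ?_⟩
  have hsub : {x, y, w, w'} ⊆ layer C m (q m) := by
    have hxs := h.supp_subset_of_supp_eq hwC hwC' hne.symm hww' hw3 hx hy hxy
    have hys := h.supp_subset_of_supp_eq hwC hwC' hne.symm hww' hw3 hy hx hxy.symm
    simp only [insert_subset_iff, singleton_subset_iff, mem_layer, ← notMem_supp, ← hww']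
    exact ⟨⟨(mem_sphere.1 hx).1, fun hmx => hmw (hxs hmx)⟩,
      ⟨(mem_sphere.1 hy).1, fun hmy => hmw (hys hmy)⟩, ⟨hwC, hmw⟩, hwC', hmw⟩
  have hne23 {u v} (hu : u ∈ sphere C q 2) (hv : supp q v = supp q w) : u ≠ v := by
    rintro rfl
    have := (mem_sphere.1 hu).2
    rw [hv, hw3] at this
    omega
  rw [← card_eq_four.2 ⟨x, y, w, w', hxy, hne23 hx rfl, hne23 hx hww'.symm, hne23 hy rfl,
    hne23 hy hww'.symm, hne.symm, rfl⟩]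
  exact card_le_card hsub

theorem seven_le_card (h : TwinFreeCover c C q) (hD : #D = 4) (hs : ∀ p ∈ C, supp q p ⊆ D)
    (hlayer : ∀ i ∈ D, ∀ s, #(layer C i s) + #C ≤ 9) : 7 ≤ #C := by
  rcases h.exists_supp_eq_singleton_or with ⟨p, hp, i, hi⟩ | h2
  · obtain ⟨hsub, hcover⟩ := h.erase hp hi
    have hiD : i ∈ D := hs p hp (hi ▸ mem_singleton_self i)
    have := hcover.five_le_card
    have := card_le_card hsub
    have := hlayer i hiD (c (p i))
    rw [card_erase_of_mem hp] at *
    omega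
  · obtain ⟨hcard, hweight⟩ := h.card_sphere_add hD hs h2
    have h3 := h.card_sphere_two_le
    have := h.five_le_card
    by_contra! hlt
    by_cases heq : #(sphere C q 2) = 3
    · obtain ⟨l, hl, hle⟩ := h.exists_card_layer_ge hD heq
      have := hlayer l hl (q l)
      omega
    · have h4 : #(sphere C q 4) = 0 := by omega
      have hss (p) (hp : p ∈ C) : supp q p ⊂ D := (hs p hp).ssubset_of_ne fun hpD =>
        notMem_empty p (card_eq_zero.1 h4 ▸ mem_sphere.2 ⟨hp, hpD ▸ hD⟩)
      obtain ⟨m, hm, hle⟩ := h.four_le_card_layer hD hss (by omega) (by omega)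
      have := hlayer m hm (q m)
      omega

end FourPositions

end TwinFreeCover

end

/-! ### Gluing away inadmissible letters -/

section

variable [DecidableEq S]

/-- The number of letters of words of `P` which do not belong to the sets `G i` of admissible
letters. Codes with admissible letters are reached by gluing and cutting through a decrease of
this number. -/
def badness (G : Fin d → Finset S) (P : Finset (Fin d → S)) : ℕ :=
  ∑ p ∈ P, #{i | p i ∉ G i}

section Badness

variable {G : Fin d → Finset S}

lemma badness_union_le (A B : Finset (Fin d → S)) :
    badness G (A ∪ B) ≤ badness G A + badness G B := by
  rw [badness, badness, badness, ← sum_union_inter]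
  exact Nat.le_add_right _ _

lemma badness_union {A B : Finset (Fin d → S)} (h : Disjoint A B) :
    badness G (A ∪ B) = badness G A + badness G B :=
  sum_union h

lemma card_update_notMem_lt {p : Fin d → S} {i : Fin d} {t : S} (hp : p i ∉ G i) (ht : t ∈ G i) :
    #{j | Function.update p i t j ∉ G j} < #{j | p j ∉ G j} := by
  refine card_lt_card (ssubset_iff_of_subset (fun j hj => ?_) |>.2
    ⟨i, mem_filter_univ i |>.2 hp, fun hi => ?_⟩)
  · rw [mem_filter_univ] at hj ⊢
    rcases eq_or_ne j i with rfl | hji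
    · exact hp
    · rwa [Function.update_of_ne hji] at hj
  · rw [mem_filter_univ, Function.update_self] at hi
    exact hi ht

lemma badness_setLetter_add_card_le {i : Fin d} {t : S} {B : Finset (Fin d → S)}
    (hB : ∀ b ∈ B, b i ∉ G i) (ht : t ∈ G i) :
    badness G (setLetter i t B) + #B ≤ badness G B := by
  calc badness G (setLetter i t B) + #B
      ≤ ∑ b ∈ B, #{j | Function.update b i t j ∉ G j} + ∑ b ∈ B, 1 := by
        rw [card_eq_sum_ones]
        exact Nat.add_le_add_right (sum_image_le_of_nonneg fun _ _ => Nat.zero_le _) _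
    _ = ∑ b ∈ B, (#{j | Function.update b i t j ∉ G j} + 1) := sum_add_distrib.symm
    _ ≤ badness G B := sum_le_sum fun b hb => card_update_notMem_lt (hB b hb) ht

end Badness

variable [IsComplementation c] {P Q : Finset (Fin d → S)} {G : Fin d → Finset S} {i : Fin d}

lemma IsCode.gc_double_layer (hP : IsCode c P) {u : S}
    (h : GC c (layer P i u) (setLetter i u (layer P i (c u)))) (t : S) :
    GC c P (double c i t (layer P i (c u)) ∪ residue c P i u) := by
  set A := layer P i (c u)
  have hdisjA : Disjoint (layer P i u) A := disjoint_layer (ne_compl u) P i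
  have hdisj : Disjoint (region c (layer P i u)) (region c (A ∪ residue c P i u)) :=
    hP.disjoint_region (layer_subset P i u)
      (union_subset (layer_subset P i (c u)) (residue_subset P i u))
      (disjoint_union_right.2 ⟨hdisjA, disjoint_layer_residue P i u⟩)
  have hself : setLetter i (c u) A = A := setLetter_eq_self fun b hb => (mem_layer.1 hb).2
  have hglue : GC c P (double c i u A ∪ residue c P i u) := by
    rw [double, hself, union_assoc]
    conv_lhs => rw [← layer_union_layer_union_residue (c := c) P i u]
    exact h.union_right hdisj
  refine hglue.trans ((gc_double ((isCodeOn_univ.2 hP).layer i (c u)) u t).union_right ?_)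
  rw [double, hself, region_union, Set.disjoint_union_left, ← h.region_eq]
  rw [region_union, Set.disjoint_union_right] at hdisj
  exact ⟨hdisj.2, hP.disjoint_region (layer_subset P i (c u)) (residue_subset P i u)
    (disjoint_layer_compl_residue P i u)⟩

omit [DecidableEq S] in
lemma notMem_compl (hG : ∀ t ∈ G i, c t ∈ G i) {u : S} (hu : u ∉ G i) : c u ∉ G i :=
  fun h => hu (by have := hG _ h; rwa [compl_compl_letter c] at this)

lemma exists_gc_badness_lt_of_le (hP : IsCode c P) (hG : ∀ t ∈ G i, c t ∈ G i) {t : S}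
    (ht : t ∈ G i) {u : S} (hu : u ∉ G i) (hne : (layer P i (c u)).Nonempty)
    (hle : badness G (layer P i (c u)) ≤ badness G (layer P i u))
    (h : GC c (layer P i u) (setLetter i u (layer P i (c u)))) :
    ∃ R, GC c P R ∧ badness G R < badness G P := by
  refine ⟨_, hP.gc_double_layer h t, ?_⟩
  have hbad : ∀ b ∈ layer P i (c u), b i ∉ G i := fun b hb => by
    rw [(mem_layer.1 hb).2]
    exact notMem_compl hG hu
  have hsplit : badness G P =
      badness G (layer P i u) + (badness G (layer P i (c u)) + badness G (residue c P i u)) := by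
    conv_lhs => rw [← layer_union_layer_union_residue (c := c) P i u]
    rw [badness_union (disjoint_union_right.2 ⟨disjoint_layer (ne_compl u) P i,
      disjoint_layer_residue P i u⟩), badness_union (disjoint_layer_compl_residue P i u)]
  have h1 := badness_setLetter_add_card_le hbad ht
  have h2 := badness_setLetter_add_card_le hbad (hG t ht)
  have h3 := badness_union_le (G := G) (setLetter i t (layer P i (c u)))
    (setLetter i (c t) (layer P i (c u)))
  have h4 := badness_union_le (G := G) (double c i t (layer P i (c u))) (residue c P i u)
  have := hne.card_pos
  rw [double] at h4 ⊢
  omega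

section Transfer

variable (hP : IsCode c P) (hQ : IsCode c Q) (h : region c P = region c Q)
  (hG : ∀ t ∈ G i, c t ∈ G i) (hQG : ∀ q ∈ Q, q i ∈ G i)
include hP hQ h hG hQG

/-- Inadmissible letters cannot be seen from the admissible side, so that the layers of `u` and
`c u` fit together. -/
lemma region_layer_eq_of_notMem {u : S} (hu : u ∉ G i) :
    region c (layer P i u) = region c (setLetter i u (layer P i (c u))) := by
  have hempty : layer Q i u = ∅ := filter_false_of_mem fun q hq hqu => hu (hqu ▸ hQG q hq)
  rw [region_layer_eq hP hQ h fun q hq hqu => notMem_compl hG hu (hqu ▸ hQG q hq), hempty,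
    empty_union]

lemma card_layer_le_card_layer_compl {u : S} (hu : u ∉ G i) :
    #(layer P i u) ≤ #(layer P i (c u)) := by
  have hcode : IsCode c (setLetter i u (layer P i (c u))) :=
    (((isCodeOn_univ.2 hP).layer i (c u)).setLetter (notMem_erase i univ) u).isCode
  rw [(hP.mono (layer_subset P i u)).card_eq_of_region_eq hcode
    (region_layer_eq_of_notMem hP hQ h hG hQG hu)]
  exact card_image_le

lemma two_mul_card_layer_le {u : S} (hu : u ∉ G i) : 2 * #(layer P i u) ≤ #P := by
  have hle := card_layer_le_card_layer_compl hP hQ h hG hQG hu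
  have hcard := card_le_card (union_subset (layer_subset P i u) (layer_subset P i (c u)))
  rw [card_union_of_disjoint (disjoint_layer (ne_compl u) P i)] at hcard
  omega

theorem exists_gc_badness_lt {t : S} (ht : t ∈ G i) {p : Fin d → S} (hp : p ∈ P)
    (hpi : p i ∉ G i)
    (hgc : ∀ u ∉ G i, (layer P i u).Nonempty → ∀ B, IsCode c B →
      region c (layer P i u) = region c B → (∀ b ∈ B, b i = u) → GC c (layer P i u) B) :
    ∃ R, GC c P R ∧ badness G R < badness G P := by
  have hlayer {u : S} (hu : u ∉ G i) (hne : (layer P i u).Nonempty) :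
      GC c (layer P i u) (setLetter i u (layer P i (c u))) := by
    refine hgc u hu hne _ ?_ (region_layer_eq_of_notMem hP hQ h hG hQG hu) fun b hb => ?_
    · exact (((isCodeOn_univ.2 hP).layer i (c u)).setLetter (notMem_erase i univ) u).isCode
    · exact (mem_layer.1 ((layer_setLetter i u _).symm ▸ hb)).2
  have hne : (layer P i (p i)).Nonempty := ⟨p, mem_layer.2 ⟨hp, rfl⟩⟩
  have hne' : (layer P i (c (p i))).Nonempty :=
    card_pos.1 (hne.card_pos.trans_le (card_layer_le_card_layer_compl hP hQ h hG hQG hpi))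
  rcases le_total (badness G (layer P i (c (p i)))) (badness G (layer P i (p i))) with hle | hle
  · exact exists_gc_badness_lt_of_le hP hG ht hpi hne' hle (hlayer hpi hne)
  · refine exists_gc_badness_lt_of_le hP hG ht (notMem_compl hG hpi) ?_ ?_
      (hlayer (notMem_compl hG hpi) hne') <;> rwa [compl_compl_letter c]

end Transfer

lemma IsCode.gc_of_gc_erase (hP : IsCode c P) {p : Fin d → S} (hp : p ∈ P) (hq : p ∈ Q)
    (h : GC c (P.erase p) (Q.erase p)) : GC c P Q := by
  rw [← insert_erase hp, ← insert_erase hq, insert_eq, insert_eq, union_comm {p}, union_comm {p}]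
  refine h.union_right (hP.disjoint_region (erase_subset p P) (singleton_subset_iff.2 hp) ?_)
  rw [disjoint_singleton_right]
  exact notMem_erase p P

end

/-! ### Frames -/

section

variable [DecidableEq S]

/-- The simple code in the directions `E` through the word `v`: the words obtained from `v` by
replacing some of its letters at the positions of `E` by their complements. -/
def frame (c : S → S) (E : Finset (Fin d)) (v : Fin d → S) : Finset (Fin d → S) :=
  Fintype.piFinset fun i => if i ∈ E then {v i, c (v i)} else {v i}

lemma mem_frame {E : Finset (Fin d)} {v w : Fin d → S} :
    w ∈ frame c E v ↔ ∀ i, w i = v i ∨ i ∈ E ∧ w i = c (v i) := by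
  rw [frame, Fintype.mem_piFinset]
  refine forall_congr' fun i => ?_
  split_ifs with hi <;> simp [hi]

lemma self_mem_frame (E : Finset (Fin d)) (v : Fin d → S) : v ∈ frame c E v :=
  mem_frame.2 fun _ => Or.inl rfl

lemma eq_of_mem_frame {E : Finset (Fin d)} {v w : Fin d → S} (hw : w ∈ frame c E v) {i : Fin d}
    (hi : i ∉ E) : w i = v i :=
  (mem_frame.1 hw i).resolve_right fun h => hi h.1

lemma mem_setLetter_of_forall_eq {i : Fin d} {s t : S} {B : Finset (Fin d → S)}
    (hB : ∀ b ∈ B, b i = s) {z : Fin d → S} :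
    z ∈ setLetter i t B ↔ z i = t ∧ Function.update z i s ∈ B := by
  rw [mem_setLetter]
  constructor
  · rintro ⟨b, hb, rfl⟩
    rw [Function.update_self, Function.update_idem, ← hB b hb, Function.update_eq_self]
    exact ⟨rfl, hb⟩
  · rintro ⟨rfl, hz⟩
    exact ⟨_, hz, by rw [Function.update_idem, Function.update_eq_self]⟩

lemma frame_update {E : Finset (Fin d)} {i : Fin d} (hi : i ∈ E) (v : Fin d → S) (t : S) :
    frame c E (Function.update v i t) = double c i t (frame c (E.erase i) v) := by
  have hB : ∀ b ∈ frame c (E.erase i) v, b i = v i :=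
    fun b hb => eq_of_mem_frame hb (notMem_erase i E)
  ext z
  rw [double, mem_union, mem_setLetter_of_forall_eq hB, mem_setLetter_of_forall_eq hB,
    ← or_and_right, mem_frame, mem_frame,
    Function.forall_update_iff v fun j s => z j = s ∨ j ∈ E ∧ z j = c s,
    Function.forall_update_iff z fun j s => s = v j ∨ j ∈ E.erase i ∧ s = c (v j)]
  refine and_congr (by rw [and_iff_right hi]) ?_
  rw [and_iff_right (Or.inl rfl)]
  exact forall₂_congr fun j hj => by rw [mem_erase, and_iff_right hj]

section

variable [IsComplementation c]

lemma card_frame (E : Finset (Fin d)) (v : Fin d → S) : #(frame c E v) = 2 ^ #E := by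
  have hcard (i) : #(if i ∈ E then ({v i, c (v i)} : Finset S) else {v i}) =
      if i ∈ E then 2 else 1 := by
    split_ifs
    exacts [card_pair (ne_compl (v i)), card_singleton _]
  simp only [frame, Fintype.card_piFinset, hcard, prod_ite_mem, univ_inter, prod_const]

lemma isCodeOn_frame (E : Finset (Fin d)) (v : Fin d → S) : IsCodeOn c E (frame c E v) := by
  intro w hw w' hw' hne
  obtain ⟨i, hi⟩ := Function.ne_iff.1 hne
  rcases mem_frame.1 hw i with h | ⟨hiE, h⟩ <;> rcases mem_frame.1 hw' i with h' | ⟨hiE', h'⟩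
  · exact absurd (h.trans h'.symm) hi
  · exact ⟨i, hiE', by rw [h, h', compl_compl_letter c]⟩
  · exact ⟨i, hiE, by rw [h, h']⟩
  · exact absurd (h.trans h'.symm) hi

lemma isCode_frame (E : Finset (Fin d)) (v : Fin d → S) : IsCode c (frame c E v) :=
  (isCodeOn_frame E v).isCode

omit [DecidableEq S] [IsComplementation c] in
lemma region_eq_of_card_eq_two_pow {E : Finset (Fin d)} {A B : Finset (Fin d → S)}
    (hA : IsCodeOn c E A) (hB : IsCodeOn c E B) (hAcard : #A = 2 ^ #E) (hBcard : #B = 2 ^ #E)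
    {o : Fin d → S} (hAo : ∀ a ∈ A, ∀ i ∉ E, a i = o i) (hBo : ∀ b ∈ B, ∀ i ∉ E, b i = o i) :
    region c A = region c B := by
  have key {A B : Finset (Fin d → S)} (hB : IsCodeOn c E B) (hBcard : #B = 2 ^ #E)
      (hAo : ∀ a ∈ A, ∀ i ∉ E, a i = o i) (hBo : ∀ b ∈ B, ∀ i ∉ E, b i = o i) :
      region c A ⊆ region c B := fun x hx => by
    obtain ⟨a, ha, hxa⟩ := mem_region.1 hx
    obtain ⟨b, hb, hxb⟩ := hB.exists_forall_mem hBcard x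
    refine mem_region.2 ⟨b, hb, fun i => ?_⟩
    by_cases hi : i ∈ E
    · exact hxb i hi
    · rw [hBo b hb i hi, ← hAo a ha i hi]
      exact hxa i
  exact (key hB hBcard hAo hBo).antisymm (key hA hAcard hBo hAo)

lemma gc_frame_update {E : Finset (Fin d)} {i : Fin d} (hi : i ∈ E) (v : Fin d → S) (t : S) :
    GC c (frame c E v) (frame c E (Function.update v i t)) := by
  conv_lhs => rw [← Function.update_eq_self i v]
  rw [frame_update hi, frame_update hi]
  exact gc_double ((isCodeOn_frame (E.erase i) v).mono (erase_subset_erase i (subset_univ E))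
    Subset.rfl) _ _

lemma gc_frame {E : Finset (Fin d)} {v w : Fin d → S} (h : ∀ i ∉ E, v i = w i) :
    GC c (frame c E v) (frame c E w) := by
  suffices ∀ T : Finset (Fin d), GC c (frame c E v) (frame c E (T.piecewise w v)) from
    piecewise_univ w v ▸ this univ
  intro T
  induction T using Finset.induction_on with
  | empty => rw [piecewise_empty]; exact GC.refl _
  | insert i T hi ih =>
    rw [piecewise_insert]
    by_cases hiE : i ∈ E
    · exact ih.trans (gc_frame_update hiE _ _)
    · rwa [← h i hiE, Function.update_eq_self_iff.2 (piecewise_eq_of_notMem T w v hi).symm]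

lemma IsCode.gc_frame_of_gc_erase {V : Finset (Fin d → S)} (hV : IsCode c V)
    {E : Finset (Fin d)} {s : Fin d → S} (h : region c V = region c (frame c E s))
    (herase : ∀ v ∈ V, region c (V.erase v) = region c ((frame c E v).erase v) →
      GC c (V.erase v) ((frame c E v).erase v)) : GC c V (frame c E s) := by
  obtain ⟨x, hx⟩ := cell_nonempty (c := c) s
  have hxV : x ∈ region c V := by
    rw [h]
    exact mem_region.2 ⟨s, self_mem_frame E s, hx⟩
  obtain ⟨v, hv, -⟩ := mem_region.1 hxV
  have hvs : GC c (frame c E v) (frame c E s) :=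
    gc_frame fun i hi => forall_eq_of_region_eq h (fun w hw => eq_of_mem_frame hw hi) v hv
  refine (hV.gc_of_gc_erase hv (self_mem_frame E v) (herase v hv ?_)).trans hvs
  rw [hV.region_erase hv, (isCode_frame E v).region_erase (self_mem_frame E v), h, hvs.region_eq]

end

section

variable {E : Finset (Fin d)} {P : Finset (Fin d → S)}

lemma IsCodeOn.card_le_sum_card_layer (hP : IsCodeOn c E P) {p : Fin d → S} (hp : p ∈ P) :
    #P ≤ 1 + ∑ i ∈ E, #(PolyboxPaper.layer P i (c (p i))) := by
  have hcover : P.erase p ⊆ E.biUnion fun i => PolyboxPaper.layer P i (c (p i)) := fun w hw => by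
    obtain ⟨hwp, hwP⟩ := mem_erase.1 hw
    obtain ⟨i, hi, hwi⟩ := hP w hwP p hp hwp
    exact mem_biUnion.2 ⟨i, hi, mem_layer.2 ⟨hwP, hwi⟩⟩
  have hcard := (card_le_card hcover).trans card_biUnion_le
  rw [card_erase_of_mem hp] at hcard
  omega

lemma IsCodeOn.card_ne_two_mul_card_add_one [IsComplementation c] (hP : IsCodeOn c E P)
    (hE : E.Nonempty) (hlayer : ∀ i ∈ E, ∀ s, #(PolyboxPaper.layer P i s) ≤ 2) :
    #P ≠ 2 * #E + 1 := by
  intro hcard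
  have compl_layer (p) (hp : p ∈ P) (i) (hi : i ∈ E) :
      #(PolyboxPaper.layer P i (c (p i))) = 2 := by
    by_contra hne
    have hlt : ∑ i ∈ E, #(PolyboxPaper.layer P i (c (p i))) < ∑ _i ∈ E, 2 :=
      sum_lt_sum (fun i hi => hlayer i hi _) ⟨i, hi, (hlayer i hi _).lt_of_ne hne⟩
    have := hP.card_le_sum_card_layer hp
    rw [sum_const, smul_eq_mul] at hlt
    omega
  obtain ⟨i, hi⟩ := hE
  have layer_of_mem (s) (hs : s ∈ P.image (· i)) : #(PolyboxPaper.layer P i s) = 2 := by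
    obtain ⟨p, hp, rfl⟩ := mem_image.1 hs
    obtain ⟨r, hr⟩ := card_pos.1 (zero_lt_two.trans_eq (compl_layer p hp i hi).symm)
    obtain ⟨hrP, hri⟩ := mem_layer.1 hr
    rw [← compl_layer r hrP i hi, hri, compl_compl_letter c]
  have heven : #P = #(P.image (· i)) * 2 :=
    (card_eq_sum_card_image (· i) P).trans (sum_const_nat layer_of_mem)
  omega

end

end

/-! ### Codes with at most nine words -/

section

variable [DecidableEq S] {P Q : Finset (Fin d → S)}

/-- The positions at which the words of `P` do not all have the same letter. -/
def active (P : Finset (Fin d → S)) : Finset (Fin d) := {i | ∃ p ∈ P, ∃ q ∈ P, p i ≠ q i}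

lemma notMem_active {i : Fin d} : i ∉ active P ↔ ∀ p ∈ P, ∀ q ∈ P, p i = q i := by
  simp only [active, mem_filter_univ, not_exists, not_and, not_not]

lemma active_mono (h : P ⊆ Q) : active P ⊆ active Q := fun i hi => by
  by_contra hiQ
  rw [notMem_active] at hiQ
  exact notMem_active.2 (fun p hp q hq => hiQ p (h hp) q (h hq)) hi

/-- The letters of the words of `Q` at position `i`, with their complements. -/
def letters (c : S → S) (Q : Finset (Fin d → S)) (i : Fin d) : Finset S :=
  Q.image (fun q => q i) ∪ Q.image fun q => c (q i)

lemma mem_letters {i : Fin d} {s : S} :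
    s ∈ letters c Q i ↔ ∃ q ∈ Q, q i = s ∨ c (q i) = s := by
  simp only [letters, mem_union, mem_image, ← exists_or, ← and_or_left]

lemma mem_letters_self {q : Fin d → S} (hq : q ∈ Q) (i : Fin d) : q i ∈ letters c Q i :=
  mem_letters.2 ⟨q, hq, Or.inl rfl⟩

/-- The words of `P` which are not dichotomous to `q`, that is, whose boxes meet the box
of `q`. -/
def hitting (c : S → S) (P : Finset (Fin d → S)) (q : Fin d → S) : Finset (Fin d → S) :=
  {p ∈ P | ¬ Dich c p q}

lemma mem_hitting {p q : Fin d → S} : p ∈ hitting c P q ↔ p ∈ P ∧ ¬ Dich c p q :=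
  mem_filter

lemma hitting_subset (q : Fin d → S) : hitting c P q ⊆ P := filter_subset _ _

variable [IsComplementation c]

lemma compl_mem_letters (i : Fin d) : ∀ s ∈ letters c Q i, c s ∈ letters c Q i := by
  intro s hs
  obtain ⟨q, hq, rfl | rfl⟩ := mem_letters.1 hs
  · exact mem_letters.2 ⟨q, hq, Or.inr rfl⟩
  · rw [compl_compl_letter c]
    exact mem_letters_self hq i

lemma active_subset_of_region_eq (h : region c P = region c Q) : active P ⊆ active Q := by
  intro i hi
  by_contra hiQ
  rw [notMem_active] at hiQ
  refine notMem_active.2 (fun p hp p' hp' => ?_) hi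
  rcases Q.eq_empty_or_nonempty with rfl | ⟨q, hq⟩
  · exact forall_eq_of_region_eq h (s := p' i) (fun q hq => absurd hq (notMem_empty q)) p hp
  · have heq := forall_eq_of_region_eq h fun r hr => hiQ r hr q hq
    rw [heq p hp, heq p' hp']

lemma active_eq_of_region_eq (h : region c P = region c Q) : active P = active Q :=
  (active_subset_of_region_eq h).antisymm (active_subset_of_region_eq h.symm)

lemma IsCode.isCodeOn_active (hP : IsCode c P) : IsCodeOn c (active P) P := by
  intro p hp q hq hpq
  obtain ⟨i, hi⟩ := hP p hp q hq hpq
  refine ⟨i, ?_, hi⟩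
  by_contra hiP
  exact ne_compl (c := c) (q i) (by rw [← hi, notMem_active.1 hiP p hp q hq])

lemma exists_gc_card_hitting_lt {G : Fin d → Finset S} (hG : ∀ i, ∀ s ∈ G i, c s ∈ G i)
    (hPG : ∀ p ∈ P, ∀ i, p i ∈ G i) {q : Fin d → S} (hq : ∀ i, q i ∈ G i) {v w : Fin d → S}
    (hv : v ∈ hitting c P q) (hw : w ∈ hitting c P q) {i : Fin d} (hvw : TwinPair c v w i) :
    ∃ R, GC c P R ∧ (∀ r ∈ R, ∀ j, r j ∈ G j) ∧ #(hitting c R q) < #(hitting c P q) := by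
  have hw' : Function.update v i (c (v i)) = w :=
    Function.update_eq_iff.2 ⟨compl_eq_iff.2 hvw.1, hvw.2⟩
  have hpair : double c i (v i) {v} = {v, w} := by
    rw [double_singleton, hw', Function.update_eq_self]
  have hsub : {v, w} ⊆ hitting c P q := by
    rw [insert_subset_iff, singleton_subset_iff]
    exact ⟨hv, hw⟩
  refine ⟨P \ {v, w} ∪ double c i (q i) {v}, .single (gcStep_iff.2 ⟨v, i, v i, q i, ?_, ?_⟩),
    fun r hr j => ?_, ?_⟩
  · rw [hpair]
    exact hsub.trans (hitting_subset q)
  · rw [hpair]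
  · rw [double_singleton, mem_union, mem_insert, mem_singleton] at hr
    have hvG := hPG v (mem_hitting.1 hv).1
    rcases hr with hr | rfl | rfl
    · exact hPG r (mem_sdiff.1 hr).1 j
    · exact (Function.forall_update_iff v fun j s => s ∈ G j).2 ⟨hq i, fun j _ => hvG j⟩ j
    · exact (Function.forall_update_iff v fun j s => s ∈ G j).2
        ⟨hG i _ (hq i), fun j _ => hvG j⟩ j
  · have hnew : hitting c (P \ {v, w} ∪ double c i (q i) {v}) q ⊆
        insert (Function.update v i (q i)) (hitting c P q \ {v, w}) := fun z hz => by
      rw [mem_hitting, mem_union, double_singleton, mem_insert, mem_singleton] at hz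
      rw [mem_insert, mem_sdiff, mem_hitting]
      rcases hz with ⟨hz | rfl | rfl, hzq⟩
      · exact Or.inr ⟨⟨(mem_sdiff.1 hz).1, hzq⟩, (mem_sdiff.1 hz).2⟩
      · exact Or.inl rfl
      · exact absurd ⟨i, Function.update_self ..⟩ hzq
    have hne : v ≠ w := fun h => ne_compl (c := c) (w i) (by rw [← hvw.1, h])
    have hcard := (card_le_card hnew).trans (card_insert_le _ _)
    have htwo := card_le_card hsub
    rw [card_sdiff_of_subset hsub] at hcard
    rw [card_pair hne] at hcard htwo
    omega

/-- A pair of equivalent codes with at most nine words and at most four active positions for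
which strong equivalence fails, whereas it holds for all such pairs with fewer words. -/
structure MinCounterexample (c : S → S) (P Q : Finset (Fin d → S)) : Prop where
  left : IsCode c P
  right : IsCode c Q
  region_eq : region c P = region c Q
  card_active_le : #(active Q) ≤ 4
  card_le : #P ≤ 9
  not_gc : ¬ GC c P Q
  gc_of_lt : ∀ A B : Finset (Fin d → S), IsCode c A → IsCode c B → region c A = region c B →
    #(active B) ≤ 4 → #A < #P → GC c A B

namespace MinCounterexample

lemma card_eq (h : MinCounterexample c P Q) : #P = #Q :=
  h.left.card_eq_of_region_eq h.right h.region_eq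

lemma active_eq (h : MinCounterexample c P Q) : active P = active Q :=
  active_eq_of_region_eq h.region_eq

lemma symm (h : MinCounterexample c P Q) : MinCounterexample c Q P where
  left := h.right
  right := h.left
  region_eq := h.region_eq.symm
  card_active_le := h.active_eq ▸ h.card_active_le
  card_le := h.card_eq ▸ h.card_le
  not_gc hgc := h.not_gc (hgc.symm h.right)
  gc_of_lt := h.card_eq ▸ h.gc_of_lt

lemma of_gc (h : MinCounterexample c P Q) {R : Finset (Fin d → S)} (hR : GC c P R) :
    MinCounterexample c R Q := by
  have hcode := hR.isCode h.left
  have hcard : #P = #R := h.left.card_eq_of_region_eq hcode hR.region_eq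
  exact
    { left := hcode
      right := h.right
      region_eq := hR.region_eq.symm.trans h.region_eq
      card_active_le := h.card_active_le
      card_le := hcard ▸ h.card_le
      not_gc := fun hgc => h.not_gc (hR.trans hgc)
      gc_of_lt := hcard ▸ h.gc_of_lt }

lemma right_nonempty (h : MinCounterexample c P Q) : Q.Nonempty := by
  by_contra hQ
  rw [not_nonempty_iff_eq_empty] at hQ
  have hP : P = ∅ := card_eq_zero.1 (by rw [h.card_eq, hQ, card_empty])
  exact h.not_gc (by rw [hP, hQ]; exact GC.refl ∅)

lemma gc_of_ssubset (h : MinCounterexample c P Q) {A B : Finset (Fin d → S)} (hA : A ⊂ P)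
    (hB : IsCode c B) (hAB : region c A = region c B) : GC c A B := by
  refine h.gc_of_lt A B (h.left.mono hA.subset) hB hAB ?_ (card_lt_card hA)
  rw [← active_eq_of_region_eq hAB]
  exact (card_le_card (active_mono hA.subset)).trans (h.active_eq ▸ h.card_active_le)

lemma notMem_left (h : MinCounterexample c P Q) {q : Fin d → S} (hq : q ∈ Q) : q ∉ P :=
  fun hqP => h.not_gc <| h.left.gc_of_gc_erase hqP hq <|
    h.gc_of_ssubset (erase_ssubset hqP) (h.right.mono (erase_subset q Q)) <| by
      rw [h.left.region_erase hqP, h.right.region_erase hq, h.region_eq]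

lemma gc_frame (h : MinCounterexample c P Q) (hcard : #P = 2 ^ #(active Q)) {s : Fin d → S}
    (hs : ∀ p ∈ P, ∀ i ∉ active Q, p i = s i) : GC c P (frame c (active Q) s) := by
  refine h.left.gc_frame_of_gc_erase ?_ fun v hv hreg => h.gc_of_ssubset (erase_ssubset hv)
    ((isCode_frame _ v).mono (erase_subset v _)) hreg
  exact region_eq_of_card_eq_two_pow (h.active_eq ▸ h.left.isCodeOn_active) (isCodeOn_frame _ s)
    hcard (card_frame _ s) hs fun b hb i hi => eq_of_mem_frame hb hi

/-- Such codes would be complete in the active positions, and could be turned into frames. -/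
lemma card_ne_two_pow (h : MinCounterexample c P Q) : #P ≠ 2 ^ #(active Q) := by
  intro hcard
  obtain ⟨q, hq⟩ := h.right_nonempty
  have hQq : ∀ r ∈ Q, ∀ i ∉ active Q, r i = q i := fun r hr i hi =>
    notMem_active.1 hi r hr q hq
  have hP := h.gc_frame hcard fun p hp i hi =>
    forall_eq_of_region_eq h.region_eq (fun r hr => hQq r hr i hi) p hp
  have hQ := h.symm.gc_frame (s := q) (by rw [← h.card_eq, h.active_eq, hcard])
    (by rwa [h.active_eq])
  rw [h.active_eq] at hQ
  exact h.not_gc (hP.trans (hQ.symm h.right))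

lemma exists_gc_forall_mem_letters (h : MinCounterexample c P Q) :
    ∃ R, GC c P R ∧ ∀ r ∈ R, ∀ i, r i ∈ letters c Q i := by
  obtain ⟨R, hR, hmin⟩ := exists_minimalFor_of_wellFoundedLT (GC c P) (badness (letters c Q))
    ⟨P, GC.refl P⟩
  refine ⟨R, hR, fun r hr i => ?_⟩
  by_contra hri
  obtain ⟨q, hq⟩ := h.right_nonempty
  have h' := h.of_gc hR
  have hlayer : ∀ u ∉ letters c Q i, layer R i u ⊂ R := by
    refine fun u hu => (layer_subset R i u).ssubset_of_ne fun heq => ?_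
    have hle := two_mul_card_layer_le h'.left h'.right h'.region_eq (compl_mem_letters i)
      (fun q hq => mem_letters_self hq i) hu
    have hpos := card_pos.2 ⟨r, hr⟩
    rw [heq] at hle
    omega
  obtain ⟨R', hR', hlt⟩ := exists_gc_badness_lt h'.left h'.right h'.region_eq
    (compl_mem_letters i) (fun q hq => mem_letters_self hq i) (mem_letters_self hq i) hr hri
    fun u hu _ B hB hreg _ => h'.gc_of_ssubset (hlayer u hu) hB hreg
  exact hlt.not_ge (hmin (hR.trans hR') hlt.le)

lemma exists_mem_eq_compl (h : MinCounterexample c P Q) {i : Fin d} (hi : i ∈ active Q) {s : S}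
    (hs : s ∈ letters c Q i) : ∃ q ∈ Q, q i = c s := by
  by_contra! hno
  obtain ⟨q, hq, hqs⟩ : ∃ q ∈ Q, q i = s := by
    obtain ⟨q, hq, hqs | hqs⟩ := mem_letters.1 hs
    exacts [⟨q, hq, hqs⟩, absurd (compl_eq_iff.1 hqs) (hno q hq)]
  have hlayer : layer P i s ⊂ P := by
    refine (layer_subset P i s).ssubset_of_ne fun heq => ?_
    rw [← h.active_eq] at hi
    have hPs : ∀ p ∈ P, p i = s := fun p hp => (mem_layer.1 (heq.symm ▸ hp)).2
    exact notMem_active.2 (fun p hp p' hp' => (hPs p hp).trans (hPs p' hp').symm) hi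
  have hgc := h.gc_of_ssubset hlayer
    (isCode_layer_union_setLetter h.left h.right h.region_eq hno)
    (region_layer_eq h.left h.right h.region_eq hno)
  have hgcP := hgc.union_right (h.left.disjoint_region (layer_subset P i s) sdiff_subset
    disjoint_sdiff)
  rw [union_sdiff_of_subset (layer_subset P i s)] at hgcP
  exact (h.of_gc hgcP).notMem_left hq
    (mem_union_left _ (mem_union_left _ (mem_layer.2 ⟨hq, hqs⟩)))

end MinCounterexample

/-- A minimal counterexample with a word `q` of `Q`, reduced by gluing and cutting and by the
choice of `q`: all letters of `P` are letters of `Q` up to complementation, and the number of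
words of `P` hitting `q` is the least possible. -/
structure ReducedCounterexample (c : S → S) (P Q : Finset (Fin d → S)) (q : Fin d → S) : Prop
    extends MinCounterexample c P Q where
  mem : q ∈ Q
  letter_mem : ∀ p ∈ P, ∀ i, p i ∈ letters c Q i
  card_hitting_le : ∀ R, GC c P R → (∀ r ∈ R, ∀ i, r i ∈ letters c Q i) → ∀ q' ∈ Q,
    #(hitting c P q) ≤ #(hitting c R q')

lemma MinCounterexample.exists_reduced (h : MinCounterexample c P Q) :
    ∃ R q, ReducedCounterexample c R Q q := by
  obtain ⟨R₀, hR₀, hletters⟩ := h.exists_gc_forall_mem_letters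
  obtain ⟨q₀, hq₀⟩ := h.right_nonempty
  obtain ⟨⟨R, q⟩, ⟨hR, hRQ, hq⟩, hmin⟩ := exists_minimalFor_of_wellFoundedLT
    (fun a : Finset (Fin d → S) × (Fin d → S) =>
      GC c P a.1 ∧ (∀ r ∈ a.1, ∀ i, r i ∈ letters c Q i) ∧ a.2 ∈ Q)
    (fun a => #(hitting c a.1 a.2)) ⟨(R₀, q₀), hR₀, hletters, hq₀⟩
  exact ⟨R, q, h.of_gc hR, hq, hRQ, fun R' hR' hR'Q q' hq' =>
    (le_total _ _).elim id (hmin (j := (R', q')) ⟨hR.trans hR', hR'Q, hq'⟩)⟩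

namespace ReducedCounterexample

variable {q : Fin d → S}

lemma twinFreeCover (h : ReducedCounterexample c P Q q) : TwinFreeCover c (hitting c P q) q where
  code := h.left.mono (hitting_subset q)
  not_dich p hp := (mem_hitting.1 hp).2
  cover x hx := by
    have hxP : x ∈ region c P := by
      rw [h.region_eq]
      exact mem_region.2 ⟨q, h.mem, hx⟩
    obtain ⟨p, hp, hxp⟩ := mem_region.1 hxP
    exact mem_region.2 ⟨p, mem_hitting.2 ⟨hp, fun hpq =>
      Set.disjoint_left.1 hpq.disjoint_cell hxp hx⟩, hxp⟩
  twinPairFree v hv w hw i hvw := by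
    obtain ⟨R, hR, hRQ, hlt⟩ := exists_gc_card_hitting_lt (compl_mem_letters (Q := Q))
      h.letter_mem (mem_letters_self h.mem) hv hw hvw
    exact hlt.not_ge (h.card_hitting_le R hR hRQ q h.mem)
  notMem hq := h.notMem_left h.mem (hitting_subset q hq)

lemma card_layer_add_card_hitting_le (h : ReducedCounterexample c P Q q) {i : Fin d}
    (hi : i ∈ active Q) (s : S) : #(layer P i s) + #(hitting c P q) ≤ #P := by
  rcases (layer P i s).eq_empty_or_nonempty with hempty | ⟨p, hp⟩
  · rw [hempty, card_empty, zero_add]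
    exact card_le_card (hitting_subset q)
  obtain ⟨hpP, rfl⟩ := mem_layer.1 hp
  obtain ⟨q', hq', hq'p⟩ := h.exists_mem_eq_compl hi (h.letter_mem p hpP i)
  have hdisj : Disjoint (layer P i (p i)) (hitting c P q') := disjoint_left.2 fun z hz hz' =>
    (mem_hitting.1 hz').2 ⟨i, by rw [(mem_layer.1 hz).2, hq'p, compl_compl_letter c]⟩
  calc #(layer P i (p i)) + #(hitting c P q)
      ≤ #(layer P i (p i)) + #(hitting c P q') :=
        Nat.add_le_add_left (h.card_hitting_le P (GC.refl P) h.letter_mem q' hq') _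
    _ = #(layer P i (p i) ∪ hitting c P q') := (card_union_of_disjoint hdisj).symm
    _ ≤ #P := card_le_card (union_subset (layer_subset P i (p i)) (hitting_subset q'))

lemma isCodeOn (h : ReducedCounterexample c P Q q) : IsCodeOn c (active Q) P :=
  h.active_eq ▸ h.left.isCodeOn_active

lemma card_le_one_add_mul (h : ReducedCounterexample c P Q q) :
    #P ≤ 1 + #(active Q) * (#P - #(hitting c P q)) := by
  obtain ⟨p, hp⟩ := h.symm.right_nonempty
  refine (h.isCodeOn.card_le_sum_card_layer hp).trans (Nat.add_le_add_left ?_ 1)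
  exact sum_le_card_nsmul _ _ _ fun i hi =>
    Nat.le_sub_of_add_le (h.card_layer_add_card_hitting_le hi _)

lemma supp_subset_active (h : ReducedCounterexample c P Q q) {p : Fin d → S} (hp : p ∈ P) :
    supp q p ⊆ active Q := by
  intro i hi
  by_contra hiQ
  exact mem_supp.1 hi (forall_eq_of_region_eq h.region_eq
    (fun r hr => notMem_active.1 hiQ r hr q h.mem) p hp)

lemma card_ne_two_mul_card_add_one (h : ReducedCounterexample c P Q q)
    (hle : #P ≤ #(hitting c P q) + 2) (hpos : 0 < #(active Q)) : #P ≠ 2 * #(active Q) + 1 :=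
  h.isCodeOn.card_ne_two_mul_card_add_one (card_pos.1 hpos) fun i hi s => by
    have := h.card_layer_add_card_hitting_le hi s
    omega

lemma four_le_card_active (h : ReducedCounterexample c P Q q) : 4 ≤ #(active Q) := by
  by_contra! hlt
  have hfive := h.twinFreeCover.five_le_card
  have hhit := card_le_card (hitting_subset (c := c) (P := P) q)
  have hpow := h.isCodeOn.card_le
  have hmul := h.card_le_one_add_mul
  have hne := h.card_ne_two_pow
  have hodd := h.card_ne_two_mul_card_add_one
  interval_cases #(active Q) <;> omega

end ReducedCounterexample

lemma MinCounterexample.false (h : MinCounterexample c P Q) : False := by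
  obtain ⟨P, q, h⟩ := h.exists_reduced
  have hfour : #(active Q) = 4 := h.card_active_le.antisymm h.four_le_card_active
  have hseven := h.twinFreeCover.seven_le_card hfour
    (fun p hp => h.supp_subset_active (hitting_subset q hp)) fun i hi s => by
      have hsub : #(layer (hitting c P q) i s) ≤ #(layer P i s) :=
        card_le_card (filter_subset_filter _ (hitting_subset q))
      have := h.card_layer_add_card_hitting_le hi s
      have := h.card_le
      omega
  have hnine := h.card_le
  have hhit := card_le_card (hitting_subset (c := c) (P := P) q)
  have hmul := h.card_le_one_add_mul
  have hodd := h.card_ne_two_mul_card_add_one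
  rw [hfour] at hmul hodd
  omega

theorem IsCode.gc_of_card_le_nine (hP : IsCode c P) (hQ : IsCode c Q)
    (h : region c P = region c Q) (hactive : #(active Q) ≤ 4) (hcard : #P ≤ 9) : GC c P Q := by
  induction hm : #P using Nat.strong_induction_on generalizing P Q with
  | _ m ih =>
    subst hm
    by_contra hgc
    exact MinCounterexample.false ⟨hP, hQ, h, hactive, hcard, hgc, fun A B hA hB hAB hB4 hlt =>
      ih #A hlt hA hB hAB hB4 (hlt.le.trans hcard) rfl⟩

end

/-! ### Subsets of frames -/

section

variable [DecidableEq S] {U V W : Finset (Fin d → S)}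

section Splitting

variable {i : Fin d} {t : S}

lemma region_layer_of_forall (hW : ∀ w ∈ W, w i = t ∨ w i = c t) :
    region c (layer W i t) = {x ∈ region c W | t ∈ x i} := by
  ext x
  refine ⟨fun hx => ⟨region_mono (layer_subset W i t) hx, mem_of_mem_region_layer hx⟩, ?_⟩
  rintro ⟨hx, hxt⟩
  have hres : residue c W i t = ∅ := filter_false_of_mem fun w hw hne =>
    (hW w hw).elim hne.1 hne.2
  rw [mem_region_iff_of_mem W hxt, hres] at hx
  exact hx.resolve_right fun h => notMem_empty _ (mem_region.1 h).choose_spec.1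

lemma layer_union_layer (hW : ∀ w ∈ W, w i = t ∨ w i = c t) :
    layer W i t ∪ layer W i (c t) = W := by
  rw [layer, layer, ← filter_or]
  exact filter_true_of_mem hW

lemma layer_subset_frame {D : Finset (Fin d)} {s : Fin d → S} (hW : W ⊆ frame c D s) :
    layer W i t ⊆ frame c (D.erase i) (Function.update s i t) := fun w hw => by
  obtain ⟨hwW, hwi⟩ := mem_layer.1 hw
  refine mem_frame.2 fun j => ?_
  rcases eq_or_ne j i with rfl | hji
  · exact Or.inl (by rw [hwi, Function.update_self])
  · rw [Function.update_of_ne hji, mem_erase, and_iff_right hji]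
    exact mem_frame.1 (hW hwW) j

variable [IsComplementation c]

lemma IsCode.gc_of_gc_layer (hV : IsCode c V) (hVi : ∀ v ∈ V, v i = t ∨ v i = c t)
    (hUi : ∀ u ∈ U, u i = t ∨ u i = c t) (h : GC c (layer V i t) (layer U i t))
    (hcompl : GC c (layer V i (c t)) (layer U i (c t))) : GC c V U := by
  rw [← layer_union_layer hVi, ← layer_union_layer hUi]
  exact h.union hcompl (hV.disjoint_region (layer_subset V i t) (layer_subset V i (c t))
    (disjoint_layer (ne_compl t) V i))

end Splitting

variable [IsComplementation c] {D : Finset (Fin d)} {s : Fin d → S}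

lemma IsCodeOn.five_lt_card {T : Finset (Fin d → S)} (hT : IsCodeOn c D T) (hcard : #T = 2 ^ #D)
    {v : Fin d → S} (hv : v ∈ T) (hD : D.Nonempty)
    (hlarge : ∀ j ∈ D, ∃ u, u ≠ v j ∧ u ≠ c (v j) ∧ 10 ≤ #(PolyboxPaper.layer T j u)) :
    5 < #D := by
  have hlayer : ∀ j ∈ D, #(PolyboxPaper.layer T j (c (v j))) + 10 ≤ 2 ^ (#D - 1) := by
    intro j hj
    obtain ⟨u, huv, hucv, hu⟩ := hlarge j hj
    have := card_layer_add_card_layer_le hT hj hucv.symm fun h => huv (compl_inj.1 h).symm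
    omega
  obtain ⟨i, hi⟩ := hD
  have hfour : 3 < #D - 1 := (Nat.pow_lt_pow_iff_right one_lt_two).1 <|
    show 2 ^ 3 < 2 ^ (#D - 1) by have := hlayer i hi; omega
  by_contra! hle
  obtain hfive : #D = 5 := by omega
  have hsum := sum_le_card_nsmul D (fun j => #(PolyboxPaper.layer T j (c (v j)))) 6 fun j hj => by
    have := hlayer j hj
    rw [hfive] at this
    omega
  have hT' := hT.card_le_sum_card_layer hv
  rw [hcard, hfive] at hT'
  rw [hfive, smul_eq_mul] at hsum
  omega

omit [IsComplementation c] in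
lemma active_layer_subset (hV : ∀ i ∉ D, ∀ v ∈ V, v i = s i) (j : Fin d) (u : S) :
    active (layer V j u) ⊆ D.erase j := fun i hi => by
  by_contra hiD
  refine notMem_active.2 (fun v hv w hw => ?_) hi
  obtain ⟨hvV, hvu⟩ := mem_layer.1 hv
  obtain ⟨hwV, hwu⟩ := mem_layer.1 hw
  rcases eq_or_ne i j with rfl | hij
  · rw [hvu, hwu]
  · have hi' : i ∉ D := fun hi => hiD (mem_erase.2 ⟨hij, hi⟩)
    rw [hV i hi' v hvV, hV i hi' w hwV]

section Completion

variable (hV : IsCode c V) (hU : U ⊆ frame c D s) (h : region c V = region c U)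
include hV hU h

omit hV in
lemma disjoint_region_frame_sdiff : Disjoint (region c V) (region c (frame c D s \ U)) := by
  rw [h, (isCode_frame D s).region_sdiff hU]
  exact Set.disjoint_sdiff_right

lemma isCodeOn_union_frame_sdiff : IsCodeOn c D (V ∪ frame c D s \ U) := by
  have hagree : ∀ r ∈ V ∪ frame c D s \ U, ∀ i ∉ D, r i = s i := by
    intro r hr i hi
    rcases mem_union.1 hr with hr | hr
    · exact forall_eq_of_region_eq h (fun u hu => eq_of_mem_frame (hU hu) hi) r hr
    · exact eq_of_mem_frame (mem_sdiff.1 hr).1 hi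
  intro p hp q hq hpq
  obtain ⟨i, hi⟩ := hV.union ((isCode_frame D s).mono sdiff_subset)
    (disjoint_region_frame_sdiff hU h) p hp q hq hpq
  refine ⟨i, by_contra fun hiD => ?_, hi⟩
  rw [hagree p hp i hiD, hagree q hq i hiD] at hi
  exact ne_compl (c := c) (s i) hi

lemma card_union_frame_sdiff : #(V ∪ frame c D s \ U) = 2 ^ #D := by
  rw [card_union_of_disjoint (disjoint_of_disjoint_region (disjoint_region_frame_sdiff hU h)),
    hV.card_eq_of_region_eq ((isCode_frame D s).mono hU) h, add_comm,
    card_sdiff_add_card_eq_card hU, card_frame]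

end Completion

section MinimalBadness

variable (hV : IsCode c V) (h : region c V = region c U) (hD : #D ≤ 5)
  (hmin : ∀ R, GC c V R → badness (fun i => {s i, c (s i)}) V ≤
    badness (fun i => {s i, c (s i)}) R)
include hV h hD hmin

lemma exists_ten_le_card_layer (hU : U ⊆ frame c D s) {j : Fin d} (hj : j ∈ D)
    {p : Fin d → S} (hp : p ∈ V) (hps : p j ≠ s j) (hpcs : p j ≠ c (s j)) :
    ∃ u, u ≠ s j ∧ u ≠ c (s j) ∧ 10 ≤ #(layer V j u) := by
  have hnot (u : S) : u ∉ ({s j, c (s j)} : Finset S) ↔ u ≠ s j ∧ u ≠ c (s j) := by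
    rw [mem_insert, mem_singleton, not_or]
  have hU' := (isCode_frame D s).mono hU
  have hcompl : ∀ t ∈ ({s j, c (s j)} : Finset S), c t ∈ ({s j, c (s j)} : Finset S) := by
    intro t ht
    rw [mem_insert, mem_singleton] at ht ⊢
    exact ht.elim (fun h => Or.inr (h ▸ rfl)) fun h => Or.inl (compl_eq_iff.2 h)
  have hUj : ∀ q ∈ U, q j ∈ ({s j, c (s j)} : Finset S) := fun q hq => by
    rw [mem_insert, mem_singleton]
    exact (mem_frame.1 (hU hq) j).imp_right And.right
  have hVD : ∀ i ∉ D, ∀ v ∈ V, v i = s i := fun i hi =>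
    forall_eq_of_region_eq h fun u hu => eq_of_mem_frame (hU hu) hi
  have hactive (u : S) : #(active (layer V j u)) ≤ 4 := by
    have := (card_le_card (active_layer_subset hVD j u)).trans_eq (card_erase_of_mem hj)
    omega
  by_contra! hsmall
  obtain ⟨R, hR, hlt⟩ := exists_gc_badness_lt (G := fun i => {s i, c (s i)}) hV hU' h hcompl hUj
    (mem_insert_self (s j) _) hp ((hnot _).2 ⟨hps, hpcs⟩) fun u hu _ _ hB hreg _ =>
      (hV.mono (layer_subset V j u)).gc_of_card_le_nine hB hreg
        (active_eq_of_region_eq hreg ▸ hactive u)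
        (Nat.le_of_lt_succ (hsmall u ((hnot u).1 hu).1 ((hnot u).1 hu).2))
  exact hlt.not_ge (hmin R hR)

/-- Otherwise the completion of `V` by the rest of the frame would have a large layer in each
direction of `D`, and this would force `D` to have more than five elements. -/
lemma exists_forall_eq_or_eq_compl (hU : U ⊂ frame c D s) (hne : D.Nonempty) :
    ∃ j ∈ D, ∀ v ∈ V, v j = s j ∨ v j = c (s j) := by
  by_contra! hbad
  obtain ⟨v, hv, hvU⟩ := exists_of_ssubset hU
  refine hD.not_gt ((isCodeOn_union_frame_sdiff hV hU.subset h).five_lt_card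
    (card_union_frame_sdiff hV hU.subset h) (mem_union_right V (mem_sdiff.2 ⟨hv, hvU⟩)) hne
    fun j hj => ?_)
  obtain ⟨p, hp, hps, hpcs⟩ := hbad j hj
  obtain ⟨u, hus, hucs, hu⟩ := exists_ten_le_card_layer hV h hD hmin hU.subset hj hp hps hpcs
  have hle : #(layer V j u) ≤ #(layer (V ∪ frame c D s \ U) j u) :=
    card_le_card (filter_subset_filter _ subset_union_left)
  rcases mem_frame.1 hv j with hvj | ⟨-, hvj⟩ <;> rw [hvj]
  · exact ⟨u, hus, hucs, hu.trans hle⟩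
  · rw [compl_compl_letter c]
    exact ⟨u, hucs, hus, hu.trans hle⟩

end MinimalBadness

lemma IsCode.gc_of_ssubset_frame (hV : IsCode c V) (hU : U ⊂ frame c D s)
    (h : region c V = region c U) (hD : #D ≤ 5)
    (ih : ∀ E ⊂ D, ∀ (s : Fin d → S) (A B : Finset (Fin d → S)), IsCode c A →
      B ⊆ frame c E s → region c A = region c B → GC c A B) : GC c V U := by
  obtain ⟨R, hVR, hmin⟩ := exists_minimalFor_of_wellFoundedLT (GC c V)
    (badness fun i => {s i, c (s i)}) ⟨V, GC.refl V⟩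
  have hR := hVR.isCode hV
  have hRU : region c R = region c U := hVR.region_eq.symm.trans h
  refine hVR.trans ?_
  rcases D.eq_empty_or_nonempty with rfl | hne
  · have hU0 : #U = 0 := Nat.lt_one_iff.1 ((card_lt_card hU).trans_eq (card_frame ∅ s))
    have hR0 := (hR.card_eq_of_region_eq ((isCode_frame ∅ s).mono hU.subset) hRU).trans hU0
    rw [card_eq_zero.1 hU0, card_eq_zero.1 hR0]
    exact GC.refl ∅
  obtain ⟨j, hj, hRj⟩ := exists_forall_eq_or_eq_compl hR hRU hD
    (fun R' hR' => le_of_not_gt fun hlt => hlt.not_ge (hmin (hVR.trans hR') hlt.le)) hU hne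
  have hUj : ∀ u ∈ U, u j = s j ∨ u j = c (s j) := fun u hu =>
    (mem_frame.1 (hU.subset hu) j).imp_right And.right
  have hcompl {A : Finset (Fin d → S)} (hA : ∀ v ∈ A, v j = s j ∨ v j = c (s j)) :
      ∀ v ∈ A, v j = c (s j) ∨ v j = c (c (s j)) := by
    simpa only [compl_compl_letter c, or_comm] using hA
  refine hR.gc_of_gc_layer hRj hUj ?_ ?_ <;>
    refine ih _ (erase_ssubset hj) _ _ _ (hR.mono (layer_subset R j _))
      (layer_subset_frame hU.subset) ?_
  · rw [region_layer_of_forall hRj, region_layer_of_forall hUj, hRU]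
  · rw [region_layer_of_forall (hcompl hRj), region_layer_of_forall (hcompl hUj), hRU]

theorem IsCode.gc_of_subset_frame (hV : IsCode c V) (hU : U ⊆ frame c D s)
    (h : region c V = region c U) (hD : #D ≤ 5) : GC c V U := by
  induction D using Finset.strongInduction generalizing s U V with
  | H D ih =>
    have ih' (E) (hE : E ⊂ D) (s : Fin d → S) (A B) (hA : IsCode c A) (hB : B ⊆ frame c E s)
        (hAB : region c A = region c B) : GC c A B :=
      ih E hE hA hB hAB ((card_le_card hE.subset).trans hD)
    rcases hU.eq_or_ssubset with rfl | hU
    · exact hV.gc_frame_of_gc_erase h fun v _ hreg =>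
        (hV.mono (erase_subset v V)).gc_of_ssubset_frame (erase_ssubset (self_mem_frame D v)) hreg
          hD ih'
    · exact hV.gc_of_ssubset_frame hU h hD ih'

theorem completable_by_simple_code_strongly_equivalent_general
    {S : Type} [DecidableEq S] {d : ℕ} (hd : d ≤ 5) (c : S → S)
    (hc : ∀ s, c (c s) = s) (hc' : ∀ s, c s ≠ s)
    (V W V' : Finset (Fin d → S)) (hW : IsCode c W) (heq : Equivalent c V W)
    (hsimple : SimpleCode c V') (hdisj : Disjoint V V') (htile : CubeTiling c (V ∪ V')) :
    GC c V W := by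
  have : IsComplementation c := ⟨hc, hc'⟩
  choose s hs using hsimple
  have hV : IsCode c V := htile.1.mono subset_union_left
  have hV' : V' ⊆ frame c univ s := fun v hv => mem_frame.2 fun i =>
    (hs i v hv).imp_right (And.intro (mem_univ i))
  have hframe : CubeTiling c (frame c univ s) :=
    ⟨isCode_frame univ s, by rw [card_frame, card_univ, Fintype.card_fin]⟩
  have hVU : region c V = region c (frame c univ s \ V') := by
    rw [hframe.1.region_sdiff hV', hframe.region_eq_univ, ← htile.region_eq_univ,
      ← htile.1.region_sdiff subset_union_right, union_sdiff_cancel_right hdisj]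
  have hcard : #(univ : Finset (Fin d)) ≤ 5 := by rwa [card_univ, Fintype.card_fin]
  have hVgc := hV.gc_of_subset_frame sdiff_subset hVU hcard
  have hWgc := hW.gc_of_subset_frame sdiff_subset (heq.region_eq.symm.trans hVU) hcard
  exact hVgc.trans (hWgc.symm hW)

end

/-- Corollary "eq5" of the paper. -/
theorem completable_by_simple_code_strongly_equivalent
    {S : Type} [Fintype S] [DecidableEq S] (c : S → S)
    (hc : ∀ s, c (c s) = s) (hc' : ∀ s, c s ≠ s)
    (V W V' : Finset (Fin 5 → S)) (hV : IsCode c V) (hW : IsCode c W)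
    (heq : Equivalent c V W)
    (hV' : IsCode c V') (hsimple : SimpleCode c V')
    (hdisj : Disjoint V V') (htile : CubeTiling c (V ∪ V')) :
    GC c V W :=
  completable_by_simple_code_strongly_equivalent_general le_rfl c hc hc' V W V' hW heq hsimple hdisj
    htile

end PolyboxPaper
end

section
/- If V ⊆ S^5 is a cube tiling code which is not simple, and Q is a simple component of V, then the polybox code V \ Q contains a twin pair. -/
/- Common framework: polybox codes over a finite alphabet `S` with a
complementation `c : S → S` (an involution without fixed points). -/

namespace PolyboxPaper

variable {S : Type} [Fintype S] [DecidableEq S] {d : ℕ}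

/-
Suppose that all twin pairs of the tiling code `V` lie in the simple component of `q ∈ Q`. A letter
of a word is foreign if it differs from the letter of `q` at its position and from the complement of
that letter. Consider the least number `t` of foreign letters in a word of `V` outside the component
that is complementary at only one position to a word of the component; clearly `t < d`.

By counting, each product of sets that contain one letter of every complementary pair contains a
word of `V`; these products are the points of the tiling, and words are boxes. If `1 ≤ t ≤ 4`, we
permute the coordinates and move `q` so that a word with `t` foreign letters and `q` are known up to
the names of the letters. Any point avoiding the known boxes lies in a further word of `V`, whose
letters are either known or new. A search over these finitely many possibilities always ends in a
twin pair outside the component or in a contradiction to the choice of `t`.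

Hence no such word exists. Then complementing a letter of a word of the component leads to a word of
`V` again, so the component is a whole simple tiling code, and dichotomy leaves no room for further
words in `V`.
-/

section Codes

variable {A : Type} {c : A → A} {V : Set (Fin d → A)} {q u v w : Fin d → A} {t : ℕ}

/-- A set of letters that contains exactly one letter of every complementary pair. -/
def IsTransversal (c : A → A) (T : Set A) : Prop :=
  ∀ s, c s ∈ T ↔ s ∉ T

theorem exists_isTransversal_superset (hc : Function.Involutive c) (hc' : ∀ s, c s ≠ s) {X : Set A}
    (hX : ∀ s ∈ X, c s ∉ X) : ∃ T, IsTransversal c T ∧ X ⊆ T := by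
  let B : Set A := {s | WellOrderingRel s (c s)}
  have hB : IsTransversal c B := fun s => by
    change WellOrderingRel (c s) (c (c s)) ↔ ¬ WellOrderingRel s (c s)
    rw [hc s]
    exact ⟨asymm, fun h => (trichotomous_of WellOrderingRel (c s) s).elim id
      fun h' => h'.elim (fun h' => absurd h' (hc' s)) fun h' => absurd h' h⟩
  refine ⟨{s | s ∈ X ∨ c s ∉ X ∧ s ∈ B}, fun s => ?_, fun s => Or.inl⟩
  have hs := hX s
  have hBs := hB s
  simp only [Set.mem_ofPred_eq, hc s]
  tauto

theorem CubeTiling.exists_mem_transversals {V : Finset (Fin d → A)} (hV : CubeTiling c V)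
    {T : Fin d → Set A} (hT : ∀ i, IsTransversal c (T i)) : ∃ v ∈ V, ∀ i, v i ∈ T i := by
  classical
  let side : V → Fin d → Bool := fun v i => decide (v.1 i ∈ T i)
  have side_injective : Function.Injective side := by
    intro v w hvw
    by_contra hne
    obtain ⟨i, hi⟩ := hV.1 v v.2 w w.2 (Subtype.coe_injective.ne hne)
    have hiff : v.1 i ∈ T i ↔ w.1 i ∈ T i := by simpa [side] using congrFun hvw i
    exact iff_not_self (hiff.symm.trans (hi ▸ hT i (w.1 i)))
  have side_bijective : Function.Bijective side :=
    (Fintype.bijective_iff_injective_and_card side).2 ⟨side_injective, by simp [hV.2]⟩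
  obtain ⟨v, hv⟩ := side_bijective.2 fun _ => true
  exact ⟨v, v.2, fun i => by simpa [side] using congrFun hv i⟩

/-- The number of positions at which the letters of two words belong to different complementary
pairs. The words at distance `0` from `q` form the simple cube tiling code spanned by `q`. -/
noncomputable def foreign (c : A → A) (v q : Fin d → A) : ℕ :=
  {i | v i ≠ q i ∧ v i ≠ c (q i)}.ncard

theorem foreign_eq_zero : foreign c v q = 0 ↔ ∀ i, v i = q i ∨ v i = c (q i) := by
  rw [foreign, Set.ncard_eq_zero (Set.toFinite _), Set.eq_empty_iff_forall_notMem]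
  simp only [Set.mem_ofPred_eq, not_and_or, not_not]

theorem foreign_lt {i : Fin d} (hi : v i = q i ∨ v i = c (q i)) : foreign c v q < d := by
  have hlt : foreign c v q < (Set.univ : Set (Fin d)).ncard :=
    Set.ncard_lt_ncard (Set.ssubset_univ_iff.2 fun h => by
      have := h ▸ Set.mem_univ i
      exact hi.elim this.1 this.2)
  simpa using hlt

theorem foreign_congr (hc : Function.Involutive c) (hu : foreign c u q = 0) :
    foreign c v u = foreign c v q := by
  refine congrArg Set.ncard (Set.ext fun i => ?_)
  rcases foreign_eq_zero.1 hu i with h | h <;> simp [h, hc (q i), and_comm]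

theorem foreign_comp (e : Equiv.Perm (Fin d)) : foreign c (v ∘ e) (q ∘ e) = foreign c v q :=
  Set.ncard_congr' (e.subtypeEquiv fun _ => Iff.rfl)

/-- The simple component of `q` in a dichotomous set of words `V` that meets every product of
transversals, isolated in the sense that all twin pairs lie in the component and that each word
outside it which is complementary at only one position to a word of the component has at least `t`
letters foreign to `q`. -/
structure IsolatedComponent (c : A → A) (V : Set (Fin d → A)) (q : Fin d → A) (t : ℕ) : Prop where
  base_mem : q ∈ V
  dich : ∀ v ∈ V, ∀ w ∈ V, v ≠ w → Dich c v w
  exists_mem : ∀ T : Fin d → Set A, (∀ i, IsTransversal c (T i)) → ∃ v ∈ V, ∀ i, v i ∈ T i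
  twin : ∀ v ∈ V, ∀ w ∈ V, ∀ i, TwinPair c v w i → foreign c v q = 0
  gap : ∀ u ∈ V, foreign c u q = 0 → ∀ v ∈ V, foreign c v q ≠ 0 → (∃! i, u i = c (v i)) →
    t ≤ foreign c v q

namespace IsolatedComponent

theorem rebase (h : IsolatedComponent c V q t) (hc : Function.Involutive c) (hu : u ∈ V)
    (huq : foreign c u q = 0) : IsolatedComponent c V u t where
  base_mem := hu
  dich := h.dich
  exists_mem := h.exists_mem
  twin := by simpa only [foreign_congr hc huq] using h.twin
  gap := by simpa only [foreign_congr hc huq] using h.gap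

theorem reindex (h : IsolatedComponent c V q t) (e : Equiv.Perm (Fin d)) :
    IsolatedComponent c {w | w ∘ e.symm ∈ V} (q ∘ e) t where
  base_mem := by simpa [Function.comp_assoc] using h.base_mem
  dich v hv w hw hne := by
    obtain ⟨i, hi⟩ := h.dich _ hv _ hw (e.symm.surjective.injective_comp_right.ne hne)
    exact ⟨e.symm i, hi⟩
  exists_mem T hT := by
    obtain ⟨v, hv, hvT⟩ := h.exists_mem (T ∘ e.symm) fun i => hT _
    exact ⟨v ∘ e, by simpa [Function.comp_assoc] using hv, fun i => by simpa using hvT (e i)⟩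
  twin v hv w hw i hi := by
    have := h.twin _ hv _ hw (e i) ⟨by simpa using hi.1, fun j hj => hi.2 _ (by
      rwa [Ne, Equiv.symm_apply_eq])⟩
    rwa [← foreign_comp e, Function.comp_assoc, e.symm_comp_self] at this
  gap u hu huq v hv hvq huv := by
    have hforeign (w : Fin d → A) : foreign c (w ∘ e.symm) q = foreign c w (q ∘ e) := by
      rw [← foreign_comp e, Function.comp_assoc, e.symm_comp_self, Function.comp_id]
    rw [← hforeign] at huq hvq ⊢
    exact h.gap _ hu huq _ hv hvq (e.symm.bijective.existsUnique_iff.1 huv)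

theorem update_compl_mem (h : IsolatedComponent c V q d) (hc : Function.Involutive c)
    (hc' : ∀ s, c s ≠ s) (hu : u ∈ V) (huq : foreign c u q = 0) (j : Fin d) :
    Function.update u j (c (u j)) ∈ V := by
  set w := Function.update u j (c (u j))
  have hwj : w j = c (u j) := Function.update_self ..
  have hwi (i) (hi : i ≠ j) : w i = u i := Function.update_of_ne hi ..
  have hT (i) : ∃ T, IsTransversal c T ∧ {w i} ⊆ T :=
    exists_isTransversal_superset hc hc' (by simpa using hc' (w i))
  choose T hT hwT using hT
  obtain ⟨v, hv, hvT⟩ := h.exists_mem T hT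
  have hvw (i) : v i ≠ c (w i) := fun hi => (hT i (w i)).1 (hi ▸ hvT i) (hwT i rfl)
  have huv : u ≠ v := fun huv => hvw j (by rw [hwj, hc, huv])
  have eq_of_clash (i) (hi : u i = c (v i)) : i = j := by
    by_contra hij
    exact hvw i (by rw [hwi i hij, hi, hc])
  obtain ⟨i, hi⟩ := h.dich u hu v hv huv
  obtain rfl := eq_of_clash i hi
  have hvi : v i = c (u i) := by rw [hi, hc]
  have hvq : foreign c v u = 0 := by
    by_contra hne
    have hgap := (h.rebase hc hu huq).gap u hu (foreign_eq_zero.2 fun _ => .inl rfl) v hv hne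
      ⟨i, hi, eq_of_clash⟩
    exact (foreign_lt (.inr hvi)).not_ge hgap
  convert hv using 1
  funext k
  by_cases hk : k = i
  · rw [hk, hwj, hvi]
  · rw [hwi k hk]
    exact ((foreign_eq_zero.1 hvq k).resolve_right (hwi k hk ▸ hvw k)).symm

theorem mem_of_foreign_eq_zero (h : IsolatedComponent c V q d) (hc : Function.Involutive c)
    (hc' : ∀ s, c s ≠ s) (hv : foreign c v q = 0) : v ∈ V := by
  suffices hs : ∀ s : Finset (Fin d), s.piecewise v q ∈ V by
    simpa only [Finset.piecewise_univ] using hs Finset.univ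
  intro s
  induction s using Finset.induction with
  | empty => simpa only [Finset.piecewise_empty] using h.base_mem
  | insert j s hj ih =>
    have hu : foreign c (s.piecewise v q) q = 0 := foreign_eq_zero.2 fun i =>
      s.piecewise_cases v q (fun a => a = q i ∨ a = c (q i)) (foreign_eq_zero.1 hv i) (.inl rfl)
    have huj : s.piecewise v q j = q j := Finset.piecewise_eq_of_notMem _ _ _ hj
    rw [Finset.piecewise_insert]
    rcases foreign_eq_zero.1 hv j with hvj | hvj
    · rwa [hvj, ← huj, Function.update_eq_self]
    · rw [hvj, ← huj]
      exact h.update_compl_mem hc hc' ih hu j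

theorem foreign_eq_zero_of_mem (h : IsolatedComponent c V q d) (hc : Function.Involutive c)
    (hc' : ∀ s, c s ≠ s) (hv : v ∈ V) : foreign c v q = 0 := by
  classical
  let w : Fin d → A := fun i => if v i = c (q i) then v i else q i
  have hwq : foreign c w q = 0 := foreign_eq_zero.2 fun i => by
    by_cases hi : v i = c (q i) <;> simp [w, hi]
  by_contra hne
  have hvw : v ≠ w := fun hvw => hne (hvw ▸ hwq)
  obtain ⟨i, hi⟩ := h.dich v hv w (h.mem_of_foreign_eq_zero hc hc' hwq) hvw
  by_cases hiq : v i = c (q i)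
  · rw [show w i = v i from if_pos hiq] at hi
    exact hc' _ hi.symm
  · rw [show w i = q i from if_neg hiq] at hi
    exact hiq hi

end IsolatedComponent

end Codes

section Search

/-- A symbolic word. Its letters are given by the variables listed in the bit mask `supp`, the
variable `x` standing for a letter at position `x % d`; the letter of `x` is complemented if bit
`x` of `point` is set. -/
structure Pattern where
  supp : ℕ
  point : ℕ

/-- `k n`, in a form that makes the kernel evaluate `n` before it unfolds `k`. -/
def force {α : Type} (n : ℕ) (k : ℕ → α) : α :=
  match n with
  | 0 => k 0
  | m + 1 => k (m + 1)

/-- `k l`, in a form that makes the kernel evaluate the entries of `l` before it unfolds `k`. -/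
def forceList {α : Type} : List ℕ → (List ℕ → α) → α
  | [], k => k []
  | a :: l, k => force a fun a => forceList l fun l => k (a :: l)

/-- The bit mask of a list of variables. -/
def mask (l : List ℕ) : ℕ :=
  l.foldr (fun x m => 1 <<< x ||| m) 0

/-- The variables for letters at position `f % d`, up to `f`. -/
def options (d f : ℕ) : List ℕ :=
  List.range' (f % d) (f / d + 1) d

/-- The variables of `z` that are complemented differently in `z` and in `p`. -/
def mismatch (p : ℕ) (z : Pattern) : ℕ :=
  (p ^^^ z.point) &&& z.supp

/-- The number of letters of `z` given by other variables than `0`, …, `d - 1`, which stand for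
the letters of the base word. -/
def foreignCount (d : ℕ) (z : Pattern) : ℕ :=
  Nat.count (fun i => ¬ z.supp.testBit i) d

/-- Whether exactly one bit of `m` is set. -/
def isSingleton (m : ℕ) : Bool :=
  m != 0 && m &&& (m - 1) == 0

/-- The words `w` and `z` are complementary at only one position and contradict the definition of an
isolated component, as a twin pair or by the number of foreign letters. -/
def isExcluded (d t : ℕ) (w z : Pattern) : Bool :=
  isSingleton (mismatch w.point z &&& w.supp) &&
    ((w.supp == z.supp && foreignCount d w != 0) ||
      (foreignCount d w == 0 && foreignCount d z != 0 && Nat.blt (foreignCount d z) t) ||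
      (foreignCount d z == 0 && foreignCount d w != 0 && Nat.blt (foreignCount d w) t))

/-- The ways to choose one entry of every list in `os` such that each mask in `M` contains at least
one of them. -/
def hittingTuples : List (List ℕ) → List ℕ → List (List ℕ)
  | [], M => bif M.isEmpty then [[]] else []
  | o :: os, M =>
    bif M.all fun m => m &&& mask (o :: os).flatten != 0 then
      o.flatMap fun x => (hittingTuples os (M.filter fun m => !m.testBit x)).map (x :: ·)
    else []

/-- The point `p` lies in none of the boxes described by `Z`. -/
def avoids (Z : List Pattern) (p : ℕ) : Bool :=
  Z.all fun z => mismatch p z != 0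

/-- A heuristic choice of a point that lies in none of the boxes described by `Z`: among the
neighbours of these boxes, one that neighbours as many of them as possible. -/
def branchPoint (os : List (List ℕ)) (p : ℕ) (Z : List Pattern) : Option ℕ :=
  (((Z.flatMap fun z => os.map fun o => p ^^^ mismatch p z ^^^ (mask o &&& z.supp)).filter
    (avoids Z)).take 6).argmax fun p => Z.countP fun z => isSingleton (mismatch p z)

/-- A search for an isolated component that contains the words `Z`, written in the variables below
`F`. It branches over the word whose box contains a point that is not covered yet, and returns
`true` if every branch reaches an excluded pair of words. -/
def refute (d t : ℕ) : ℕ → List ℕ → ℕ → List Pattern → Bool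
  | 0, _, _, _ => false
  | n + 1, F, p, Z =>
    (branchPoint (F.map (options d)) p Z).any fun p => force p fun p =>
      forceList (Z.map (mismatch p)) fun M =>
        (hittingTuples (F.map (options d)) M).all fun x => force (mask x) fun s =>
          Z.any (isExcluded d t ⟨s, p⟩) ||
            forceList (F.map fun f => bif s.testBit f then f + d else f) fun F =>
              refute d t n F p (⟨s, p⟩ :: Z)

theorem force_eq {α : Type} (n : ℕ) (k : ℕ → α) : force n k = k n := by
  cases n <;> rfl

theorem forceList_eq {α : Type} (l : List ℕ) (k : List ℕ → α) : forceList l k = k l := by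
  induction l generalizing k with
  | nil => rfl
  | cons a l ih => rw [forceList, force_eq, ih]

theorem testBit_mask {l : List ℕ} {y : ℕ} : (mask l).testBit y = true ↔ y ∈ l := by
  induction l with
  | nil => simp [mask]
  | cons x l ih =>
    have hx : (1 <<< x).testBit y = true ↔ y = x := by
      simp [Nat.one_shiftLeft, Nat.testBit_two_pow, eq_comm]
    rw [mask, List.foldr_cons, Nat.testBit_or, Bool.or_eq_true, hx, List.mem_cons]
    exact or_congr_right ih

theorem mem_options {f y : ℕ} : y ∈ options d f ↔ y % d = f % d ∧ y ≤ f := by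
  rw [options, List.mem_range']
  constructor
  · rintro ⟨k, hk, rfl⟩
    refine ⟨by rw [Nat.add_mul_mod_self_left, Nat.mod_mod], ?_⟩
    calc f % d + d * k ≤ f % d + d * (f / d) := by gcongr; omega
      _ = f := Nat.mod_add_div f d
  · rintro ⟨hmod, hle⟩
    exact ⟨y / d, Nat.lt_succ_of_le (Nat.div_le_div_right hle), by rw [← hmod, Nat.mod_add_div]⟩

theorem testBit_mismatch {p y : ℕ} {z : Pattern} :
    (mismatch p z).testBit y = true ↔
      p.testBit y ≠ z.point.testBit y ∧ z.supp.testBit y = true := by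
  simp [mismatch]

theorem existsUnique_of_isSingleton {m : ℕ} (hm : isSingleton m = true) :
    ∃! k, m.testBit k = true := by
  rw [isSingleton, Bool.and_eq_true, bne_iff_ne, beq_iff_eq,
    Nat.ne_zero_and_sub_one_eq_zero_iff_isPowerOfTwo] at hm
  obtain ⟨k, rfl⟩ := hm
  exact ⟨k, Nat.testBit_two_pow_self, fun j hj => by simpa [Nat.testBit_two_pow, eq_comm] using hj⟩

theorem subset_flatten_of_forall₂ {x : List ℕ} {os : List (List ℕ)}
    (hx : List.Forall₂ (· ∈ ·) x os) : x ⊆ os.flatten := by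
  induction hx with
  | nil => exact List.nil_subset _
  | cons hy _ ih =>
    rw [List.flatten_cons, List.cons_subset]
    exact ⟨List.mem_append_left _ hy, fun a ha => List.mem_append_right _ (ih ha)⟩

theorem mem_hittingTuples {x : List ℕ} {os : List (List ℕ)} {M : List ℕ}
    (hx : List.Forall₂ (· ∈ ·) x os) (hM : ∀ m ∈ M, ∃ y ∈ x, m.testBit y = true) :
    x ∈ hittingTuples os M := by
  induction hx generalizing M with
  | nil =>
    have hnil : M = [] := List.eq_nil_iff_forall_not_mem.2 fun m hm => by simpa using hM m hm
    simp [hittingTuples, hnil]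
  | @cons y o x os hy hx ih =>
    have hcheck : (M.all fun m => m &&& mask (o :: os).flatten != 0) = true := by
      rw [List.all_eq_true]
      intro m hm
      obtain ⟨a, ha, hma⟩ := hM m hm
      refine bne_iff_ne.2 fun h0 => ?_
      have hbit : (m &&& mask (o :: os).flatten).testBit a = true := by
        rw [Nat.testBit_and, hma, testBit_mask.2 (subset_flatten_of_forall₂ (.cons hy hx) ha),
          Bool.and_true]
      rw [h0] at hbit
      simp at hbit
    rw [hittingTuples, hcheck, cond_true, List.mem_flatMap]
    refine ⟨y, hy, List.mem_map_of_mem (ih fun m hm => ?_)⟩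
    obtain ⟨hm, hmy⟩ := List.mem_filter.1 hm
    obtain ⟨a, ha, hma⟩ := hM m hm
    rcases List.mem_cons.1 ha with rfl | ha
    · simp [hma] at hmy
    · exact ⟨a, ha, hma⟩

theorem avoids_of_mem_branchPoint {os : List (List ℕ)} {p r : ℕ} {Z : List Pattern}
    (hr : r ∈ branchPoint os p Z) {z : Pattern} (hz : z ∈ Z) : mismatch r z ≠ 0 := by
  have havoid := (List.mem_filter.1 (List.mem_of_mem_take (List.argmax_mem hr))).2
  exact bne_iff_ne.1 (List.all_eq_true.1 havoid z hz)

end Search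

section Soundness

variable {A : Type} {c : A → A} {V : Set (Fin d → A)} {q v w : Fin d → A} {t : ℕ}

/-- The letter that the variable `x` stands for at the point `p`. -/
def letter (c : A → A) (r : ℕ → A) (p x : ℕ) : A :=
  if p.testBit x then c (r x) else r x

theorem letter_eq_or_eq_compl (r : ℕ → A) (p x : ℕ) :
    letter c r p x = r x ∨ letter c r p x = c (r x) := by
  unfold letter
  split_ifs <;> simp

theorem letter_congr {r r' : ℕ → A} {p p' x : ℕ} (hr : r x = r' x)
    (hbit : p.testBit x = p'.testBit x) : letter c r p x = letter c r' p' x := by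
  rw [letter, letter, hr, hbit]

/-- The letters `r x` with `x ∈ K` belong to distinct complementary pairs. -/
def Independent (c : A → A) (r : ℕ → A) (K : Set ℕ) : Prop :=
  ∀ x ∈ K, ∀ y ∈ K, r x = r y ∨ r x = c (r y) → x = y

namespace Independent

variable {r : ℕ → A} {K : Set ℕ} {p p' x y : ℕ}

theorem letter_eq_compl_iff (hr : Independent c r K) (hc : Function.Involutive c)
    (hc' : ∀ s, c s ≠ s) (hx : x ∈ K) (hy : y ∈ K) :
    letter c r p x = c (letter c r p' y) ↔ x = y ∧ p.testBit x ≠ p'.testBit x := by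
  constructor
  · intro h
    have hxy : x = y := hr x hx y hy (by
      unfold letter at h
      split_ifs at h
      · exact .inr (hc.injective h)
      · exact .inl (hc.injective h)
      · exact .inl (h.trans (hc _))
      · exact .inr h)
    exact ⟨hxy, fun hbit => hc' _ (h.symm.trans (hxy ▸ letter_congr rfl hbit))⟩
  · rintro ⟨rfl, hbit⟩
    unfold letter
    cases hp : p.testBit x <;> cases hp' : p'.testBit x <;> simp_all [hc (r x)]

theorem congr {r' : ℕ → A} (hr : Independent c r K) (h : Set.EqOn r' r K) :
    Independent c r' K := fun x hx y hy hxy =>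
  hr x hx y hy (by rwa [h hx, h hy] at hxy)

protected theorem insert {f : ℕ} (hr : Independent c r K) (hc : Function.Involutive c)
    (hf : ∀ x ∈ K, r f ≠ r x ∧ r f ≠ c (r x)) : Independent c r (insert f K) := by
  rintro x (rfl | hx) y (rfl | hy) hxy
  · rfl
  · exact (hxy.elim (hf y hy).1 (hf y hy).2).elim
  · exact (hxy.elim (fun h => (hf x hx).1 h.symm) fun h => (hf x hx).2 (by rw [h, hc])).elim
  · exact hr x hx y hy hxy

theorem exists_transversal (hr : Independent c r K) (hc : Function.Involutive c)
    (hc' : ∀ s, c s ≠ s) (p : ℕ) :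
    ∃ T, IsTransversal c T ∧ ∀ x ∈ K, letter c r p x ∈ T := by
  obtain ⟨T, hT, hKT⟩ :=
    exists_isTransversal_superset hc hc' (X := letter c r p '' K) (by
      rintro _ ⟨x, hx, rfl⟩ ⟨y, hy, hxy⟩
      obtain ⟨rfl, h⟩ := (hr.letter_eq_compl_iff hc hc' hy hx).1 hxy
      exact h rfl)
  exact ⟨T, hT, fun x hx => hKT ⟨x, hx, rfl⟩⟩

theorem exists_letter_eq (hr : Independent c r K) (hc : Function.Involutive c)
    {f : ℕ} (hf : f ∉ K) {s : A} (hs : ∀ x ∈ K, s ≠ c (letter c r p x)) :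
    ∃ x r', (x ∈ K ∨ x = f) ∧ Set.EqOn r' r K ∧ letter c r' p x = s ∧
      Independent c r' (insert x K) := by
  by_cases hsK : ∃ x ∈ K, r x = s ∨ r x = c s
  · obtain ⟨x, hx, hxs⟩ := hsK
    have hletter : letter c r p x = s := by
      have hne := hs x hx
      rcases letter_eq_or_eq_compl (c := c) r p x with h | h <;> rcases hxs with hxs | hxs <;>
        simp_all [hc s]
    exact ⟨x, r, .inl hx, fun _ _ => rfl, hletter, by rwa [Set.insert_eq_of_mem hx]⟩
  · push Not at hsK
    let r' := Function.update r f (if p.testBit f then c s else s)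
    have hr' : Set.EqOn r' r K := fun x hx =>
      Function.update_of_ne (ne_of_mem_of_not_mem hx hf) ..
    have hr'f : r' f = if p.testBit f then c s else s := Function.update_self ..
    have hfs : letter c r' p f = s := by
      rw [letter, hr'f]
      split_ifs
      · exact hc s
      · rfl
    refine ⟨f, r', .inr rfl, hr', hfs, (hr.congr hr').insert hc fun x hx => ?_⟩
    obtain ⟨hxs, hxs'⟩ := hsK x hx
    rw [hr'f, hr' hx]
    split_ifs
    · exact ⟨hxs'.symm, fun h => hxs (hc.injective h.symm)⟩
    · exact ⟨hxs.symm, fun h => hxs' (by rw [h, hc])⟩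

end Independent

/-- The variables for letters at position `i` that are in use if `F i` is the next unused one. -/
def knownVariables (F : Fin d → ℕ) (i : Fin d) : Set ℕ :=
  {y | y % d = i ∧ y < F i}

/-- Under the assignment `r` of letters to the variables in use, `z` denotes the word `v`, whose
letter at position `i` is given by the variable `x i`. -/
structure Pattern.Denotes (c : A → A) (r : Fin d → ℕ → A) (F x : Fin d → ℕ) (z : Pattern)
    (v : Fin d → A) : Prop where
  mem_known : ∀ i, x i ∈ knownVariables F i
  testBit_supp : ∀ y, z.supp.testBit y = true ↔ ∃ i, x i = y
  letter_eq : ∀ i, v i = letter c (r i) z.point (x i)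

namespace Pattern.Denotes

variable {r r' : Fin d → ℕ → A} {F F' x x' : Fin d → ℕ} {z z' : Pattern}

theorem index_eq (hv : Denotes c r F x z v) {i : Fin d} {y : ℕ} (hy : y ∈ knownVariables F' i)
    (hbit : z.supp.testBit y = true) : x i = y := by
  obtain ⟨j, rfl⟩ := (hv.testBit_supp y).1 hbit
  rw [Fin.ext (hy.1.symm.trans (hv.mem_known j).1)]

theorem mono (hv : Denotes c r F x z v) (hF : ∀ i, knownVariables F i ⊆ knownVariables F' i)
    (hr : ∀ i, Set.EqOn (r' i) (r i) (knownVariables F i)) : Denotes c r' F' x z v where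
  mem_known i := hF i (hv.mem_known i)
  testBit_supp := hv.testBit_supp
  letter_eq i := (hv.letter_eq i).trans (letter_congr (hr i (hv.mem_known i)).symm rfl)

theorem ne_of_mismatch_ne_zero (hw : Denotes c r F x z w) (hc : Function.Involutive c)
    (hc' : ∀ s, c s ≠ s) (hr : ∀ i, Independent c (r i) (knownVariables F i)) {p : ℕ}
    (hp : mismatch p z ≠ 0)
    (hv : ∀ i, ∀ y ∈ knownVariables F i, v i ≠ c (letter c (r i) p y)) : v ≠ w := by
  obtain ⟨y, hy⟩ := Nat.exists_testBit_of_ne_zero hp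
  obtain ⟨hbit, hsupp⟩ := testBit_mismatch.1 hy
  obtain ⟨i, rfl⟩ := (hw.testBit_supp y).1 hsupp
  rintro rfl
  refine hv i (x i) (hw.mem_known i) ?_
  rw [hw.letter_eq i, (hr i).letter_eq_compl_iff hc hc' (hw.mem_known i) (hw.mem_known i)]
  exact ⟨rfl, hbit.symm⟩

section Clash

variable (hr : ∀ i, Independent c (r i) (knownVariables F i)) (hc : Function.Involutive c)
  (hc' : ∀ s, c s ≠ s)

include hr hc hc'

theorem testBit_mismatch_iff (hv : Denotes c r F x z v) (hw : Denotes c r F x' z' w) (i : Fin d) :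
    (mismatch z.point z').testBit (x i) = true ↔ v i = c (w i) := by
  rw [testBit_mismatch, hv.letter_eq, hw.letter_eq,
    (hr i).letter_eq_compl_iff hc hc' (hv.mem_known i) (hw.mem_known i), and_comm]
  refine and_congr_left fun _ => ⟨fun h => (hw.index_eq (hv.mem_known i) h).symm, fun h => ?_⟩
  exact (hw.testBit_supp _).2 ⟨i, h.symm⟩

theorem existsUnique_clash (hv : Denotes c r F x z v) (hw : Denotes c r F x' z' w)
    (h : isSingleton (mismatch z.point z' &&& z.supp) = true) : ∃! i, v i = c (w i) := by
  obtain ⟨k, hk, hunique⟩ := existsUnique_of_isSingleton h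
  simp only [Nat.testBit_and, Bool.and_eq_true] at hk hunique
  obtain ⟨i, rfl⟩ := (hv.testBit_supp k).1 hk.2
  refine ⟨i, (hv.testBit_mismatch_iff hr hc hc' hw i).1 hk.1, fun j hj => ?_⟩
  have hxj := hunique (x j)
    ⟨(hv.testBit_mismatch_iff hr hc hc' hw j).2 hj, (hv.testBit_supp _).2 ⟨j, rfl⟩⟩
  exact Fin.ext (by rw [← (hv.mem_known j).1, ← (hv.mem_known i).1, hxj])

theorem twinPair (hv : Denotes c r F x z v) (hw : Denotes c r F x' z' w)
    (hsupp : z.supp = z'.supp) {i : Fin d} (hi : v i = c (w i))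
    (hunique : ∀ j, v j = c (w j) → j = i) : TwinPair c v w i := by
  refine ⟨hi, fun j hj => ?_⟩
  have hbit : z'.supp.testBit (x j) = true := hsupp ▸ (hv.testBit_supp _).2 ⟨j, rfl⟩
  rw [hv.letter_eq, hw.letter_eq, hw.index_eq (hv.mem_known j) hbit]
  refine letter_congr rfl ?_
  by_contra hne
  exact hj (hunique j ((hv.testBit_mismatch_iff hr hc hc' hw j).1 (testBit_mismatch.2 ⟨hne, hbit⟩)))

end Clash

theorem testBit_supp_iff_eq_or_eq_compl (hv : Denotes c r F x z v) (hc : Function.Involutive c)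
    (hr : ∀ i, Independent c (r i) (knownVariables F i)) {i : Fin d} (hi : (i : ℕ) < F i) :
    z.supp.testBit i = true ↔ v i = r i i ∨ v i = c (r i i) := by
  have hiF : (i : ℕ) ∈ knownVariables F i := ⟨Nat.mod_eq_of_lt i.2, hi⟩
  rw [hv.letter_eq]
  constructor
  · intro hbit
    rw [hv.index_eq hiF hbit]
    exact letter_eq_or_eq_compl ..
  · intro h
    refine (hv.testBit_supp i).2 ⟨i, hr i _ (hv.mem_known i) _ hiF ?_⟩
    rcases letter_eq_or_eq_compl (c := c) (r i) z.point (x i) with hx | hx <;> rw [hx] at h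
    · exact h
    · exact h.symm.imp (fun h => hc.injective h) fun h => by rw [← h, hc]

theorem foreignCount_eq (hv : Denotes c r F x z v) (hc : Function.Involutive c)
    (hr : ∀ i, Independent c (r i) (knownVariables F i)) (hF : ∀ i : Fin d, (i : ℕ) < F i)
    (hq : ∀ i, r i i = q i) : foreignCount d z = foreign c v q := by
  have himage : (Finset.filter (fun i => ¬ z.supp.testBit i) (Finset.range d) : Set ℕ) =
      Fin.val '' {i | v i ≠ q i ∧ v i ≠ c (q i)} := by
    ext y
    simp only [← hq, ← not_or, Set.mem_image, Set.mem_ofPred_eq, Finset.coe_filter,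
      Finset.mem_range, ← hv.testBit_supp_iff_eq_or_eq_compl hc hr (hF _)]
    exact ⟨fun ⟨hy, hbit⟩ => ⟨⟨y, hy⟩, hbit, rfl⟩, by rintro ⟨i, hbit, rfl⟩; exact ⟨i.2, hbit⟩⟩
  rw [foreignCount, Nat.count_eq_card_filter_range, foreign, ← Set.ncard_coe_finset, himage,
    Set.ncard_image_of_injective _ Fin.val_injective]

end Pattern.Denotes

/-- The next unused variables after the variables `x i` have been used. -/
def advance (F x : Fin d → ℕ) (i : Fin d) : ℕ :=
  bif (mask (List.ofFn x)).testBit (F i) then F i + d else F i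

theorem knownVariables_advance {F x : Fin d → ℕ} (hF : ∀ i, F i % d = i)
    (hx : ∀ i, x i ∈ knownVariables F i ∨ x i = F i) (i : Fin d) :
    knownVariables (advance F x) i = insert (x i) (knownVariables F i) := by
  have hmod (j) : x j % d = j := (hx j).elim (·.1) fun h => h ▸ hF j
  have hbit : (mask (List.ofFn x)).testBit (F i) = true ↔ x i = F i := by
    rw [testBit_mask, List.mem_ofFn]
    refine ⟨fun ⟨j, hj⟩ => ?_, fun h => ⟨i, h⟩⟩
    obtain rfl : j = i := Fin.ext ((hmod j).symm.trans (hj ▸ hF i))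
    exact hj
  rcases hx i with hxi | hxi
  · have hne : x i ≠ F i := hxi.2.ne
    rw [Set.insert_eq_of_mem hxi, knownVariables, advance, Bool.eq_false_iff.2 (mt hbit.1 hne),
      cond_false, knownVariables]
  · rw [knownVariables, advance, hbit.2 hxi, cond_true, hxi]
    ext y
    constructor
    · rintro ⟨hy, hlt⟩
      rcases lt_or_ge y (F i) with hyF | hyF
      · exact .inr ⟨hy, hyF⟩
      · have hdvd : d ∣ y - F i := (Nat.modEq_iff_dvd' hyF).1 ((hF i).trans hy.symm)
        have hsub : y - F i = 0 := Nat.eq_zero_of_dvd_of_lt hdvd (by omega)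
        exact .inl (hyF.antisymm' (Nat.sub_eq_zero_iff_le.1 hsub))
    · rintro (rfl | ⟨hy, hlt⟩)
      · exact ⟨hF i, Nat.lt_add_of_pos_right i.pos⟩
      · exact ⟨hy, hlt.trans_le (Nat.le_add_right ..)⟩

theorem denotes_mask {r : Fin d → ℕ → A} {F x : Fin d → ℕ} {p : ℕ} (hF : ∀ i, F i % d = i)
    (hx : ∀ i, x i ∈ knownVariables F i ∨ x i = F i) (hv : ∀ i, letter c (r i) p (x i) = v i) :
    Pattern.Denotes c r (advance F x) x ⟨mask (List.ofFn x), p⟩ v where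
  mem_known i := by
    rw [knownVariables_advance hF hx]
    exact Set.mem_insert ..
  testBit_supp y := by rw [testBit_mask, List.mem_ofFn]
  letter_eq i := (hv i).symm

/-- The state `F`, `Z` of the search describes the part of `V` found so far: the variables in use
are assigned letters from distinct complementary pairs, and `Z` lists words of `V`. -/
structure Interprets (c : A → A) (V : Set (Fin d → A)) (q : Fin d → A) (r : Fin d → ℕ → A)
    (F : Fin d → ℕ) (Z : List Pattern) : Prop where
  mod_eq : ∀ i, F i % d = i
  base_lt : ∀ i : Fin d, (i : ℕ) < F i
  base_eq : ∀ i, r i i = q i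
  independent : ∀ i, Independent c (r i) (knownVariables F i)
  exists_denotes : ∀ z ∈ Z, ∃ v ∈ V, ∃ x, z.Denotes c r F x v

namespace Interprets

variable {r : Fin d → ℕ → A} {F : Fin d → ℕ} {Z : List Pattern} {p : ℕ}

theorem not_isExcluded (hI : Interprets c V q r F Z) (h : IsolatedComponent c V q t)
    (hc : Function.Involutive c) (hc' : ∀ s, c s ≠ s) {z z' : Pattern} (hz : z ∈ Z) (hz' : z' ∈ Z) :
    isExcluded d t z z' = false := by
  obtain ⟨v, hv, x, hvx⟩ := hI.exists_denotes z hz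
  obtain ⟨w, hw, x', hwx⟩ := hI.exists_denotes z' hz'
  rw [isExcluded, hvx.foreignCount_eq hc hI.independent hI.base_lt hI.base_eq,
    hwx.foreignCount_eq hc hI.independent hI.base_lt hI.base_eq, Bool.eq_false_iff]
  simp only [ne_eq, Bool.and_eq_true, Bool.or_eq_true, beq_iff_eq, bne_iff_ne, Nat.blt_eq, not_and,
    not_or]
  intro hsingle
  have hclash := hvx.existsUnique_clash hI.independent hc hc' hwx hsingle
  have hclash' : ∃! i, w i = c (v i) := by
    simpa only [hc.eq_iff, eq_comm] using hclash
  refine ⟨⟨fun hsupp => not_not.2 ?_, fun hne hlt => ?_⟩, fun hne hlt => ?_⟩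
  · obtain ⟨i, hi, hunique⟩ := hclash
    exact h.twin v hv w hw i (hvx.twinPair hI.independent hc hc' hwx hsupp hi hunique)
  · exact (h.gap v hv hne.1 w hw hne.2 hclash).not_gt hlt
  · exact (h.gap w hw hne.1 v hv hne.2 hclash').not_gt hlt

theorem exists_word (hI : Interprets c V q r F Z) (h : IsolatedComponent c V q t)
    (hc : Function.Involutive c) (hc' : ∀ s, c s ≠ s) (p : ℕ) :
    ∃ v ∈ V, (∀ i, ∀ y ∈ knownVariables F i, v i ≠ c (letter c (r i) p y)) ∧
      ∃ x : Fin d → ℕ, ∃ r' : Fin d → ℕ → A, ∀ i, (x i ∈ knownVariables F i ∨ x i = F i) ∧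
        Set.EqOn (r' i) (r i) (knownVariables F i) ∧ letter c (r' i) p (x i) = v i ∧
        Independent c (r' i) (insert (x i) (knownVariables F i)) := by
  choose T hT hrT using fun i => (hI.independent i).exists_transversal hc hc' p
  obtain ⟨v, hv, hvT⟩ := h.exists_mem T hT
  have hvne (i) : ∀ y ∈ knownVariables F i, v i ≠ c (letter c (r i) p y) := fun y hy heq =>
    (hT i _).1 (heq ▸ hvT i) (hrT i y hy)
  choose x r' hx using fun i => (hI.independent i).exists_letter_eq hc
    (f := F i) (fun h => lt_irrefl _ h.2) (hvne i)
  exact ⟨v, hv, hvne, x, r', hx⟩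

theorem extend (hI : Interprets c V q r F Z) {x : Fin d → ℕ} {r' : Fin d → ℕ → A} (hv : v ∈ V)
    (hx : ∀ i, x i ∈ knownVariables F i ∨ x i = F i)
    (hr' : ∀ i, Set.EqOn (r' i) (r i) (knownVariables F i))
    (hletter : ∀ i, letter c (r' i) p (x i) = v i)
    (hind : ∀ i, Independent c (r' i) (insert (x i) (knownVariables F i))) :
    Interprets c V q r' (advance F x) (⟨mask (List.ofFn x), p⟩ :: Z) where
  mod_eq i := by
    rw [advance, Bool.cond_eq_ite]
    split_ifs
    · rw [Nat.add_mod_right, hI.mod_eq]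
    · exact hI.mod_eq i
  base_lt i := (hI.base_lt i).trans_le (by rw [advance, Bool.cond_eq_ite]; split_ifs <;> omega)
  base_eq i := (hr' i ⟨Nat.mod_eq_of_lt i.2, hI.base_lt i⟩).trans (hI.base_eq i)
  independent i := by
    rw [knownVariables_advance hI.mod_eq hx]
    exact hind i
  exists_denotes z hz := by
    rcases List.mem_cons.1 hz with rfl | hz
    · exact ⟨v, hv, x, denotes_mask hI.mod_eq hx hletter⟩
    · obtain ⟨w, hw, x', hwx⟩ := hI.exists_denotes z hz
      refine ⟨w, hw, x', hwx.mono (fun i => ?_) hr'⟩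
      rw [knownVariables_advance hI.mod_eq hx]
      exact Set.subset_insert ..

theorem exists_branch (hI : Interprets c V q r F Z) (h : IsolatedComponent c V q t)
    (hc : Function.Involutive c) (hc' : ∀ s, c s ≠ s) (hp : ∀ z ∈ Z, mismatch p z ≠ 0) :
    ∃ x r', List.ofFn x ∈ hittingTuples ((List.ofFn F).map (options d)) (Z.map (mismatch p)) ∧
      Interprets c V q r' (advance F x) (⟨mask (List.ofFn x), p⟩ :: Z) := by
  obtain ⟨v, hv, hvne, x, r', hxr⟩ := hI.exists_word h hc hc' p
  choose hx hr' hletter hind using hxr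
  have hvx := denotes_mask hI.mod_eq hx hletter
  have hknown := knownVariables_advance hI.mod_eq hx
  refine ⟨x, r', mem_hittingTuples ?_ fun m hm => ?_, hI.extend hv hx hr' hletter hind⟩
  · have hoptions (i) : x i ∈ options d (F i) := mem_options.2
      ((hx i).elim (fun h => ⟨h.1.trans (hI.mod_eq i).symm, h.2.le⟩) fun h => by simp [h])
    rw [List.map_ofFn, List.forall₂_iff_get]
    exact ⟨by simp, fun k hk _ => by simpa using hoptions ⟨k, by simpa using hk⟩⟩
  · obtain ⟨z, hz, rfl⟩ := List.mem_map.1 hm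
    obtain ⟨w, hw, x', hwx⟩ := hI.exists_denotes z hz
    obtain ⟨i, hi⟩ := h.dich v hv w hw
      (hwx.ne_of_mismatch_ne_zero hc hc' hI.independent (hp z hz) hvne)
    have hwx' := hwx.mono (fun i => by rw [hknown]; exact Set.subset_insert ..) hr'
    exact ⟨x i, List.mem_ofFn.2 ⟨i, rfl⟩,
      (hvx.testBit_mismatch_iff (fun i => by rw [hknown]; exact hind i) hc hc' hwx' i).2 hi⟩

theorem refute_eq_false (hI : Interprets c V q r F Z) (h : IsolatedComponent c V q t)
    (hc : Function.Involutive c) (hc' : ∀ s, c s ≠ s) (n : ℕ) :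
    refute d t n (List.ofFn F) p Z = false := by
  induction n generalizing r F p Z with
  | zero => rfl
  | succ n ih =>
    refine Bool.eq_false_iff.2 fun hrefute => ?_
    simp only [refute, force_eq, forceList_eq, Option.any_eq_true, List.all_eq_true,
      Bool.or_eq_true, List.any_eq_true] at hrefute
    obtain ⟨p, hp, hbranches⟩ := hrefute
    obtain ⟨x, r', hx, hI'⟩ :=
      hI.exists_branch h hc hc' fun z hz => avoids_of_mem_branchPoint hp hz
    rcases hbranches _ hx with ⟨z, hz, hexcluded⟩ | hrefute
    · rw [hI'.not_isExcluded h hc hc' List.mem_cons_self (List.mem_cons_of_mem _ hz)] at hexcluded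
      contradiction
    · rw [List.map_ofFn] at hrefute
      exact Bool.eq_false_iff.1 (ih hI') hrefute

end Interprets

theorem eq_of_mem_knownVariables_add {i : Fin d} {y : ℕ}
    (hy : y ∈ knownVariables (fun i => i + d) i) : y = i := by
  have hmod : y % d = i := hy.1
  have hlt : y < i + d := hy.2
  rcases lt_or_ge y d with hyd | hyd
  · rwa [Nat.mod_eq_of_lt hyd] at hmod
  · rw [Nat.mod_eq_sub_mod hyd, Nat.mod_eq_of_lt (by omega)] at hmod
    omega

theorem mem_knownVariables_add (i : Fin d) : (i : ℕ) ∈ knownVariables (fun i => i + d) i :=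
  ⟨Nat.mod_eq_of_lt i.2, Nat.lt_add_of_pos_right i.pos⟩

theorem interprets_base (hq : q ∈ V) :
    Interprets c V q (fun i _ => q i) (fun i => i + d) [⟨mask (List.range d), 0⟩] where
  mod_eq i := by rw [Nat.add_mod_right, Nat.mod_eq_of_lt i.2]
  base_lt i := Nat.lt_add_of_pos_right i.pos
  base_eq i := rfl
  independent i x hx y hy _ :=
    (eq_of_mem_knownVariables_add hx).trans (eq_of_mem_knownVariables_add hy).symm
  exists_denotes z hz := by
    rw [List.mem_singleton.1 hz]
    refine ⟨q, hq, fun i => i, mem_knownVariables_add, fun y => ?_, fun i => by simp [letter]⟩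
    rw [testBit_mask, List.mem_range]
    exact ⟨fun hy => ⟨⟨y, hy⟩, rfl⟩, by rintro ⟨i, rfl⟩; exact i.2⟩

/-- The variables of a word that is complementary to the base word at position `0`, has foreign
letters at the positions `1`, …, `t`, and agrees with the base word elsewhere. -/
def startVariables (d t : ℕ) (i : Fin d) : ℕ :=
  if (i : ℕ) ≠ 0 ∧ (i : ℕ) ≤ t then i + d else i

/-- The search for an isolated component, starting from the base word and a word that is
complementary to it at only one position and has `t` letters foreign to it. -/
def refuteStart (d t fuel : ℕ) : Bool :=
  refute d t fuel (List.ofFn (advance (fun i => i + d) (startVariables d t))) 1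
    [⟨mask (List.ofFn (startVariables d t)), 1⟩, ⟨mask (List.range d), 0⟩]

theorem interprets_start {n : ℕ} {V : Set (Fin (n + 1) → A)} {q v : Fin (n + 1) → A}
    (hc : Function.Involutive c) (hq : q ∈ V) (hv : v ∈ V) (h₀ : v 0 = c (q 0))
    (hforeign : ∀ i, (v i ≠ q i ∧ v i ≠ c (q i)) ↔ i ≠ 0 ∧ (i : ℕ) ≤ t)
    (heq : ∀ i, v i = c (q i) → i = 0) :
    ∃ r, Interprets c V q r (advance (fun i => i + (n + 1)) (startVariables (n + 1) t))
      [⟨mask (List.ofFn (startVariables (n + 1) t)), 1⟩, ⟨mask (List.range (n + 1)), 0⟩] := by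
  have hI := interprets_base (c := c) hq
  let r (i : Fin (n + 1)) (y : ℕ) : A := if y = i + (n + 1) then v i else q i
  have hr (i) : Set.EqOn (r i) (fun _ => q i) (knownVariables (fun i => i + (n + 1)) i) :=
    fun y hy => if_neg hy.2.ne
  have hri (i) : r i (i + (n + 1)) = v i := if_pos rfl
  refine ⟨r, hI.extend hv (fun i => ?_) hr (fun i => ?_) fun i => ?_⟩ <;> unfold startVariables <;>
    split_ifs with hi
  · exact .inr rfl
  · exact .inl (mem_knownVariables_add i)
  · simp [letter, hri, Nat.testBit_one_eq_true_iff_self_eq_zero]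
  · simp only [letter, hr i (mem_knownVariables_add i), Nat.testBit_one_eq_true_iff_self_eq_zero]
    split_ifs with hi₀
    · rw [Fin.val_eq_zero_iff.1 hi₀, h₀]
    · have hvi := mt (hforeign i).1 (by rwa [Ne, ← Fin.val_eq_zero_iff])
      exact not_not.1 fun hne => hvi ⟨Ne.symm hne, fun h => hi₀ (Fin.val_eq_zero_iff.2 (heq i h))⟩
  · refine ((hI.independent i).congr (hr i)).insert hc fun x hx => ?_
    rw [hri, hr i hx]
    exact (hforeign i).2 (by rwa [Ne, ← Fin.val_eq_zero_iff])
  · rw [Set.insert_eq_of_mem (mem_knownVariables_add i)]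
    exact (hI.independent i).congr (hr i)

end Soundness

section Main

theorem exists_perm_of_notMem {n : ℕ} {i : Fin (n + 1)} {s : Finset (Fin (n + 1))} (hi : i ∉ s) :
    ∃ e : Equiv.Perm (Fin (n + 1)), e 0 = i ∧ ∀ j, e j ∈ s ↔ j ≠ 0 ∧ (j : ℕ) ≤ s.card := by
  have hcard : s.card + 1 ≤ n + 1 := by simpa using Finset.card_lt_univ_of_notMem hi
  let f : Fin (s.card + 1) ↪ Fin (n + 1) := ⟨Fin.cons i (s.orderEmbOfFin rfl),
    Fin.cons_injective_iff.2 ⟨by simpa using hi, (s.orderEmbOfFin rfl).injective⟩⟩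
  have := Equiv.Perm.isMultiplyPretransitive (Fin (n + 1)) (s.card + 1)
  obtain ⟨e, he⟩ := MulAction.exists_smul_eq (Equiv.Perm (Fin (n + 1))) (Fin.castLEEmb hcard) f
  have he (k) : e (Fin.castLE hcard k) = f k := DFunLike.congr_fun he k
  refine ⟨e, he 0, fun j => ⟨fun hj => ?_, fun ⟨h₀, hle⟩ => ?_⟩⟩
  · obtain ⟨k, hk⟩ : e j ∈ Set.range (s.orderEmbOfFin rfl) := by simpa using hj
    obtain rfl : Fin.castLE hcard k.succ = j := e.injective ((he _).trans hk)
    exact ⟨by simp [Fin.ext_iff], Nat.succ_le_of_lt k.2⟩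
  · obtain ⟨k, rfl⟩ := Fin.exists_succ_eq.2 h₀
    have hk : (k : ℕ) < s.card := hle
    rw [show k.succ = Fin.castLE hcard (Fin.succ ⟨k, hk⟩) from rfl, he]
    exact s.orderEmbOfFin_mem rfl _

variable {A : Type} {c : A → A}

theorem IsolatedComponent.succ {n t fuel : ℕ} {V : Set (Fin (n + 1) → A)} {q : Fin (n + 1) → A}
    (h : IsolatedComponent c V q t) (hc : Function.Involutive c) (hc' : ∀ s, c s ≠ s)
    (hrefute : refuteStart (n + 1) t fuel = true) : IsolatedComponent c V q (t + 1) where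
  __ := h
  gap u hu huq v hv hvq huv := by
    classical
    refine Nat.succ_le_of_lt ((h.gap u hu huq v hv hvq huv).lt_of_ne fun ht => ?_)
    obtain ⟨i, hi, hunique⟩ := huv
    let s : Finset (Fin (n + 1)) := {j | v j ≠ u j ∧ v j ≠ c (u j)}
    have hcard : s.card = t := by
      rw [ht, ← foreign_congr hc huq, foreign, ← Set.ncard_coe_finset, Finset.coe_filter_univ]
    have hvi : v i = c (u i) := by rw [hi, hc]
    obtain ⟨e, he₀, he⟩ := exists_perm_of_notMem (s := s) (i := i) (by simp [s, hvi])
    obtain ⟨r, hI⟩ := interprets_start (V := {w | w ∘ e.symm ∈ V}) (q := u ∘ e) (v := v ∘ e)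
      (t := t) hc (by simpa [Function.comp_assoc] using hu)
      (by simpa [Function.comp_assoc] using hv) (by simpa [he₀] using hvi)
      (fun j => by simpa [s, hcard] using he j)
      (fun j hj => e.injective (he₀ ▸ hunique (e j) (by simp_all [hc _])))
    exact Bool.eq_false_iff.1 (hI.refute_eq_false ((h.rebase hc hu huq).reindex e) hc hc' fuel)
      hrefute

theorem TwinPair.foreign_eq_zero {d : ℕ} {v w q : Fin d → A} {i : Fin d}
    (h : TwinPair c v w i) (hc : Function.Involutive c) (hw : foreign c w q = 0) :
    foreign c v q = 0 := by
  refine PolyboxPaper.foreign_eq_zero.2 fun j => ?_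
  have hwj := PolyboxPaper.foreign_eq_zero.1 hw j
  by_cases hj : j = i
  · subst hj
    rw [h.1]
    exact hwj.elim (fun h => .inr (h ▸ rfl)) fun h => .inl (by rw [h, hc])
  · rwa [h.2 j hj]

theorem refuteStart_five : ∀ t ∈ [1, 2, 3, 4], refuteStart 5 t 30 = true := by
  decide +kernel

theorem IsolatedComponent.simpleCode {V : Finset (Fin 5 → A)} {q : Fin 5 → A}
    (h : IsolatedComponent c (V : Set (Fin 5 → A)) q 1) (hc : Function.Involutive c)
    (hc' : ∀ s, c s ≠ s) : SimpleCode c V := by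
  have h₅ : IsolatedComponent c (V : Set (Fin 5 → A)) q 5 := by
    iterate 4 refine IsolatedComponent.succ ?_ hc hc' (refuteStart_five _ (by decide))
    exact h
  exact fun i => ⟨q i, fun v hv =>
    foreign_eq_zero.1 (h₅.foreign_eq_zero_of_mem hc hc' (Finset.mem_coe.2 hv)) i⟩

theorem complement_of_simple_component_contains_twin_pair_general
    {A : Type} [DecidableEq A] (c : A → A)
    (hc : ∀ s, c (c s) = s) (hc' : ∀ s, c s ≠ s)
    (V Q U : Finset (Fin 5 → A)) (hV : CubeTiling c V)
    (hns : ¬ SimpleCode c V)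
    (hQne : Q.Nonempty) (hU : SimpleCubeTiling c U) (hQ : Q = V ∩ U) :
    ∃ v ∈ V \ Q, ∃ w ∈ V \ Q, ∃ i, TwinPair c v w i := by
  obtain ⟨q, hq⟩ := hQne
  obtain ⟨hqV, hqU⟩ := Finset.mem_inter.1 (hQ ▸ hq)
  obtain ⟨s, hs⟩ := hU
  have mem_diff {v} (hv : v ∈ V) (hvq : foreign c v q ≠ 0) : v ∈ V \ Q := by
    rw [foreign_congr hc (foreign_eq_zero.2 ((hs q).1 hqU)), Ne, foreign_eq_zero, ← hs] at hvq
    simp [hQ, hv, hvq]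
  by_contra htwin
  refine hns (IsolatedComponent.simpleCode (q := q) ?_ hc hc')
  refine ⟨hqV, hV.1, fun T hT => hV.exists_mem_transversals hT, fun v hv w hw i hi => ?_,
    fun u _ _ v _ hv _ => Nat.pos_of_ne_zero hv⟩
  by_contra hvq
  exact htwin ⟨v, mem_diff hv hvq, w, mem_diff hw fun h => hvq (hi.foreign_eq_zero hc h), i, hi⟩

end Main

/-- Corollary "nstt5" of the paper. -/
theorem complement_of_simple_component_contains_twin_pair
    {S : Type} [Fintype S] [DecidableEq S] (c : S → S)
    (hc : ∀ s, c (c s) = s) (hc' : ∀ s, c s ≠ s)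
    (V Q U : Finset (Fin 5 → S)) (hV : CubeTiling c V)
    (hns : ¬ SimpleCode c V)
    (hQne : Q.Nonempty) (hU : SimpleCubeTiling c U) (hQ : Q = V ∩ U) :
    ∃ v ∈ V \ Q, ∃ w ∈ V \ Q, ∃ i, TwinPair c v w i := by
  exact complement_of_simple_component_contains_twin_pair_general c hc hc' V Q U hV hns hQne hU hQ

end PolyboxPaper
end
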